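/- arXiv:1804.09419 — 2 statements merged into one kernel-verified Lean document; each statement's English description precedes it below -/
import Mathlib

section
/- Let 0<α, 1<p<N/α, q>p−1, and let μ be a nonnegative Radon measure on ℝ^N. The following statements are equivalent: (a) there exists C1>0 with μ(K) ≤ C1·Cap_{I_{αp}, q/(q−p+1)}(K) for every compact K⊂ℝ^N; (b) there exists C2>0 with ∫_K (W_{α,p}[μ](y))^q dy ≤ C2·Cap_{I_{αp}, q/(q−p+1)}(K) for every compact K⊂ℝ^N; (c) there exists C3>0 with ∫_{ℝ^N} (W_{α,p}[χ_{B_t(x)}μ](y))^q dy ≤ C3·μ(B_t(x)) for every x∈ℝ^N and t>0; (d) there exists C4>0 with W_{α,p}[(W_{α,p}[μ])^q] ≤ C4·W_{α,p}[μ] < ∞ almost everywhere in ℝ^N. -/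
/-!
With `γ = N - αp`, `σ = 1 / (p - 1)` and `s = σq`, the Wolff potential is the radial potential
`∫ (ν(B_ρ(x)) / ρ ^ γ) ^ σ dρ / ρ`, comparable to a sum of powers of the masses `2 ^ (kγ) ν(Q)` over
the dyadic cells `Q` around `x` (up to enlarging each cell by its neighbours). By Carleson-type
estimates its `L^q` norm is therefore governed by the dyadic energy `∑ₖ ∫ (2 ^ (kγ) ν(Q)) ^ s`, and
`s` is conjugate to the exponent `q / (q - p + 1)` of the capacity, to which this energy is dual.

* (a) ⇒ (c): the energy of the restriction of `μ` to a ball is the integral of a density against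
  `μ`. The level sets of that density have capacity controlled by the energy, so its high levels
  contribute at most half of the energy and are absorbed.
* (c) ⇒ (d): on each dyadic ball `μ` is split into a near and a far part. The testing condition
  bounds the near part, and it forces a growth bound on `μ` which makes the far part a sum of Hardy
  type.
* (d) ⇒ (b): for `ω = W ^ q dx`, the weak-type bound for the dyadic maximal function of a measure
  `ν ≤ ω` relative to `ω` bounds the energy of the restriction of `ω` to a set by the mass of that
  set. By duality this is the capacity condition for `ω`.
* (b) ⇒ (a): the sum of the dyadic weights is stopped once it exceeds `1`. What was cut off lives on
  a set whose capacity is bounded by the stopped energy, and there (b) applies.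
-/

open MeasureTheory Metric Set Filter Bornology
open scoped ENNReal NNReal Topology RealInnerProductSpace

noncomputable section

/-- Euclidean space `ℝ^N`. -/
abbrev Euc (N : ℕ) : Type := EuclideanSpace ℝ (Fin N)

/-- The `R`-truncated Wolff potential `W^R_{α,p}[μ](x)`; `R = ⊤` gives the full
Wolff potential `W_{α,p}[μ]`. -/
def wolff {N : ℕ} (α p : ℝ) (R : ℝ≥0∞) (μ : Measure (Euc N)) (x : Euc N) : ℝ≥0∞ :=
  ∫⁻ ρ in {ρ : ℝ | 0 < ρ ∧ ENNReal.ofReal ρ < R},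
    (μ (ball x ρ) / ENNReal.ofReal (ρ ^ ((N : ℝ) - α * p))) ^ (1 / (p - 1)) /
      ENNReal.ofReal ρ

/-- The `R`-truncated Riesz potential `I^R_β[μ](x)`; `R = ⊤` gives `I_β[μ]`. -/
def rieszPot {N : ℕ} (β : ℝ) (R : ℝ≥0∞) (μ : Measure (Euc N)) (x : Euc N) : ℝ≥0∞ :=
  ∫⁻ ρ in {ρ : ℝ | 0 < ρ ∧ ENNReal.ofReal ρ < R},
    μ (ball x ρ) / ENNReal.ofReal (ρ ^ ((N : ℝ) - β)) / ENNReal.ofReal ρ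

/-- The Riesz capacity `Cap_{I_α,p}`. -/
def rieszCap (N : ℕ) (α p : ℝ) (O : Set (Euc N)) : ℝ≥0∞ :=
  ⨅ (g : Euc N → ℝ≥0∞) (_ : Measurable g)
    (_ : ∀ x ∈ O, 1 ≤ rieszPot α ⊤ (volume.withDensity g) x),
    ∫⁻ x, g x ^ p

/-- The Bessel kernel of order `α` (up to the normalizing constant `c(N,α)`). -/
def besselKernel (N : ℕ) (α : ℝ) (x : Euc N) : ℝ :=
  ∫ t in Ioi (0 : ℝ),
    Real.exp (-(Real.pi * ‖x‖ ^ 2 / t) - t / (4 * Real.pi)) * t ^ ((α - (N : ℝ)) / 2) / t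

/-- The Bessel capacity `Cap_{G_α,p}`. -/
def besselCap (N : ℕ) (α p : ℝ) (O : Set (Euc N)) : ℝ≥0∞ :=
  ⨅ (g : Euc N → ℝ≥0∞) (_ : Measurable g)
    (_ : ∀ x ∈ O, 1 ≤ ∫⁻ y, ENNReal.ofReal (besselKernel N α (x - y)) * g y),
    ∫⁻ x, g x ^ p

/-- The `R`-truncated fractional maximal function `M^R_γ[μ]`. -/
def fracMax {N : ℕ} (γ : ℝ) (R : ℝ≥0∞) (μ : Measure (Euc N)) (x : Euc N) : ℝ≥0∞ :=
  ⨆ (t : ℝ) (_ : 0 < t) (_ : ENNReal.ofReal t < R),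
    μ (ball x t) / ENNReal.ofReal (t ^ ((N : ℝ) - γ))

/-- The potential `L^R_{α,s}[μ]`. -/
def Lpot {N : ℕ} (α s : ℝ) (R : ℝ≥0∞) (μ : Measure (Euc N)) (x : Euc N) : ℝ≥0∞ :=
  ∫⁻ t in {t : ℝ | 0 < t ∧ ENNReal.ofReal t < R},
    (μ (ball x t) / ENNReal.ofReal (t ^ ((N : ℝ) - α))) ^ s / ENNReal.ofReal t

/-- A mollifier: smooth, nonnegative, supported in the unit ball, of total mass one. -/
def IsMollifier {N : ℕ} (φ : Euc N → ℝ) : Prop :=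
  ContDiff ℝ (⊤ : ℕ∞) φ ∧ (∀ x, 0 ≤ φ x) ∧ tsupport φ ⊆ ball 0 1 ∧ (∫ x, φ x) = 1

/-- The measure with density `φ_n * μ`, where `φ_n(x) = n^N φ(n x)`. -/
def mollified {N : ℕ} (φ : Euc N → ℝ) (n : ℕ) (μ : Measure (Euc N)) : Measure (Euc N) :=
  volume.withDensity fun x =>
    ENNReal.ofReal (∫ y, (n : ℝ) ^ (N : ℕ) * φ ((n : ℝ) • (x - y)) ∂μ)

/-! ### Inequalities for finite sums in `ℝ≥0∞` -/

lemma le_two_mul_of_le_add_half {a b : ℝ≥0∞} (ha : a ≠ ⊤) (h : a ≤ b + a / 2) : a ≤ 2 * b := by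
  have hhalf : a / 2 ≤ b := by
    refine (ENNReal.add_le_add_iff_right (ENNReal.div_ne_top ha two_ne_zero)).1 ?_
    rwa [ENNReal.add_halves]
  calc a = a / 2 + a / 2 := (ENNReal.add_halves a).symm
    _ ≤ b + b := add_le_add hhalf hhalf
    _ = 2 * b := (two_mul b).symm

lemma add_pow_succ_le (x y : ℝ≥0∞) (m : ℕ) :
    (x + y) ^ (m + 1) ≤ x ^ (m + 1) + (m + 1) * (y * (x + y) ^ m) := by
  induction m with
  | zero => simp
  | succ m ih =>
    calc (x + y) ^ (m + 2) = x * (x + y) ^ (m + 1) + y * (x + y) ^ (m + 1) := by ring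
      _ ≤ x * (x ^ (m + 1) + (m + 1) * (y * (x + y) ^ m)) + y * (x + y) ^ (m + 1) := by gcongr
      _ = x ^ (m + 2) + ((m + 1) * (y * (x * (x + y) ^ m)) + y * (x + y) ^ (m + 1)) := by ring
      _ ≤ x ^ (m + 2) + ((m + 1) * (y * ((x + y) * (x + y) ^ m)) + y * (x + y) ^ (m + 1)) := by
          gcongr; exact le_self_add
      _ = _ := by push_cast; ring

lemma sq_mul_pow_le (b T : ℝ≥0∞) {K : ℝ≥0∞} (hK₀ : K ≠ 0) (hK : K ≠ ⊤) (m : ℕ) :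
    T ^ m * b * b ≤ K ^ m * b ^ (m + 2) + K⁻¹ * (b * T ^ (m + 1)) := by
  rcases le_total T (K * b) with h | h
  · refine le_add_right ?_
    calc T ^ m * b * b ≤ (K * b) ^ m * b * b := by gcongr
      _ = _ := by ring
  · refine le_add_left ?_
    calc T ^ m * b * b ≤ T ^ m * b * (K⁻¹ * T) := by
          gcongr; exact (ENNReal.mul_le_iff_le_inv hK₀ hK).1 h
      _ = _ := by ring

lemma sum_pow_le_max_add_sum_pow {ι : Type*} {s : Finset ι} {b : ι → ℝ≥0∞} {M K : ℝ≥0∞}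
    (hM : ∀ j ∈ s, b j ≤ M) (hK₀ : K ≠ 0) (hK : K ≠ ⊤) (m : ℕ) :
    ∑ j ∈ s, b j ^ (m + 2) ≤ K * M ^ (m + 2) + K⁻¹ * (∑ j ∈ s, b j) ^ (m + 2) := by
  set S := ∑ j ∈ s, b j
  have hbS : ∀ j ∈ s, b j ≤ S := fun j hj => Finset.single_le_sum (fun _ _ => zero_le) hj
  rcases le_total S (K * M) with h | h
  · refine le_add_right ?_
    calc ∑ j ∈ s, b j ^ (m + 2) = ∑ j ∈ s, b j ^ (m + 1) * b j := by simp only [pow_succ]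
      _ ≤ ∑ j ∈ s, M ^ (m + 1) * b j := by gcongr with j hj; exact hM j hj
      _ ≤ M ^ (m + 1) * (K * M) := by rw [← Finset.mul_sum]; gcongr
      _ = _ := by ring
  · refine le_add_left ?_
    have hMS : M ≤ K⁻¹ * S := (ENNReal.mul_le_iff_le_inv hK₀ hK).1 h
    calc ∑ j ∈ s, b j ^ (m + 2) = ∑ j ∈ s, b j * b j ^ m * b j :=
          Finset.sum_congr rfl fun j _ => by ring
      _ ≤ ∑ j ∈ s, K⁻¹ * S * S ^ m * b j := by
          gcongr with j hj
          exacts [(hM j hj).trans hMS, hbS j hj]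
      _ = _ := by rw [← Finset.mul_sum]; ring

section LinearOrder

variable {ι : Type*} [LinearOrder ι]

lemma sum_pow_succ_le (s : Finset ι) (b : ι → ℝ≥0∞) (m : ℕ) :
    (∑ j ∈ s, b j) ^ (m + 1) ≤ (m + 1) * ∑ j ∈ s, b j * (∑ l ∈ s with l ≤ j, b l) ^ m := by
  induction s using Finset.induction_on_max with
  | empty => simp
  | insert a s hlt ih =>
    have ha : a ∉ s := fun h => lt_irrefl _ (hlt a h)
    have hprefix : (insert a s).filter (· ≤ a) = insert a s :=
      Finset.filter_true_of_mem (by simpa using fun x hx => (hlt x hx).le)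
    rw [Finset.sum_insert ha, Finset.sum_insert ha, hprefix, Finset.sum_insert ha, mul_add,
      add_comm (b a)]
    refine (add_pow_succ_le _ _ m).trans ?_
    rw [add_comm]
    gcongr
    refine ih.trans ?_
    gcongr
    exact Finset.subset_insert a s

lemma sum_filter_le_of_sum_prefix_le {s : Finset ι} {w : ι → ℝ≥0∞} {D : ℝ≥0∞} :
    ∑ j ∈ s with ∑ l ∈ s with l ≤ j, w l ≤ D, w j ≤ D := by
  rcases (s.filter fun j => ∑ l ∈ s with l ≤ j, w l ≤ D).eq_empty_or_nonempty with h | h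
  · simp [h]
  have hmax := Finset.max'_mem _ h
  refine le_trans (Finset.sum_le_sum_of_subset fun j hj => ?_) (Finset.mem_filter.1 hmax).2
  exact Finset.mem_filter.2 ⟨(Finset.mem_filter.1 hj).1, Finset.le_max' _ j hj⟩

lemma sum_filter_le_of_sum_strictPrefix_le {s : Finset ι} {w : ι → ℝ≥0∞} {D B : ℝ≥0∞}
    (hw : ∀ j ∈ s, w j ≤ B) : ∑ j ∈ s with ∑ l ∈ s with l < j, w l ≤ D, w j ≤ D + B := by
  rcases (s.filter fun j => ∑ l ∈ s with l < j, w l ≤ D).eq_empty_or_nonempty with h | h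
  · simp [h]
  obtain ⟨hs, hD⟩ := Finset.mem_filter.1 (Finset.max'_mem _ h)
  rw [← Finset.sum_erase_add _ _ (Finset.max'_mem _ h)]
  refine add_le_add (le_trans (Finset.sum_le_sum_of_subset fun j hj => ?_) hD) (hw _ hs)
  exact Finset.mem_filter.2 ⟨(Finset.mem_filter.1 (Finset.mem_of_mem_erase hj)).1,
    Finset.lt_max'_of_mem_erase_max' _ h hj⟩

lemma lt_sum_filter_of_lt_sum {s : Finset ι} {w : ι → ℝ≥0∞} {D : ℝ≥0∞}
    (hD : D < ∑ j ∈ s, w j) : D < ∑ j ∈ s with ∑ l ∈ s with l < j, w l ≤ D, w j := by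
  rcases (s.filter fun j => D < ∑ l ∈ s with l < j, w l).eq_empty_or_nonempty with h | h
  · rwa [Finset.filter_true_of_mem fun j hj =>
      not_lt.1 fun hlt => Finset.notMem_empty j (h ▸ Finset.mem_filter.2 ⟨hj, hlt⟩)]
  refine (Finset.mem_filter.1 (Finset.min'_mem _ h)).2.trans_le
    (Finset.sum_le_sum_of_subset fun j hj => ?_)
  obtain ⟨hs, hlt⟩ := Finset.mem_filter.1 hj
  refine Finset.mem_filter.2 ⟨hs, not_lt.1 fun hDj => hlt.not_ge ?_⟩
  exact Finset.min'_le _ j (Finset.mem_filter.2 ⟨hs, hDj⟩)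

/-! ### Sums of functions whose tails decay in the mean -/

variable {Ω : Type*} [MeasurableSpace Ω] {P : Measure Ω} {s : Finset ι} {b : ι → Ω → ℝ≥0∞}
  {m : ℕ} {C : ℝ≥0∞}

lemma lintegral_sum_pow_succ_le (hb : ∀ j, Measurable (b j)) (m : ℕ) :
    ∫⁻ x, (∑ j ∈ s, b j x) ^ (m + 1) ∂P ≤
      (m + 1) * ∑ j ∈ s, ∫⁻ x, b j x * (∑ l ∈ s with l ≤ j, b l x) ^ m ∂P := by
  have hT : ∀ j, Measurable fun x => b j x * (∑ l ∈ s with l ≤ j, b l x) ^ m := by fun_prop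
  rw [← lintegral_finsetSum _ fun j _ => hT j, ← lintegral_const_mul _ (by fun_prop)]
  exact lintegral_mono fun x => sum_pow_succ_le s (b · x) m

lemma sum_lintegral_mul_pow_succ_le_of_tail_le (hb : ∀ j, Measurable (b j))
    (h : ∀ l ∈ s, ∑ j ∈ s with l ≤ j, ∫⁻ x, (∑ i ∈ s with i ≤ l, b i x) ^ m * b l x * b j x ∂P ≤
      C * ∫⁻ x, (∑ i ∈ s with i ≤ l, b i x) ^ m * b l x * b l x ∂P) :
    ∑ j ∈ s, ∫⁻ x, b j x * (∑ l ∈ s with l ≤ j, b l x) ^ (m + 1) ∂P ≤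
      (m + 1) * C * ∑ l ∈ s, ∫⁻ x, (∑ i ∈ s with i ≤ l, b i x) ^ m * b l x * b l x ∂P := by
  have hterm : ∀ j, ∫⁻ x, b j x * (∑ l ∈ s with l ≤ j, b l x) ^ (m + 1) ∂P ≤
      (m + 1) * ∑ l ∈ s with l ≤ j,
        ∫⁻ x, (∑ i ∈ s with i ≤ l, b i x) ^ m * b l x * b j x ∂P := fun j => by
    rw [← lintegral_finsetSum _ fun l _ => by fun_prop, ← lintegral_const_mul _ (by fun_prop)]
    refine lintegral_mono fun x => ?_
    calc b j x * (∑ l ∈ s with l ≤ j, b l x) ^ (m + 1)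
        ≤ b j x * ((m + 1) * ∑ l ∈ s with l ≤ j, b l x * (∑ i ∈ s with i ≤ l, b i x) ^ m) := by
          gcongr
          refine (sum_pow_succ_le _ (b · x) m).trans ?_
          gcongr
          exact Finset.filter_subset _ _
      _ = _ := by
          rw [mul_left_comm, Finset.mul_sum]
          congr 1
          exact Finset.sum_congr rfl fun l _ => by ring
  calc _ ≤ ∑ j ∈ s, (m + 1) * ∑ l ∈ s with l ≤ j,
        ∫⁻ x, (∑ i ∈ s with i ≤ l, b i x) ^ m * b l x * b j x ∂P :=
        Finset.sum_le_sum fun j _ => hterm j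
    _ = (m + 1) * ∑ l ∈ s, ∑ j ∈ s with l ≤ j,
        ∫⁻ x, (∑ i ∈ s with i ≤ l, b i x) ^ m * b l x * b j x ∂P := by
        rw [← Finset.mul_sum]
        congr 1
        exact Finset.sum_comm' fun j l => by simp only [Finset.mem_filter]; tauto
    _ ≤ (m + 1) * ∑ l ∈ s, C * ∫⁻ x, (∑ i ∈ s with i ≤ l, b i x) ^ m * b l x * b l x ∂P := by
        gcongr with l hl; exact h l hl
    _ = _ := by rw [← Finset.mul_sum, mul_assoc]

lemma sum_lintegral_mul_prefix_pow_ne_top (hb : ∀ j, Measurable (b j)) (m : ℕ)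
    (hfin : ∑ j ∈ s, ∫⁻ x, b j x ^ (m + 1) ∂P ≠ ⊤) :
    ∑ j ∈ s, ∫⁻ x, b j x * (∑ l ∈ s with l ≤ j, b l x) ^ m ∂P ≠ ⊤ := by
  refine ENNReal.sum_ne_top.2 fun j hj => ne_top_of_le_ne_top
    (ENNReal.mul_ne_top (ENNReal.pow_ne_top (ENNReal.natCast_ne_top s.card) (n := m)) hfin) ?_
  rw [← lintegral_finsetSum _ fun i _ => by fun_prop, ← lintegral_const_mul _ (by fun_prop)]
  refine lintegral_mono fun x => ?_
  calc b j x * (∑ l ∈ s with l ≤ j, b l x) ^ m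
      ≤ (∑ i ∈ s, b i x) * (∑ i ∈ s, b i x) ^ m := by
        gcongr
        exacts [Finset.single_le_sum (f := (b · x)) (fun _ _ => zero_le) hj,
          Finset.filter_subset _ _]
    _ = (∑ i ∈ s, b i x) ^ (m + 1) := (pow_succ' _ _).symm
    _ ≤ _ := by
        have := ENNReal.rpow_sum_le_const_mul_sum_rpow s (b · x) (p := (m + 1 : ℕ)) (by simp)
        simpa [← ENNReal.rpow_natCast] using this

lemma sum_lintegral_mul_pow_le_of_tail_le (hb : ∀ j, Measurable (b j)) (hC₀ : C ≠ 0) (hC : C ≠ ⊤)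
    (h : ∀ l ∈ s, ∑ j ∈ s with l ≤ j, ∫⁻ x, (∑ i ∈ s with i ≤ l, b i x) ^ m * b l x * b j x ∂P ≤
      C * ∫⁻ x, (∑ i ∈ s with i ≤ l, b i x) ^ m * b l x * b l x ∂P)
    (hfin : ∑ j ∈ s, ∫⁻ x, b j x ^ (m + 2) ∂P ≠ ⊤) :
    ∑ j ∈ s, ∫⁻ x, b j x * (∑ l ∈ s with l ≤ j, b l x) ^ (m + 1) ∂P ≤
      2 * ((m + 1) * C * (2 * ((m + 1) * C)) ^ m * ∑ j ∈ s, ∫⁻ x, b j x ^ (m + 2) ∂P) := by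
  set A := ∑ j ∈ s, ∫⁻ x, b j x ^ (m + 2) ∂P
  set J := ∑ j ∈ s, ∫⁻ x, b j x * (∑ l ∈ s with l ≤ j, b l x) ^ (m + 1) ∂P
  set K : ℝ≥0∞ := 2 * ((m + 1) * C)
  have hm₀ : (m + 1 : ℝ≥0∞) * C ≠ 0 := mul_ne_zero (by positivity) hC₀
  have hm : (m + 1 : ℝ≥0∞) * C ≠ ⊤ := by finiteness
  have hK₀ : K ≠ 0 := mul_ne_zero two_ne_zero hm₀
  have hK : K ≠ ⊤ := ENNReal.mul_ne_top ENNReal.ofNat_ne_top hm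
  refine le_two_mul_of_le_add_half (sum_lintegral_mul_prefix_pow_ne_top hb (m + 1) hfin) ?_
  calc J ≤ (m + 1) * C * ∑ l ∈ s, ∫⁻ x, (∑ i ∈ s with i ≤ l, b i x) ^ m * b l x * b l x ∂P :=
        sum_lintegral_mul_pow_succ_le_of_tail_le hb h
    _ ≤ (m + 1) * C * ∑ l ∈ s, (K ^ m * ∫⁻ x, b l x ^ (m + 2) ∂P +
          K⁻¹ * ∫⁻ x, b l x * (∑ i ∈ s with i ≤ l, b i x) ^ (m + 1) ∂P) := by
        gcongr with l
        rw [← lintegral_const_mul _ (by fun_prop), ← lintegral_const_mul K⁻¹ (by fun_prop),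
          ← lintegral_add_left (by fun_prop)]
        exact lintegral_mono fun x => sq_mul_pow_le _ _ hK₀ hK m
    _ = (m + 1) * C * K ^ m * A + (m + 1) * C * K⁻¹ * J := by
        rw [Finset.sum_add_distrib, ← Finset.mul_sum, ← Finset.mul_sum]; ring
    _ = (m + 1) * C * K ^ m * A + J / 2 := by
        rw [ENNReal.mul_inv (by simp) (by simp), mul_left_comm, ENNReal.mul_inv_cancel hm₀ hm,
          mul_one, ENNReal.div_eq_inv_mul]

lemma exists_lintegral_sum_pow_le_of_tail_le (m : ℕ) (hC₀ : C ≠ 0) (hC : C ≠ ⊤) :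
    ∃ B : ℝ≥0∞, B ≠ 0 ∧ B ≠ ⊤ ∧ ∀ (s : Finset ι) (b : ι → Ω → ℝ≥0∞) (_ : ∀ j, Measurable (b j))
      (_ : ∀ l ∈ s,
        ∑ j ∈ s with l ≤ j, ∫⁻ x, (∑ i ∈ s with i ≤ l, b i x) ^ m * b l x * b j x ∂P ≤
          C * ∫⁻ x, (∑ i ∈ s with i ≤ l, b i x) ^ m * b l x * b l x ∂P),
      ∫⁻ x, (∑ j ∈ s, b j x) ^ (m + 2) ∂P ≤ B * ∑ j ∈ s, ∫⁻ x, b j x ^ (m + 2) ∂P := by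
  have hB₀ : (m + 2) * (2 * ((m + 1) * C * (2 * ((m + 1) * C)) ^ m)) ≠ 0 := by
    simp [hC₀]
  refine ⟨_, hB₀, by finiteness, fun s b hb h => ?_⟩
  rcases eq_or_ne (∑ j ∈ s, ∫⁻ x, b j x ^ (m + 2) ∂P) ⊤ with hA | hA
  · rw [hA, ENNReal.mul_top hB₀]; exact le_top
  calc ∫⁻ x, (∑ j ∈ s, b j x) ^ (m + 2) ∂P
      ≤ (m + 2) * ∑ j ∈ s, ∫⁻ x, b j x * (∑ l ∈ s with l ≤ j, b l x) ^ (m + 1) ∂P := by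
        refine (lintegral_sum_pow_succ_le hb (m + 1)).trans_eq ?_
        rw [Nat.cast_add, Nat.cast_one, add_assoc, one_add_one_eq_two]
    _ ≤ (m + 2) * (2 * ((m + 1) * C * (2 * ((m + 1) * C)) ^ m *
          ∑ j ∈ s, ∫⁻ x, b j x ^ (m + 2) ∂P)) := by
        gcongr; exact sum_lintegral_mul_pow_le_of_tail_le hb hC₀ hC h hA
    _ = _ := by ring

lemma exists_sum_lintegral_pow_le_sup_of_tail_le (m : ℕ) (hC₀ : C ≠ 0) (hC : C ≠ ⊤) :
    ∃ B : ℝ≥0∞, B ≠ ⊤ ∧ ∀ (s : Finset ι) (b : ι → Ω → ℝ≥0∞) (_ : ∀ j, Measurable (b j))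
      (_ : ∀ l ∈ s,
        ∑ j ∈ s with l ≤ j, ∫⁻ x, (∑ i ∈ s with i ≤ l, b i x) ^ m * b l x * b j x ∂P ≤
          C * ∫⁻ x, (∑ i ∈ s with i ≤ l, b i x) ^ m * b l x * b l x ∂P)
      (M : Ω → ℝ≥0∞) (_ : ∀ j ∈ s, ∀ x, b j x ≤ M x),
      ∑ j ∈ s, ∫⁻ x, b j x ^ (m + 2) ∂P ≤ B * ∫⁻ x, M x ^ (m + 2) ∂P := by
  obtain ⟨B, hB₀, hB, hsum⟩ :=
    exists_lintegral_sum_pow_le_of_tail_le (ι := ι) (P := P) m hC₀ hC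
  have hK₀ : 2 * B ≠ 0 := mul_ne_zero two_ne_zero hB₀
  have hK : 2 * B ≠ ⊤ := ENNReal.mul_ne_top ENNReal.ofNat_ne_top hB
  refine ⟨2 * (2 * B), by finiteness, fun s b hb h M hM => ?_⟩
  set A := ∑ j ∈ s, ∫⁻ x, b j x ^ (m + 2) ∂P
  rcases eq_or_ne (∫⁻ x, M x ^ (m + 2) ∂P) ⊤ with hM' | hM'
  · rw [hM', ENNReal.mul_top (mul_ne_zero two_ne_zero hK₀)]; exact le_top
  have hA : A ≠ ⊤ := ENNReal.sum_ne_top.2 fun j hj => ne_top_of_le_ne_top hM' <|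
    lintegral_mono fun x => pow_le_pow_left₀ zero_le (hM j hj x) _
  rw [mul_assoc]
  refine le_two_mul_of_le_add_half hA ?_
  calc A = ∫⁻ x, ∑ j ∈ s, b j x ^ (m + 2) ∂P :=
        (lintegral_finsetSum _ fun i _ => (hb i).pow_const _).symm
    _ ≤ ∫⁻ x, 2 * B * M x ^ (m + 2) + (2 * B)⁻¹ * (∑ j ∈ s, b j x) ^ (m + 2) ∂P :=
        lintegral_mono fun x => sum_pow_le_max_add_sum_pow (fun j hj => hM j hj x) hK₀ hK m
    _ = 2 * B * ∫⁻ x, M x ^ (m + 2) ∂P + (2 * B)⁻¹ * ∫⁻ x, (∑ j ∈ s, b j x) ^ (m + 2) ∂P := by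
        rw [lintegral_add_right _ (by fun_prop), lintegral_const_mul' _ _ hK,
          lintegral_const_mul _ (by fun_prop)]
    _ ≤ 2 * B * ∫⁻ x, M x ^ (m + 2) ∂P + (2 * B)⁻¹ * (B * A) := by gcongr; exact hsum s b hb h
    _ = _ := by
        rw [ENNReal.mul_inv (by simp) (by simp), mul_assoc 2⁻¹, ← mul_assoc B⁻¹,
          ENNReal.inv_mul_cancel hB₀ hB, one_mul, ENNReal.div_eq_inv_mul]

end LinearOrder

/-! ### Powers of two -/

/-- The power `2 ^ t` in `ℝ≥0∞` with real exponent; all dyadic weights are written with it, so that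
the exponent laws carry no side conditions. -/
def twoPow (t : ℝ) : ℝ≥0∞ := (2 : ℝ≥0∞) ^ t

lemma twoPow_add (a b : ℝ) : twoPow (a + b) = twoPow a * twoPow b :=
  ENNReal.rpow_add _ _ two_ne_zero ENNReal.ofNat_ne_top

lemma twoPow_zero : twoPow 0 = 1 := ENNReal.rpow_zero

lemma twoPow_ne_zero (a : ℝ) : twoPow a ≠ 0 := by simp [twoPow]

lemma twoPow_ne_top (a : ℝ) : twoPow a ≠ ⊤ := by simp [twoPow, ENNReal.rpow_eq_top_iff]

lemma twoPow_rpow (a t : ℝ) : twoPow a ^ t = twoPow (a * t) := (ENNReal.rpow_mul _ _ _).symm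

lemma twoPow_neg (a : ℝ) : twoPow (-a) = (twoPow a)⁻¹ := ENNReal.rpow_neg _ _

lemma twoPow_mul_twoPow_neg (a : ℝ) : twoPow a * twoPow (-a) = 1 := by
  rw [← twoPow_add, add_neg_cancel, twoPow_zero]

lemma twoPow_eq_ofReal (a : ℝ) : twoPow a = ENNReal.ofReal ((2 : ℝ) ^ a) := by
  rw [← ENNReal.ofReal_rpow_of_pos two_pos, ENNReal.ofReal_ofNat, twoPow]

lemma twoPow_intCast (k : ℤ) : twoPow k = ENNReal.ofReal ((2 : ℝ) ^ k) := by
  rw [twoPow_eq_ofReal, Real.rpow_intCast]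

lemma twoPow_intCast_mul (k : ℤ) (γ : ℝ) :
    twoPow (k * γ) = ENNReal.ofReal (((2 : ℝ) ^ k) ^ γ) := by
  rw [twoPow_eq_ofReal, Real.rpow_mul two_pos.le, Real.rpow_intCast]

lemma tsum_twoPow_ne_top {t : ℝ} (ht : 0 < t) : ∑' j : ℕ, twoPow (-(j * t)) ≠ ⊤ := by
  have hgeom : ∀ j : ℕ, twoPow (-(j * t)) = twoPow (-t) ^ j := fun j => by
    rw [← ENNReal.rpow_natCast, twoPow_rpow]; ring_nf
  have hlt : twoPow (-t) < 1 :=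
    ENNReal.rpow_lt_one_of_one_lt_of_neg ENNReal.one_lt_two (neg_lt_zero.2 ht)
  simp_rw [hgeom, ENNReal.tsum_geometric]
  exact ENNReal.inv_ne_top.2 (tsub_pos_of_lt hlt).ne'

lemma exists_mul_twoPow_neg_le_half {K : ℝ≥0∞} (hK : K ≠ ⊤) {t : ℝ} (ht : 0 < t) :
    ∃ T : ℝ, K * twoPow (-(T * t)) ≤ 1 / 2 := by
  obtain ⟨m, hm⟩ := ENNReal.exists_nat_gt hK
  refine ⟨(m + 1 : ℕ) / t, ?_⟩
  have hpow : twoPow (m + 1 : ℕ) = 2 * 2 ^ m := by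
    rw [twoPow, ENNReal.rpow_natCast, pow_succ']
  rw [div_mul_cancel₀ _ ht.ne', twoPow_neg, ← div_eq_mul_inv]
  refine ENNReal.div_le_of_le_mul ?_
  rw [hpow, ← mul_assoc, one_div, ENNReal.inv_mul_cancel two_ne_zero ENNReal.ofNat_ne_top, one_mul]
  exact hm.le.trans (mod_cast Nat.lt_two_pow_self.le)

lemma add_rpow_le_twoPow_mul (u v : ℝ≥0∞) {t : ℝ} (ht : 0 ≤ t) :
    (u + v) ^ t ≤ twoPow t * (u ^ t + v ^ t) := by
  have hmax : u + v ≤ 2 * max u v :=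
    (add_le_add (le_max_left u v) (le_max_right u v)).trans_eq (two_mul _).symm
  calc (u + v) ^ t ≤ (2 * max u v) ^ t := ENNReal.rpow_le_rpow hmax ht
    _ = twoPow t * max (u ^ t) (v ^ t) := by
        rw [ENNReal.mul_rpow_of_nonneg _ _ ht, (ENNReal.monotone_rpow_of_nonneg ht).map_max, twoPow]
    _ ≤ _ := by gcongr; exact max_le le_self_add le_add_self

lemma sum_filter_le_toNat_le_tsum (s : Finset ℤ) (l : ℤ) (f : ℕ → ℝ≥0∞) :
    ∑ j ∈ s with l ≤ j, f (j - l).toNat ≤ ∑' n, f n := by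
  rw [← Finset.sum_image (f := f) (g := fun j : ℤ => (j - l).toNat)]
  · exact ENNReal.sum_le_tsum _
  · intro i hi j hj hij
    simp only [Finset.coe_filter, mem_ofPred_eq] at hi hj hij
    lia

/-! ### Dyadic cells -/

lemma lintegral_mul_setLIntegral_swap {X Y : Type*} [MeasurableSpace X] [MeasurableSpace Y]
    (ρ : Measure X) (ν : Measure Y) [SFinite ρ] [SFinite ν] {S : Set (X × Y)}
    (hS : MeasurableSet S) {h : X → ℝ≥0∞} {f : Y → ℝ≥0∞} (hh : Measurable h) (hf : Measurable f) :
    ∫⁻ x, h x * ∫⁻ y in Prod.mk x ⁻¹' S, f y ∂ν ∂ρ =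
      ∫⁻ y, f y * ∫⁻ x in (fun x => (x, y)) ⁻¹' S, h x ∂ρ ∂ν := by
  have hleft : ∀ x, h x * ∫⁻ y in Prod.mk x ⁻¹' S, f y ∂ν =
      ∫⁻ y, S.indicator (fun z => h z.1 * f z.2) (x, y) ∂ν := fun x => by
    rw [← lintegral_const_mul _ hf, ← lintegral_indicator (measurable_prodMk_left hS)]; rfl
  have hright : ∀ y, f y * ∫⁻ x in (fun x => (x, y)) ⁻¹' S, h x ∂ρ =
      ∫⁻ x, S.indicator (fun z => h z.1 * f z.2) (x, y) ∂ρ := fun y => by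
    rw [mul_comm, ← lintegral_mul_const _ hh, ← lintegral_indicator (measurable_prodMk_right hS)]
    rfl
  simp_rw [hleft, hright]
  exact lintegral_lintegral_swap
    (((hh.comp measurable_fst).mul (hf.comp measurable_snd)).indicator hS).aemeasurable

section Cells

variable {N : ℕ}

/-- The index of the dyadic cell of side `2 ^ (-k)` containing `x`; larger `k` means smaller cells.
Two points lie in the same cell of generation `k` when their indices agree. -/
def cellIndex (k : ℤ) (x : Euc N) : Fin N → ℤ := fun i => ⌊x i * (2 : ℝ) ^ k⌋

/-- The union of the dyadic cells of generation `k` at index distance at most `r` from that of `x`;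
for `r = 0` it is the dyadic cell containing `x`. -/
def cellBlock (r : ℕ) (k : ℤ) (x : Euc N) : Set (Euc N) :=
  {y | ∀ i, |cellIndex k y i - cellIndex k x i| ≤ r}

/-- A function is constant on each dyadic cell of generation `k`, that is, measurable with respect
to the dyadic filtration at time `k`. -/
def CellConst {β : Type*} (k : ℤ) (h : Euc N → β) : Prop :=
  ∀ ⦃x y⦄, cellIndex k x = cellIndex k y → h x = h y

lemma measurable_cellIndex (k : ℤ) : Measurable (cellIndex k : Euc N → Fin N → ℤ) :=
  measurable_pi_lambda _ fun _ => Int.measurable_floor.comp (by fun_prop)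

lemma mem_cellBlock_comm {r : ℕ} {k : ℤ} {x y : Euc N} :
    y ∈ cellBlock r k x ↔ x ∈ cellBlock r k y :=
  forall_congr' fun i => by rw [abs_sub_comm]

lemma mem_cellBlock_zero {k : ℤ} {x y : Euc N} :
    y ∈ cellBlock 0 k x ↔ cellIndex k y = cellIndex k x := by
  simp [cellBlock, funext_iff, sub_eq_zero]

lemma measurableSet_cellBlock_prod (r : ℕ) (k : ℤ) :
    MeasurableSet {z : Euc N × Euc N | z.2 ∈ cellBlock r k z.1} := by
  have hpre : {z : Euc N × Euc N | z.2 ∈ cellBlock r k z.1} =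
      (fun z => (cellIndex k z.1, cellIndex k z.2)) ⁻¹'
        {c : (Fin N → ℤ) × (Fin N → ℤ) | ∀ i, |c.2 i - c.1 i| ≤ r} := rfl
  rw [hpre]
  exact (((measurable_cellIndex k).comp measurable_fst).prodMk
    ((measurable_cellIndex k).comp measurable_snd)) MeasurableSet.of_discrete

lemma measurableSet_cellBlock (r : ℕ) (k : ℤ) (x : Euc N) : MeasurableSet (cellBlock r k x) :=
  measurable_prodMk_left (measurableSet_cellBlock_prod r k)

lemma cellIndex_sub_one (k : ℤ) (x : Euc N) (i : Fin N) :
    cellIndex (k - 1) x i = cellIndex k x i / 2 := by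
  have h : x i * (2 : ℝ) ^ (k - 1) = x i * (2 : ℝ) ^ k / (2 : ℕ) := by
    rw [zpow_sub_one₀ two_ne_zero]; push_cast; ring
  rw [cellIndex, h, Int.floor_div_natCast, cellIndex, Nat.cast_ofNat]

lemma cellBlock_subset_of_le {r : ℕ} {k i : ℤ} (h : k ≤ i) (x : Euc N) :
    cellBlock r i x ⊆ cellBlock r k x := by
  induction i, h using Int.leInduction with
  | base => exact subset_rfl
  | succ i _ ih =>
    refine fun y hy => ih fun j => ?_
    have hyj := hy j
    rw [← add_sub_cancel_right i 1, cellIndex_sub_one, cellIndex_sub_one]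
    rw [abs_le] at hyj ⊢
    lia

namespace CellConst

variable {β β' : Type*} {k i : ℤ} {h : Euc N → β} {h' : Euc N → β'}

lemma const (k : ℤ) (c : β) : CellConst k fun _ : Euc N => c := fun _ _ _ => rfl

lemma comp (hh : CellConst k h) (φ : β → β') : CellConst k fun x => φ (h x) :=
  fun _ _ hxy => congrArg φ (hh hxy)

lemma map₂ {β'' : Type*} (φ : β → β' → β'') (hh : CellConst k h) (hh' : CellConst k h') :
    CellConst k fun x => φ (h x) (h' x) :=
  fun _ _ hxy => congrArg₂ φ (hh hxy) (hh' hxy)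

lemma mono (hh : CellConst k h) (hk : k ≤ i) : CellConst i h := fun _ y hxy =>
  hh (mem_cellBlock_zero.1 (cellBlock_subset_of_le hk y (mem_cellBlock_zero.2 hxy)))

lemma sum [AddCommMonoid β] {s : Finset ℤ} {f : ℤ → Euc N → β}
    (hf : ∀ j ∈ s, CellConst k (f j)) : CellConst k fun x => ∑ j ∈ s, f j x :=
  fun _ _ hxy => Finset.sum_congr rfl fun j hj => hf j hj hxy

lemma indicator [Zero β] {G : Set (Euc N)} (hh : CellConst k h) (hG : CellConst k (· ∈ G)) :
    CellConst k (G.indicator h) := fun x y hxy => by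
  classical
  simp only [Set.indicator_apply, hG hxy, hh hxy]

lemma measurable [MeasurableSpace β] (hh : CellConst k h) : Measurable h := by
  rw [← Function.FactorsThrough.extend_comp (f := cellIndex k) (g := h) (fun _ => h 0) hh]
  exact Measurable.of_discrete.comp (measurable_cellIndex k)

lemma measurableSet {G : Set (Euc N)} (hG : CellConst k (· ∈ G)) : MeasurableSet G :=
  measurableSet_setOfPred.2 hG.measurable

end CellConst

lemma cellConst_cellBlock (r : ℕ) (k : ℤ) :
    CellConst k (cellBlock r k : Euc N → Set (Euc N)) :=
  fun x y h => by simp only [cellBlock, h]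

lemma cellBlock_eq_preimage (r : ℕ) (k : ℤ) (x : Euc N) :
    cellBlock r k x = (MeasurableEquiv.toLp 2 (Fin N → ℝ)).symm ⁻¹'
      (Set.univ.pi fun i => Set.Ico (((cellIndex k x i - r : ℤ) : ℝ) * (2 : ℝ) ^ (-k))
        (((cellIndex k x i + r + 1 : ℤ) : ℝ) * (2 : ℝ) ^ (-k))) := by
  ext y
  have h2 : (0 : ℝ) < (2 : ℝ) ^ k := by positivity
  simp only [cellBlock, mem_ofPred_eq, mem_preimage, mem_univ_pi, mem_Ico]
  refine forall_congr' fun i => ?_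
  rw [zpow_neg, ← div_eq_mul_inv, ← div_eq_mul_inv, div_le_iff₀ h2, lt_div_iff₀ h2,
    ← Int.le_floor, ← Int.floor_lt]
  change _ ↔ cellIndex k x i - r ≤ cellIndex k y i ∧ cellIndex k y i < cellIndex k x i + r + 1
  rw [abs_le]
  lia

lemma volume_cellBlock (r : ℕ) (k : ℤ) (x : Euc N) :
    volume (cellBlock r k x) = (2 * r + 1 : ℝ≥0∞) ^ N * twoPow (-(k * N)) := by
  have hside : ∀ i : Fin N, ENNReal.ofReal (((cellIndex k x i + r + 1 : ℤ) : ℝ) * (2 : ℝ) ^ (-k) -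
      ((cellIndex k x i - r : ℤ) : ℝ) * (2 : ℝ) ^ (-k)) = (2 * r + 1 : ℝ≥0∞) * twoPow (-k) := by
    intro i
    rw [← sub_mul, ENNReal.ofReal_mul' (by positivity), ← Int.cast_neg, twoPow_intCast]
    congr 1
    rw [← ENNReal.ofReal_ofNat, ← ENNReal.ofReal_natCast, ← ENNReal.ofReal_mul zero_le_two,
      ← ENNReal.ofReal_one, ← ENNReal.ofReal_add (by positivity) zero_le_one]
    push_cast
    ring_nf
  rw [cellBlock_eq_preimage, (EuclideanSpace.volume_preserving_symm_measurableEquiv_toLp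
    (Fin N)).measure_preimage_equiv, Real.volume_pi_Ico]
  simp only [hside, Finset.prod_const, Finset.card_univ, Fintype.card_fin, mul_pow]
  rw [← ENNReal.rpow_natCast (twoPow _), twoPow_rpow]
  ring_nf

lemma volume_cellBlock_zero (k : ℤ) (x : Euc N) :
    volume (cellBlock 0 k x) = twoPow (-(k * N)) := by
  simp [volume_cellBlock]

lemma lintegral_mul_setLIntegral_cellBlock_swap (ρ ν : Measure (Euc N)) [SFinite ρ] [SFinite ν]
    {h f : Euc N → ℝ≥0∞} (hh : Measurable h) (hf : Measurable f) (r : ℕ) (k : ℤ) :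
    ∫⁻ x, h x * ∫⁻ y in cellBlock r k x, f y ∂ν ∂ρ =
      ∫⁻ y, f y * ∫⁻ x in cellBlock r k y, h x ∂ρ ∂ν := by
  have hsymm : ∀ y : Euc N, (fun x => (x, y)) ⁻¹' {z : Euc N × Euc N | z.2 ∈ cellBlock r k z.1} =
      cellBlock r k y := fun y => by
    ext x
    simp only [mem_preimage, mem_ofPred_eq]
    exact mem_cellBlock_comm
  have hswap := lintegral_mul_setLIntegral_swap ρ ν (measurableSet_cellBlock_prod r k) hh hf
  simp only [hsymm] at hswap
  exact hswap

lemma setLIntegral_cellBlock_zero_of_cellConst {h : Euc N → ℝ≥0∞} {k : ℤ} (hh : CellConst k h)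
    (ρ : Measure (Euc N)) (x : Euc N) :
    ∫⁻ y in cellBlock 0 k x, h y ∂ρ = h x * ρ (cellBlock 0 k x) := by
  rw [setLIntegral_congr_fun (g := fun _ => h x) (measurableSet_cellBlock 0 k x)
    (fun y hy => hh (mem_cellBlock_zero.1 hy)), setLIntegral_const]

lemma lintegral_cellConst_mul_setLIntegral (ν : Measure (Euc N)) [SFinite ν]
    {f h : Euc N → ℝ≥0∞} (hf : Measurable f) {k : ℤ} (hh : CellConst k h) :
    ∫⁻ x, h x * ∫⁻ y in cellBlock 0 k x, f y ∂ν = twoPow (-(k * N)) * ∫⁻ y, h y * f y ∂ν := by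
  rw [lintegral_mul_setLIntegral_cellBlock_swap volume ν hh.measurable hf,
    ← lintegral_const_mul _ (f := fun y => h y * f y) (hh.measurable.mul hf)]
  refine lintegral_congr fun y => ?_
  rw [setLIntegral_cellBlock_zero_of_cellConst hh, volume_cellBlock_zero]
  ring

lemma lintegral_cellConst_mul_measure (ν : Measure (Euc N)) [SFinite ν] {h : Euc N → ℝ≥0∞} {k : ℤ}
    (hh : CellConst k h) :
    ∫⁻ x, h x * ν (cellBlock 0 k x) = twoPow (-(k * N)) * ∫⁻ y, h y ∂ν := by
  simpa using lintegral_cellConst_mul_setLIntegral ν measurable_one hh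

/-- The normalized mass `2 ^ (k γ) ν(Q)` of the block `Q` of radius `r` and generation `k` around
`x`: the generation-`k` term of the dyadic Riesz potential of order `N - γ`. -/
def cellDens (γ : ℝ) (r : ℕ) (ν : Measure (Euc N)) (k : ℤ) (x : Euc N) : ℝ≥0∞ :=
  ν (cellBlock r k x) * twoPow (k * γ)

lemma cellConst_cellDens (γ : ℝ) (r : ℕ) (ν : Measure (Euc N)) (k : ℤ) :
    CellConst k (cellDens γ r ν k) :=
  (cellConst_cellBlock r k).comp fun Q => ν Q * twoPow (k * γ)

lemma cellDens_mono_measure {γ : ℝ} {r : ℕ} {ν ν' : Measure (Euc N)} (h : ν ≤ ν') (k : ℤ)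
    (x : Euc N) : cellDens γ r ν k x ≤ cellDens γ r ν' k x := by
  unfold cellDens; gcongr

lemma cellDens_ne_top {γ : ℝ} {r : ℕ} {ν : Measure (Euc N)} [IsFiniteMeasure ν] (k : ℤ)
    (x : Euc N) : cellDens γ r ν k x ≠ ⊤ :=
  ENNReal.mul_ne_top (measure_ne_top _ _) (twoPow_ne_top _)

/-- The cellwise constant weight whose `ν`-integral is the `s`-th power integral of `cellDens`. -/
def cellWeight (γ s : ℝ) (ν : Measure (Euc N)) (k : ℤ) (x : Euc N) : ℝ≥0∞ :=
  cellDens γ 0 ν k x ^ (s - 1) * twoPow (k * (γ - N))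

lemma cellConst_cellWeight (γ s : ℝ) (ν : Measure (Euc N)) (k : ℤ) :
    CellConst k (cellWeight γ s ν k) :=
  (cellConst_cellDens γ 0 ν k).comp fun d => d ^ (s - 1) * twoPow (k * (γ - N))

lemma cellWeight_mono_measure {γ s : ℝ} (hs : 1 ≤ s) {ν ν' : Measure (Euc N)} (h : ν ≤ ν') (k : ℤ)
    (x : Euc N) : cellWeight γ s ν k x ≤ cellWeight γ s ν' k x := by
  unfold cellWeight
  have : 0 ≤ s - 1 := by linarith
  gcongr
  exact cellDens_mono_measure h k x

lemma cellWeight_ne_top {γ s : ℝ} (hs : 1 ≤ s) {ν : Measure (Euc N)} [IsFiniteMeasure ν] (k : ℤ)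
    (x : Euc N) : cellWeight γ s ν k x ≠ ⊤ :=
  ENNReal.mul_ne_top (ENNReal.rpow_ne_top_of_nonneg (by linarith) (cellDens_ne_top k x))
    (twoPow_ne_top _)

lemma lintegral_mul_cellDens_rpow (ν : Measure (Euc N)) [SFinite ν] {γ s : ℝ} (hs : 1 ≤ s)
    {h : Euc N → ℝ≥0∞} {k : ℤ} (hh : CellConst k h) :
    ∫⁻ x, h x * cellDens γ 0 ν k x ^ s = ∫⁻ x, h x * cellWeight γ s ν k x ∂ν := by
  have hhw : CellConst k fun x => h x * cellWeight γ s ν k x :=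
    hh.map₂ (· * ·) (cellConst_cellWeight γ s ν k)
  have hsplit : twoPow (k * γ) = twoPow (k * N) * twoPow (k * (γ - N)) := by
    rw [← twoPow_add]; ring_nf
  have hfactor : ∀ x, h x * cellDens γ 0 ν k x ^ s =
      twoPow (k * N) * (h x * cellWeight γ s ν k x * ν (cellBlock 0 k x)) := fun x => by
    rw [← sub_add_cancel s 1, ENNReal.rpow_add_of_nonneg _ _ (by linarith) zero_le_one,
      ENNReal.rpow_one, cellWeight, sub_add_cancel]
    nth_rw 2 [cellDens]
    rw [hsplit]
    ring
  calc ∫⁻ x, h x * cellDens γ 0 ν k x ^ s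
      = twoPow (k * N) * (twoPow (-(k * N)) * ∫⁻ x, h x * cellWeight γ s ν k x ∂ν) := by
        rw [lintegral_congr hfactor, lintegral_const_mul' _ _ (twoPow_ne_top _),
          lintegral_cellConst_mul_measure ν hhw]
    _ = _ := by rw [← mul_assoc, twoPow_mul_twoPow_neg, one_mul]

end Cells

/-! ### Carleson estimates for dyadic densities -/

lemma lintegral_rpow_le_rpow_lintegral {Ω : Type*} [MeasurableSpace Ω] (P : Measure Ω)
    [IsProbabilityMeasure P] {f : Ω → ℝ≥0∞} (hf : Measurable f) {τ : ℝ} (hτ₀ : 0 < τ)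
    (hτ₁ : τ ≤ 1) : ∫⁻ x, f x ^ τ ∂P ≤ (∫⁻ x, f x ∂P) ^ τ := by
  have h := eLpNorm'_le_eLpNorm'_of_exponent_le hτ₀ hτ₁ P hf.aestronglyMeasurable
  simp only [eLpNorm', enorm_eq_self, ENNReal.rpow_one, div_one] at h
  have hpow := ENNReal.rpow_le_rpow h hτ₀.le
  rwa [← ENNReal.rpow_mul, one_div, inv_mul_cancel₀ hτ₀.ne', ENNReal.rpow_one] at hpow

lemma rpow_sum_le_sum_rpow {ι : Type*} (s : Finset ι) (f : ι → ℝ≥0∞) {t : ℝ} (ht₀ : 0 < t)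
    (ht₁ : t ≤ 1) : (∑ i ∈ s, f i) ^ t ≤ ∑ i ∈ s, f i ^ t :=
  Finset.le_sum_of_subadditive (· ^ t) (ENNReal.zero_rpow_of_pos ht₀).le
    (fun a b => ENNReal.rpow_add_le_add_rpow a b ht₀.le ht₁) s f

section Carleson

variable {N : ℕ} {γ τ : ℝ} {k i : ℤ}

lemma setLIntegral_cellBlock_measure_le (ν : Measure (Euc N)) [SFinite ν] (r : ℕ) (hki : k ≤ i)
    (x : Euc N) :
    ∫⁻ z in cellBlock 0 k x, ν (cellBlock r i z) ≤
      (2 * r + 1 : ℝ≥0∞) ^ N * twoPow (-(i * N)) * ν (cellBlock r k x) := by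
  have hmeas := measurableSet_cellBlock (N := N) 0 k x
  have hswap := lintegral_mul_setLIntegral_cellBlock_swap volume ν
    (measurable_one.indicator hmeas) measurable_one r i
  simp only [Pi.one_apply, setLIntegral_one, one_mul, lintegral_indicator_one hmeas,
    Measure.restrict_apply hmeas] at hswap
  calc ∫⁻ z in cellBlock 0 k x, ν (cellBlock r i z)
      = ∫⁻ z, (cellBlock 0 k x).indicator 1 z * ν (cellBlock r i z) := by
        rw [← lintegral_indicator hmeas]
        refine lintegral_congr fun z => ?_
        by_cases hz : z ∈ cellBlock 0 k x <;> simp [hz]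
    _ = ∫⁻ y, volume (cellBlock 0 k x ∩ cellBlock r i y) ∂ν := hswap
    _ ≤ ∫⁻ y, (cellBlock r k x).indicator
          (fun _ => (2 * r + 1 : ℝ≥0∞) ^ N * twoPow (-(i * N))) y ∂ν := by
        refine lintegral_mono fun y => ?_
        by_cases hy : y ∈ cellBlock r k x
        · rw [indicator_of_mem hy, ← volume_cellBlock r i y]
          exact measure_mono inter_subset_right
        · suffices Disjoint (cellBlock 0 k x) (cellBlock r i y) by simp [this.inter_eq]
          refine disjoint_left.2 fun z hzx hzy => hy ?_
          rw [← cellConst_cellBlock r k (mem_cellBlock_zero.1 hzx)]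
          exact mem_cellBlock_comm.1 (cellBlock_subset_of_le hki y hzy)
    _ = _ := lintegral_indicator_const (measurableSet_cellBlock r k x) _

lemma isProbabilityMeasure_smul_restrict_cellBlock (k : ℤ) (x : Euc N) :
    IsProbabilityMeasure (twoPow (k * N) • volume.restrict (cellBlock 0 k x)) :=
  ⟨by simp [volume_cellBlock_zero, twoPow_mul_twoPow_neg]⟩

lemma average_cellDens_le (ν : Measure (Euc N)) [SFinite ν] (γ : ℝ) (r : ℕ) (hki : k ≤ i)
    (x : Euc N) :
    twoPow (k * N) * ∫⁻ z in cellBlock 0 k x, cellDens γ r ν i z ≤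
      (2 * r + 1 : ℝ≥0∞) ^ N * twoPow (-((i - k) * (N - γ))) * cellDens γ r ν k x := by
  have hexp : twoPow (k * N) * twoPow (i * γ) * twoPow (-(i * N)) =
      twoPow (-((i - k) * (N - γ))) * twoPow (k * γ) := by
    rw [← twoPow_add, ← twoPow_add, ← twoPow_add]; ring_nf
  simp only [cellDens]
  rw [lintegral_mul_const' _ _ (twoPow_ne_top _)]
  calc _ ≤ twoPow (k * N) * ((2 * r + 1 : ℝ≥0∞) ^ N * twoPow (-(i * N)) * ν (cellBlock r k x) *
        twoPow (i * γ)) := by gcongr; exact setLIntegral_cellBlock_measure_le ν r hki x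
    _ = (2 * r + 1 : ℝ≥0∞) ^ N * (twoPow (k * N) * twoPow (i * γ) * twoPow (-(i * N))) *
        ν (cellBlock r k x) := by ring
    _ = _ := by rw [hexp]; ring

lemma average_cellDens_rpow_le (ν : Measure (Euc N)) [SFinite ν] (γ : ℝ) (r : ℕ) (hki : k ≤ i)
    (hτ₀ : 0 < τ) (hτ₁ : τ ≤ 1) (x : Euc N) :
    twoPow (k * N) * ∫⁻ z in cellBlock 0 k x, cellDens γ r ν i z ^ τ ≤
      ((2 * r + 1 : ℝ≥0∞) ^ N * twoPow (-((i - k) * (N - γ)))) ^ τ * cellDens γ r ν k x ^ τ := by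
  have := isProbabilityMeasure_smul_restrict_cellBlock k x
  have hjensen := lintegral_rpow_le_rpow_lintegral
    (twoPow (k * N) • volume.restrict (cellBlock 0 k x))
    (cellConst_cellDens γ r ν i).measurable hτ₀ hτ₁
  rw [lintegral_smul_measure, lintegral_smul_measure, smul_eq_mul, smul_eq_mul] at hjensen
  refine hjensen.trans ?_
  rw [← ENNReal.mul_rpow_of_nonneg _ _ hτ₀.le]
  exact ENNReal.rpow_le_rpow (average_cellDens_le ν γ r hki x) hτ₀.le

lemma lintegral_mul_cellDens_rpow_le (ν : Measure (Euc N)) [SFinite ν] (γ : ℝ) (r : ℕ)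
    (hki : k ≤ i) (hτ₀ : 0 < τ) (hτ₁ : τ ≤ 1) {h : Euc N → ℝ≥0∞} (hh : CellConst k h) :
    ∫⁻ x, h x * cellDens γ r ν i x ^ τ ≤
      ((2 * r + 1 : ℝ≥0∞) ^ N * twoPow (-((i - k) * (N - γ)))) ^ τ *
        ∫⁻ x, h x * cellDens γ r ν k x ^ τ := by
  have hmeas : Measurable fun x => cellDens γ r ν i x ^ τ :=
    (cellConst_cellDens γ r ν i).measurable.pow_const τ
  calc ∫⁻ x, h x * cellDens γ r ν i x ^ τ
      = twoPow (k * N) * ∫⁻ x, h x * ∫⁻ z in cellBlock 0 k x, cellDens γ r ν i z ^ τ := by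
        rw [lintegral_cellConst_mul_setLIntegral volume hmeas hh, ← mul_assoc,
          twoPow_mul_twoPow_neg, one_mul]
    _ = ∫⁻ x, h x * (twoPow (k * N) * ∫⁻ z in cellBlock 0 k x, cellDens γ r ν i z ^ τ) := by
        rw [← lintegral_const_mul' _ _ (twoPow_ne_top _)]
        simp only [mul_left_comm]
    _ ≤ ∫⁻ x, h x * (((2 * r + 1 : ℝ≥0∞) ^ N * twoPow (-((i - k) * (N - γ)))) ^ τ *
          cellDens γ r ν k x ^ τ) := by
        exact lintegral_mono fun x =>
          mul_le_mul_right (average_cellDens_rpow_le ν γ r hki hτ₀ hτ₁ x) (h x)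
    _ = _ := by
        rw [← lintegral_const_mul _ (f := fun x => h x * cellDens γ r ν k x ^ τ)
          (hh.measurable.mul ((cellConst_cellDens γ r ν k).measurable.pow_const τ))]
        simp only [mul_left_comm]

lemma exists_sum_lintegral_mul_cellDens_rpow_le (hγ : γ < N) (hτ₀ : 0 < τ) (hτ₁ : τ ≤ 1) (r : ℕ) :
    ∃ C : ℝ≥0∞, C ≠ 0 ∧ C ≠ ⊤ ∧ ∀ (ν : Measure (Euc N)) [SFinite ν] (s : Finset ℤ) (l : ℤ)
      (h : Euc N → ℝ≥0∞), CellConst l h →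
      ∑ j ∈ s with l ≤ j, ∫⁻ x, h x * cellDens γ r ν j x ^ τ ≤
        C * ∫⁻ x, h x * cellDens γ r ν l x ^ τ := by
  set A : ℝ≥0∞ := ((2 * r + 1 : ℝ≥0∞) ^ N) ^ τ
  set S : ℝ≥0∞ := ∑' n : ℕ, twoPow (-(n * ((N - γ) * τ)))
  have hA : A ≠ ⊤ := ENNReal.rpow_ne_top_of_nonneg hτ₀.le (by finiteness)
  have hS : S ≠ ⊤ := tsum_twoPow_ne_top (mul_pos (sub_pos.2 hγ) hτ₀)
  have hS₀ : S ≠ 0 := fun h => twoPow_ne_zero _ (ENNReal.tsum_eq_zero.1 h 0)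
  refine ⟨A * S, mul_ne_zero (by simp [A, hτ₀.le]) hS₀, ENNReal.mul_ne_top hA hS,
    fun ν _ s l h hh => ?_⟩
  set I := ∫⁻ x, h x * cellDens γ r ν l x ^ τ
  calc ∑ j ∈ s with l ≤ j, ∫⁻ x, h x * cellDens γ r ν j x ^ τ
      ≤ ∑ j ∈ s with l ≤ j, A * twoPow (-((j - l).toNat * ((N - γ) * τ))) * I := by
        refine Finset.sum_le_sum fun j hj => ?_
        have hlj : l ≤ j := (Finset.mem_filter.1 hj).2
        have hcast : ((j - l).toNat : ℝ) = j - l := by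
          exact_mod_cast congrArg (Int.cast : ℤ → ℝ) (Int.toNat_of_nonneg (sub_nonneg.2 hlj))
        refine (lintegral_mul_cellDens_rpow_le ν γ r hlj hτ₀ hτ₁ hh).trans_eq ?_
        rw [ENNReal.mul_rpow_of_nonneg _ _ hτ₀.le, twoPow_rpow, hcast, neg_mul,
          mul_assoc ((j : ℝ) - l)]
    _ = A * (∑ j ∈ s with l ≤ j, twoPow (-((j - l).toNat * ((N - γ) * τ)))) * I := by
        rw [Finset.mul_sum, Finset.sum_mul]
    _ ≤ A * S * I := by gcongr; exact sum_filter_le_toNat_le_tsum s l _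

lemma exists_sum_lintegral_indicator_cellDens_le (hγ : γ < N) (hτ₀ : 0 < τ) (hτ₁ : τ ≤ 1) (r : ℕ) :
    ∃ C : ℝ≥0∞, C ≠ 0 ∧ C ≠ ⊤ ∧ ∀ (ν : Measure (Euc N)) [SFinite ν] (s : Finset ℤ) (m : ℕ)
      (G : ℤ → Set (Euc N)) (_ : ∀ j, CellConst j (· ∈ G j)) (l : ℤ) (b : ℤ → Euc N → ℝ≥0∞)
      (_ : ∀ j, b j = (G j).indicator fun x => cellDens γ r ν j x ^ τ),
      ∑ j ∈ s with l ≤ j, ∫⁻ x, (∑ i ∈ s with i ≤ l, b i x) ^ m * b l x * b j x ≤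
        C * ∫⁻ x, (∑ i ∈ s with i ≤ l, b i x) ^ m * b l x * b l x := by
  obtain ⟨C, hC₀, hC, hdecay⟩ :=
    exists_sum_lintegral_mul_cellDens_rpow_le (N := N) hγ hτ₀ hτ₁ r
  refine ⟨C, hC₀, hC, fun ν _ s m G hG l b hb => ?_⟩
  have hbc : ∀ i, CellConst i (b i) := fun i => hb i ▸
    ((cellConst_cellDens γ r ν i).comp (· ^ τ)).indicator (hG i)
  have hT : CellConst l fun x => ∑ i ∈ s with i ≤ l, b i x :=
    CellConst.sum fun i hi => (hbc i).mono (Finset.mem_filter.1 hi).2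
  calc _ ≤ ∑ j ∈ s with l ≤ j, ∫⁻ x, (∑ i ∈ s with i ≤ l, b i x) ^ m * b l x *
        cellDens γ r ν j x ^ τ := by
        gcongr with j _ x
        rw [hb j]
        exact indicator_le_self _ _ _
    _ ≤ C * ∫⁻ x, (∑ i ∈ s with i ≤ l, b i x) ^ m * b l x * cellDens γ r ν l x ^ τ :=
        hdecay ν s l _ ((hT.comp (· ^ m)).map₂ (· * ·) (hbc l))
    _ = _ := by
        congr 1
        refine lintegral_congr fun x => ?_
        by_cases hx : x ∈ G l <;> simp [hb l, hx]

lemma exists_nat_rpow_div_pow_eq {s : ℝ} (hs : 0 < s) (q : ℝ) : ∃ (m : ℕ) (τ : ℝ), 0 < τ ∧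
    τ ≤ 1 ∧ τ * q ≤ s ∧ ∀ a : ℝ≥0∞, (a ^ τ) ^ (m + 2) = a ^ s := by
  obtain ⟨m, hm⟩ := exists_nat_ge (max s q)
  refine ⟨m, s / (m + 2 : ℕ), by positivity, ?_, ?_, fun a => ?_⟩
  · rw [div_le_one (by positivity)]
    push_cast; linarith [le_max_left s q]
  · rw [div_mul_eq_mul_div, div_le_iff₀ (by positivity)]
    gcongr
    push_cast; linarith [le_max_right s q]
  · rw [← ENNReal.rpow_natCast, ← ENNReal.rpow_mul, div_mul_cancel₀ _ (by positivity)]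

lemma exists_lintegral_sum_cellDens_rpow_le {σ q : ℝ} (hγ : γ < N) (hσ : 0 < σ) (hq : 0 < q)
    (r : ℕ) : ∃ C : ℝ≥0∞, C ≠ ⊤ ∧ ∀ (ν : Measure (Euc N)) [SFinite ν] (s : Finset ℤ),
      ∫⁻ x, (∑ j ∈ s, cellDens γ r ν j x ^ σ) ^ q ≤
        C * ∑ j ∈ s, ∫⁻ x, cellDens γ r ν j x ^ (σ * q) := by
  obtain ⟨m, τ, hτ₀, hτ₁, hτq, hpow⟩ := exists_nat_rpow_div_pow_eq (mul_pos hσ hq) q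
  obtain ⟨C, hC₀, hC, htail⟩ :=
    exists_sum_lintegral_indicator_cellDens_le (N := N) hγ hτ₀ hτ₁ r
  obtain ⟨B, -, hB, hsum⟩ := exists_lintegral_sum_pow_le_of_tail_le (ι := ℤ)
    (P := (volume : Measure (Euc N))) m hC₀ hC
  have hτσ : τ / σ ≤ 1 := (div_le_one hσ).2 (le_of_mul_le_mul_right hτq hq)
  refine ⟨B, hB, fun ν _ s => ?_⟩
  have hpt : ∀ x, (∑ j ∈ s, cellDens γ r ν j x ^ σ) ^ q ≤
      (∑ j ∈ s, cellDens γ r ν j x ^ τ) ^ (m + 2) := fun x => by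
    set S := ∑ j ∈ s, cellDens γ r ν j x ^ σ
    calc S ^ q = (S ^ (τ / σ)) ^ (m + 2) := by
          rw [div_eq_inv_mul, ENNReal.rpow_mul, hpow, ← ENNReal.rpow_mul,
            inv_mul_cancel_left₀ hσ.ne']
      _ ≤ (∑ j ∈ s, (cellDens γ r ν j x ^ σ) ^ (τ / σ)) ^ (m + 2) := by
          gcongr; exact rpow_sum_le_sum_rpow _ _ (by positivity) hτσ
      _ = _ := by simp only [← ENNReal.rpow_mul, mul_div_cancel₀ _ hσ.ne']
  refine (lintegral_mono hpt).trans ?_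
  simpa only [hpow] using hsum s (fun j x => cellDens γ r ν j x ^ τ)
    (fun j => (cellConst_cellDens γ r ν j).measurable.pow_const τ) fun l _ =>
      htail ν s m (fun _ => univ) (fun j => CellConst.const j _) l _
        fun j => (indicator_univ _).symm

lemma exists_sum_lintegral_indicator_cellDens_rpow_le_sup {s : ℝ} (hγ : γ < N) (hs : 0 < s) :
    ∃ C : ℝ≥0∞, C ≠ ⊤ ∧ ∀ (ν : Measure (Euc N)) [SFinite ν] (I : Finset ℤ) (G : ℤ → Set (Euc N)),
      (∀ j, CellConst j (· ∈ G j)) → ∀ M : Euc N → ℝ≥0∞,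
      (∀ j ∈ I, ∀ x ∈ G j, cellDens γ 0 ν j x ≤ M x) →
      ∑ j ∈ I, ∫⁻ x, (G j).indicator (fun x => cellDens γ 0 ν j x ^ s) x ≤
        C * ∫⁻ x, M x ^ s := by
  obtain ⟨m, τ, hτ₀, hτ₁, -, hpow⟩ := exists_nat_rpow_div_pow_eq hs 0
  obtain ⟨C, hC₀, hC, htail⟩ :=
    exists_sum_lintegral_indicator_cellDens_le (N := N) hγ hτ₀ hτ₁ 0
  obtain ⟨B, hB, hsup⟩ := exists_sum_lintegral_pow_le_sup_of_tail_le (ι := ℤ)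
    (P := (volume : Measure (Euc N))) m hC₀ hC
  refine ⟨B, hB, fun ν _ I G hG M hM => ?_⟩
  have hind : ∀ j x, (G j).indicator (fun x => cellDens γ 0 ν j x ^ s) x =
      (G j).indicator (fun x => cellDens γ 0 ν j x ^ τ) x ^ (m + 2) := fun j x => by
    by_cases hx : x ∈ G j <;> simp [hx, hpow]
  simp only [hind, ← hpow (M _)]
  refine hsup I _ (fun j => (((cellConst_cellDens γ 0 ν j).comp (· ^ τ)).indicator
    (hG j)).measurable) (fun l _ => htail ν I m G hG l _ fun _ => rfl) (M · ^ τ) fun j hj x => ?_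
  exact indicator_le' (fun x hx => ENNReal.rpow_le_rpow (hM j hj x hx) hτ₀.le)
    (fun _ _ => zero_le) x

end Carleson

/-! ### Potentials and their dyadic models -/

section Potentials

variable {X : Type*} [PseudoMetricSpace X] [MeasurableSpace X] {γ σ : ℝ}

/-- The potential `∫_0^∞ (ν(B_ρ(x)) / ρ ^ γ) ^ σ dρ / ρ`. For `γ = N - α p` and `σ = 1 / (p - 1)` it
is the Wolff potential `W_{α,p}`, and for `γ = N - β` and `σ = 1` the Riesz potential `I_β`. -/
def pot (γ σ : ℝ) (ν : Measure X) (x : X) : ℝ≥0∞ :=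
  ∫⁻ ρ in Ioi (0 : ℝ), (ν (ball x ρ) / ENNReal.ofReal (ρ ^ γ)) ^ σ / ENNReal.ofReal ρ

/-- The normalized mass `2 ^ (k γ) ν(B)` of the ball `B` of radius `2 ^ (-k)` around `x`, the
counterpart of `cellDens` for balls. -/
def ballDens (γ : ℝ) (ν : Measure X) (k : ℤ) (x : X) : ℝ≥0∞ :=
  ν (ball x ((2 : ℝ) ^ (-k))) * twoPow (k * γ)

lemma setOf_pos_and_ofReal_lt_top : {ρ : ℝ | 0 < ρ ∧ ENNReal.ofReal ρ < ⊤} = Ioi 0 := by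
  ext ρ; simp

lemma wolff_top_eq_pot {N : ℕ} (α p : ℝ) (ν : Measure (Euc N)) :
    wolff α p ⊤ ν = pot (N - α * p) (1 / (p - 1)) ν := by
  ext x; simp only [wolff, pot, setOf_pos_and_ofReal_lt_top]

lemma rieszPot_top_eq_pot {N : ℕ} (β : ℝ) (ν : Measure (Euc N)) :
    rieszPot β ⊤ ν = pot (N - β) 1 ν := by
  ext x; simp only [rieszPot, pot, setOf_pos_and_ofReal_lt_top, ENNReal.rpow_one]

lemma measurable_measure_ball [SecondCountableTopology X] [OpensMeasurableSpace X] (ν : Measure X)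
    [SFinite ν] : Measurable fun z : X × ℝ => ν (ball z.1 z.2) := by
  have hball : MeasurableSet {w : (X × ℝ) × X | dist w.2 w.1.1 < w.1.2} :=
    measurableSet_lt (by fun_prop) (by fun_prop)
  exact measurable_measure_prodMk_left hball

lemma measurable_pot [SecondCountableTopology X] [OpensMeasurableSpace X] (γ σ : ℝ)
    (ν : Measure X) [SFinite ν] : Measurable (pot γ σ ν) := by
  refine Measurable.lintegral_prod_right' (f := fun z : X × ℝ =>
    (ν (ball z.1 z.2) / ENNReal.ofReal (z.2 ^ γ)) ^ σ / ENNReal.ofReal z.2) ?_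
  exact (((measurable_measure_ball ν).div (by fun_prop)).pow_const σ).div (by fun_prop)

lemma pot_mono_measure (hσ : 0 ≤ σ) {ν ν' : Measure X} (h : ν ≤ ν') (x : X) :
    pot γ σ ν x ≤ pot γ σ ν' x := by
  unfold pot; gcongr

lemma Ioi_zero_eq_iUnion_Ioc_zpow : Ioi (0 : ℝ) = ⋃ k : ℤ, Ioc ((2 : ℝ) ^ k) (2 ^ (k + 1)) := by
  ext ρ
  simp only [mem_Ioi, mem_iUnion]
  exact ⟨fun h => exists_mem_Ioc_zpow h one_lt_two,
    fun ⟨k, hk⟩ => (zpow_pos two_pos k).trans hk.1⟩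

lemma pot_eq_tsum (γ σ : ℝ) (ν : Measure X) (x : X) :
    pot γ σ ν x = ∑' k : ℤ, ∫⁻ ρ in Ioc ((2 : ℝ) ^ k) (2 ^ (k + 1)),
      (ν (ball x ρ) / ENNReal.ofReal (ρ ^ γ)) ^ σ / ENNReal.ofReal ρ := by
  have hmono : Monotone fun k : ℤ => (2 : ℝ) ^ k := fun a b h => zpow_le_zpow_right₀ one_le_two h
  rw [pot, Ioi_zero_eq_iUnion_Ioc_zpow]
  exact lintegral_iUnion (fun _ => measurableSet_Ioc) hmono.pairwise_disjoint_on_Ioc_succ _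

lemma volume_Ioc_zpow (k : ℤ) : volume (Ioc ((2 : ℝ) ^ k) (2 ^ (k + 1))) = twoPow k := by
  rw [Real.volume_Ioc, twoPow_intCast, zpow_add_one₀ two_ne_zero, mul_two, add_sub_cancel_right]

lemma setLIntegral_Ioc_zpow_le (hγ : 0 ≤ γ) (hσ : 0 ≤ σ) (ν : Measure X) (x : X) (k : ℤ) :
    ∫⁻ ρ in Ioc ((2 : ℝ) ^ k) (2 ^ (k + 1)),
      (ν (ball x ρ) / ENNReal.ofReal (ρ ^ γ)) ^ σ / ENNReal.ofReal ρ ≤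
    twoPow (γ * σ) * ballDens γ ν (-(k + 1)) x ^ σ := by
  have : (0 : ℝ) < 2 ^ k := by positivity
  have hscale : ν (ball x (2 ^ (k + 1))) / twoPow (k * γ) =
      twoPow γ * ballDens γ ν (-(k + 1)) x := by
    rw [ballDens, neg_neg, div_eq_mul_inv, ← twoPow_neg, mul_left_comm, ← twoPow_add]
    push_cast; ring_nf
  calc _ ≤ ∫⁻ _ in Ioc ((2 : ℝ) ^ k) (2 ^ (k + 1)),
        (ν (ball x (2 ^ (k + 1))) / twoPow (k * γ)) ^ σ / twoPow k := by
        refine setLIntegral_mono' measurableSet_Ioc fun _ hρ => ?_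
        rw [twoPow_intCast_mul, twoPow_intCast]
        gcongr
        exacts [hρ.2, hρ.1.le, hρ.1.le]
    _ = (ν (ball x (2 ^ (k + 1))) / twoPow (k * γ)) ^ σ := by
        rw [setLIntegral_const, volume_Ioc_zpow,
          ENNReal.div_mul_cancel (twoPow_ne_zero _) (twoPow_ne_top _)]
    _ = _ := by rw [hscale, ENNReal.mul_rpow_of_nonneg _ _ hσ, twoPow_rpow]

lemma ballDens_rpow_le_setLIntegral (hγ : 0 ≤ γ) (hσ : 0 ≤ σ) (ν : Measure X) (x : X) (k : ℤ) :
    ballDens γ ν (-k) x ^ σ ≤ 2 * twoPow (γ * σ) * ∫⁻ ρ in Ioc ((2 : ℝ) ^ k) (2 ^ (k + 1)),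
      (ν (ball x ρ) / ENNReal.ofReal (ρ ^ γ)) ^ σ / ENNReal.ofReal ρ := by
  have h2k : (0 : ℝ) < 2 ^ k := by positivity
  have hscale : ballDens γ ν (-k) x =
      twoPow γ * (ν (ball x (2 ^ k)) / twoPow ((k + 1 : ℤ) * γ)) := by
    rw [ballDens, neg_neg, div_eq_mul_inv, ← twoPow_neg, mul_left_comm, ← twoPow_add]
    push_cast; ring_nf
  have hhalf : 2 * ((twoPow (k + 1 : ℤ))⁻¹ * twoPow k) = 1 := by
    rw [← twoPow_neg, ← twoPow_add, show (2 : ℝ≥0∞) = twoPow 1 by simp [twoPow], ← twoPow_add]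
    push_cast; ring_nf; exact twoPow_zero
  calc ballDens γ ν (-k) x ^ σ
      = 2 * twoPow (γ * σ) * ((ν (ball x (2 ^ k)) / twoPow ((k + 1 : ℤ) * γ)) ^ σ /
          twoPow (k + 1 : ℤ) * twoPow k) := by
        rw [hscale, ENNReal.mul_rpow_of_nonneg _ _ hσ, twoPow_rpow]
        generalize (ν (ball x (2 ^ k)) / twoPow ((k + 1 : ℤ) * γ)) ^ σ = d
        rw [← one_mul (_ * d), ← hhalf, div_eq_mul_inv]
        ring
    _ ≤ _ := by
        rw [← volume_Ioc_zpow k, ← setLIntegral_const]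
        gcongr 2 * twoPow (γ * σ) * ?_
        refine setLIntegral_mono' measurableSet_Ioc fun ρ hρ => ?_
        rw [twoPow_intCast_mul, twoPow_intCast]
        have := h2k.trans hρ.1
        gcongr
        exacts [hρ.1.le, hρ.2, hρ.2]

lemma pot_le_tsum_ballDens (hγ : 0 ≤ γ) (hσ : 0 ≤ σ) (ν : Measure X) (x : X) :
    pot γ σ ν x ≤ twoPow (γ * σ) * ∑' k : ℤ, ballDens γ ν k x ^ σ := by
  rw [pot_eq_tsum, ← ENNReal.tsum_mul_left]
  refine (ENNReal.tsum_le_tsum fun k => setLIntegral_Ioc_zpow_le hγ hσ ν x k).trans_eq ?_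
  exact ((Equiv.addRight (1 : ℤ)).trans (Equiv.neg ℤ)).tsum_eq
    fun k => twoPow (γ * σ) * ballDens γ ν k x ^ σ

lemma tsum_ballDens_le_pot (hγ : 0 ≤ γ) (hσ : 0 ≤ σ) (ν : Measure X) (x : X) :
    ∑' k : ℤ, ballDens γ ν k x ^ σ ≤ 2 * twoPow (γ * σ) * pot γ σ ν x := by
  rw [pot_eq_tsum, ← ENNReal.tsum_mul_left, ← (Equiv.neg ℤ).tsum_eq]
  exact ENNReal.tsum_le_tsum fun k => ballDens_rpow_le_setLIntegral hγ hσ ν x k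

lemma ballDens_rpow_le_pot (hγ : 0 ≤ γ) (hσ : 0 ≤ σ) (ν : Measure X) (k : ℤ) (x : X) :
    ballDens γ ν k x ^ σ ≤ 2 * twoPow (γ * σ) * pot γ σ ν x :=
  (ENNReal.le_tsum (f := fun k => ballDens γ ν k x ^ σ) k).trans (tsum_ballDens_le_pot hγ hσ ν x)

end Potentials

section CellPotentials

variable {N : ℕ} {γ σ : ℝ}

lemma abs_floor_sub_floor_le_one {a b : ℝ} (h : |a - b| < 1) : |⌊a⌋ - ⌊b⌋| ≤ 1 := by
  obtain ⟨hlo, hhi⟩ := abs_lt.1 h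
  have ha : ⌊a⌋ ≤ ⌊b⌋ + 1 := by
    rw [← Int.floor_add_one]; exact Int.floor_le_floor (by linarith)
  have hb : ⌊b⌋ ≤ ⌊a⌋ + 1 := by
    rw [← Int.floor_add_one]; exact Int.floor_le_floor (by linarith)
  rw [abs_le]
  constructor <;> linarith

lemma ball_subset_cellBlock_one (k : ℤ) (x : Euc N) :
    ball x ((2 : ℝ) ^ (-k)) ⊆ cellBlock 1 k x := by
  intro y hy i
  have h2 : (0 : ℝ) < 2 ^ k := by positivity
  have hcoord : |y i - x i| < (2 : ℝ) ^ (-k) :=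
    lt_of_le_of_lt (by simpa [dist_eq_norm] using PiLp.norm_apply_le (y - x) i) (mem_ball.1 hy)
  rw [zpow_neg, ← one_div, lt_div_iff₀ h2] at hcoord
  refine abs_floor_sub_floor_le_one ?_
  rwa [← sub_mul, abs_mul, abs_of_pos h2]

lemma norm_le_natCast_mul {c : ℝ} {z : Euc N} (hz : ∀ i, ‖z i‖ ≤ c) (hc : 0 ≤ c) :
    ‖z‖ ≤ N * c := by
  rw [EuclideanSpace.norm_eq]
  refine Real.sqrt_le_iff.2 ⟨by positivity, ?_⟩
  calc ∑ i, ‖z i‖ ^ 2 ≤ ∑ _i : Fin N, c ^ 2 := by gcongr with i; exact hz i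
    _ = N * c ^ 2 := by simp
    _ ≤ (N : ℝ) ^ 2 * c ^ 2 := by gcongr; exact_mod_cast Nat.le_self_pow two_ne_zero N
    _ = (N * c) ^ 2 := by ring

lemma cellBlock_zero_subset_ball (k : ℤ) (x : Euc N) :
    cellBlock 0 k x ⊆ ball x ((2 : ℝ) ^ (-(k - N))) := by
  intro y hy
  have h2 : (0 : ℝ) < 2 ^ k := by positivity
  have hcoord : ∀ i, ‖(y - x) i‖ ≤ (2 : ℝ) ^ (-k) := fun i => by
    have h := Int.abs_sub_lt_one_of_floor_eq_floor (congrFun (mem_cellBlock_zero.1 hy) i)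
    rw [← sub_mul, abs_mul, abs_of_pos h2] at h
    rw [zpow_neg, ← one_div, le_div_iff₀ h2]
    simpa using h.le
  rw [mem_ball, dist_eq_norm]
  refine (norm_le_natCast_mul hcoord (by positivity)).trans_lt ?_
  rw [neg_sub, sub_eq_add_neg, zpow_add₀ two_ne_zero, zpow_natCast]
  gcongr
  exact_mod_cast Nat.lt_two_pow_self

lemma ballDens_le_cellDens_one (γ : ℝ) (ν : Measure (Euc N)) (k : ℤ) (x : Euc N) :
    ballDens γ ν k x ≤ cellDens γ 1 ν k x := by
  unfold ballDens cellDens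
  gcongr
  exact ball_subset_cellBlock_one k x

lemma cellDens_zero_le_ballDens (γ : ℝ) (ν : Measure (Euc N)) (k : ℤ) (x : Euc N) :
    cellDens γ 0 ν k x ≤ twoPow (N * γ) * ballDens γ ν (k - N) x := by
  have hexp : N * γ + (k - N : ℤ) * γ = k * γ := by push_cast; ring
  unfold ballDens cellDens
  rw [mul_left_comm, ← twoPow_add, hexp]
  gcongr
  exact cellBlock_zero_subset_ball k x

lemma pot_le_tsum_cellDens (hγ : 0 ≤ γ) (hσ : 0 ≤ σ) (ν : Measure (Euc N)) (x : Euc N) :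
    pot γ σ ν x ≤ twoPow (γ * σ) * ∑' k : ℤ, cellDens γ 1 ν k x ^ σ := by
  refine (pot_le_tsum_ballDens hγ hσ ν x).trans ?_
  gcongr with k
  exact ballDens_le_cellDens_one γ ν k x

/-- The constant bounding the dyadic sum over cells by the potential. -/
def potConst (N : ℕ) (γ σ : ℝ) : ℝ≥0∞ := twoPow (N * γ) ^ σ * (2 * twoPow (γ * σ))

lemma potConst_ne_top (N : ℕ) (γ : ℝ) (hσ : 0 ≤ σ) : potConst N γ σ ≠ ⊤ := by
  have h₁ := twoPow_ne_top (γ * σ)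
  have h₂ := ENNReal.rpow_ne_top_of_nonneg hσ (twoPow_ne_top (N * γ))
  unfold potConst
  finiteness

lemma tsum_cellDens_le_pot (hγ : 0 ≤ γ) (hσ : 0 ≤ σ) (ν : Measure (Euc N)) (x : Euc N) :
    ∑' k : ℤ, cellDens γ 0 ν k x ^ σ ≤ potConst N γ σ * pot γ σ ν x := by
  calc _ ≤ ∑' k : ℤ, (twoPow (N * γ) * ballDens γ ν (k - N) x) ^ σ := by
        gcongr with k; exact cellDens_zero_le_ballDens γ ν k x
    _ = twoPow (N * γ) ^ σ * ∑' k : ℤ, ballDens γ ν (k - N) x ^ σ := by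
        simp_rw [ENNReal.mul_rpow_of_nonneg _ _ hσ]
        rw [ENNReal.tsum_mul_left]
    _ = twoPow (N * γ) ^ σ * ∑' k : ℤ, ballDens γ ν k x ^ σ := by
        rw [← (Equiv.subRight (N : ℤ)).tsum_eq fun k => ballDens γ ν k x ^ σ]; rfl
    _ ≤ _ := by
        rw [potConst, mul_assoc]
        gcongr
        exact tsum_ballDens_le_pot hγ hσ ν x

lemma cellDens_rpow_le_pot (hγ : 0 ≤ γ) (hσ : 0 ≤ σ) (ν : Measure (Euc N)) (k : ℤ) (x : Euc N) :
    cellDens γ 0 ν k x ^ σ ≤ potConst N γ σ * pot γ σ ν x :=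
  (ENNReal.le_tsum k).trans (tsum_cellDens_le_pot hγ hσ ν x)

end CellPotentials

/-! ### Dyadic energies -/

section Energy

variable {N : ℕ} {γ s : ℝ}

/-- The part carried by the generations in `I` of the dyadic energy `∑ₖ ∫ (2 ^ (k γ) ν(Q)) ^ s`,
the discrete analogue of `∫ (I_β[ν]) ^ s` with `β = N - γ`. -/
def dyadicEnergy (γ s : ℝ) (ν : Measure (Euc N)) (I : Finset ℤ) : ℝ≥0∞ :=
  ∑ k ∈ I, ∫⁻ x, cellDens γ 0 ν k x ^ s

/-- The translation by the integer vector `e - 1` in units of the side length `2 ^ (-k)`. -/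
def cellShift (k : ℤ) (e : Fin N → Fin 3) : Euc N :=
  WithLp.toLp 2 fun i => (((e i : ℕ) : ℤ) - 1 : ℤ) * (2 : ℝ) ^ (-k)

lemma cellIndex_add_cellShift (k : ℤ) (e : Fin N → Fin 3) (x : Euc N) (i : Fin N) :
    cellIndex k (x + cellShift k e) i = cellIndex k x i + (((e i : ℕ) : ℤ) - 1) := by
  have hcoord : (x + cellShift k e) i = x i + (((e i : ℕ) : ℤ) - 1 : ℤ) * (2 : ℝ) ^ (-k) := rfl
  rw [cellIndex, hcoord, add_mul, mul_assoc, ← zpow_add₀ two_ne_zero, neg_add_cancel, zpow_zero,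
    mul_one, Int.floor_add_intCast, cellIndex]

lemma cellBlock_one_subset_iUnion (k : ℤ) (x : Euc N) :
    cellBlock 1 k x ⊆ ⋃ e ∈ (Finset.univ : Finset (Fin N → Fin 3)),
      cellBlock 0 k (x + cellShift k e) := by
  intro y hy
  have hdist : ∀ i, -1 ≤ cellIndex k y i - cellIndex k x i ∧
      cellIndex k y i - cellIndex k x i ≤ 1 := fun i => by simpa using abs_le.1 (hy i)
  simp only [Finset.mem_univ, iUnion_true, mem_iUnion]
  refine ⟨fun i => ⟨(cellIndex k y i - cellIndex k x i + 1).toNat, by have := hdist i; lia⟩,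
    mem_cellBlock_zero.2 <| funext fun i => ?_⟩
  rw [cellIndex_add_cellShift]
  have := hdist i
  simp only
  lia

lemma lintegral_cellDens_one_rpow_le (ν : Measure (Euc N)) (γ : ℝ) (hs : 1 ≤ s) (k : ℤ) :
    ∫⁻ x, cellDens γ 1 ν k x ^ s ≤ ((3 : ℝ≥0∞) ^ N) ^ s * ∫⁻ x, cellDens γ 0 ν k x ^ s := by
  have hcard : ((Finset.univ : Finset (Fin N → Fin 3)).card : ℝ≥0∞) = 3 ^ N := by simp
  have hmeas : ∀ e : Fin N → Fin 3, Measurable fun x => cellDens γ 0 ν k (x + cellShift k e) ^ s :=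
    fun e => ((cellConst_cellDens γ 0 ν k).measurable.comp (measurable_add_const _)).pow_const s
  have hpt : ∀ x, cellDens γ 1 ν k x ^ s ≤ ((3 : ℝ≥0∞) ^ N) ^ (s - 1) *
      ∑ e : Fin N → Fin 3, cellDens γ 0 ν k (x + cellShift k e) ^ s := fun x => by
    rw [← hcard]
    refine le_trans ?_ (ENNReal.rpow_sum_le_const_mul_sum_rpow _ _ hs)
    refine ENNReal.rpow_le_rpow ?_ (by linarith)
    simp only [cellDens]
    rw [← Finset.sum_mul]
    gcongr
    exact (measure_mono (cellBlock_one_subset_iUnion k x)).trans (measure_biUnion_finset_le _ _)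
  calc ∫⁻ x, cellDens γ 1 ν k x ^ s
      ≤ ((3 : ℝ≥0∞) ^ N) ^ (s - 1) *
          ∑ e : Fin N → Fin 3, ∫⁻ x, cellDens γ 0 ν k (x + cellShift k e) ^ s := by
        rw [← lintegral_finsetSum _ fun e _ => hmeas e,
          ← lintegral_const_mul _ (Finset.measurable_fun_sum _ fun e _ => hmeas e)]
        exact lintegral_mono hpt
    _ = ((3 : ℝ≥0∞) ^ N) ^ (s - 1) * ((3 ^ N) ^ (1 : ℝ) * ∫⁻ x, cellDens γ 0 ν k x ^ s) := by
        simp only [lintegral_add_right_eq_self (fun x => cellDens γ 0 ν k x ^ s), Finset.sum_const,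
          nsmul_eq_mul, hcard, ENNReal.rpow_one]
    _ = _ := by
        rw [← mul_assoc, ← ENNReal.rpow_add_of_nonneg _ _ (by linarith) zero_le_one,
          sub_add_cancel]

lemma tsum_rpow_eq_iSup {ι : Type*} (f : ι → ℝ≥0∞) {q : ℝ} (hq : 0 < q) :
    (∑' i, f i) ^ q = ⨆ I : Finset ι, (∑ i ∈ I, f i) ^ q := by
  rw [ENNReal.tsum_eq_iSup_sum]
  exact (ENNReal.orderIsoRpow q hq).map_iSup _

lemma lintegral_tsum_rpow_le_of_forall_sum {ι Ω : Type*} [Countable ι] [MeasurableSpace Ω]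
    (P : Measure Ω) {f : ι → Ω → ℝ≥0∞} (hf : ∀ i, Measurable (f i)) {q : ℝ} (hq : 0 < q)
    {B : ℝ≥0∞} (hB : ∀ I : Finset ι, ∫⁻ x, (∑ i ∈ I, f i x) ^ q ∂P ≤ B) :
    ∫⁻ x, (∑' i, f i x) ^ q ∂P ≤ B := by
  simp only [tsum_rpow_eq_iSup _ hq]
  rw [lintegral_iSup_directed fun I => by fun_prop]
  · exact iSup_le hB
  · exact directed_of_isDirected_le fun I J hIJ x =>
      ENNReal.rpow_le_rpow (Finset.sum_le_sum_of_subset hIJ) hq.le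

lemma exists_lintegral_pot_rpow_le {σ q : ℝ} (h0γ : 0 ≤ γ) (hγ : γ < N) (hσ : 0 < σ) (hq : 0 < q)
    (hσq : 1 ≤ σ * q) : ∃ C : ℝ≥0∞, C ≠ ⊤ ∧ ∀ (ν : Measure (Euc N)) [SFinite ν] (B : ℝ≥0∞),
      (∀ I, dyadicEnergy γ (σ * q) ν I ≤ B) → ∫⁻ x, pot γ σ ν x ^ q ≤ C * B := by
  obtain ⟨C, hC, hcarleson⟩ := exists_lintegral_sum_cellDens_rpow_le (N := N) hγ hσ hq 1
  have htop : twoPow (γ * σ) ^ q ≠ ⊤ := ENNReal.rpow_ne_top_of_nonneg hq.le (twoPow_ne_top _)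
  have hthree : ((3 : ℝ≥0∞) ^ N) ^ (σ * q) ≠ ⊤ :=
    ENNReal.rpow_ne_top_of_nonneg (by linarith) (by finiteness)
  refine ⟨twoPow (γ * σ) ^ q * (C * ((3 : ℝ≥0∞) ^ N) ^ (σ * q)), by finiteness, fun ν _ B hB => ?_⟩
  have hmeas : ∀ k : ℤ, Measurable fun x => cellDens γ 1 ν k x ^ σ :=
    fun k => (cellConst_cellDens γ 1 ν k).measurable.pow_const σ
  have hsum : ∀ I : Finset ℤ, ∫⁻ x, (∑ k ∈ I, cellDens γ 1 ν k x ^ σ) ^ q ≤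
      C * ((3 : ℝ≥0∞) ^ N) ^ (σ * q) * B := fun I => by
    calc _ ≤ C * ∑ k ∈ I, ((3 : ℝ≥0∞) ^ N) ^ (σ * q) * ∫⁻ x, cellDens γ 0 ν k x ^ (σ * q) := by
          refine (hcarleson ν I).trans ?_
          gcongr with k
          exact lintegral_cellDens_one_rpow_le ν γ hσq k
      _ = C * ((3 : ℝ≥0∞) ^ N) ^ (σ * q) * dyadicEnergy γ (σ * q) ν I := by
          rw [← Finset.mul_sum, dyadicEnergy, mul_assoc]
      _ ≤ _ := by gcongr; exact hB I
  calc ∫⁻ x, pot γ σ ν x ^ q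
      ≤ ∫⁻ x, twoPow (γ * σ) ^ q * (∑' k : ℤ, cellDens γ 1 ν k x ^ σ) ^ q := by
        gcongr with x
        rw [← ENNReal.mul_rpow_of_nonneg _ _ hq.le]
        gcongr
        exact pot_le_tsum_cellDens h0γ hσ.le ν x
    _ = twoPow (γ * σ) ^ q * ∫⁻ x, (∑' k : ℤ, cellDens γ 1 ν k x ^ σ) ^ q :=
        lintegral_const_mul' _ _ htop
    _ ≤ twoPow (γ * σ) ^ q * (C * ((3 : ℝ≥0∞) ^ N) ^ (σ * q) * B) := by
        gcongr
        exact lintegral_tsum_rpow_le_of_forall_sum _ hmeas hq hsum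
    _ = _ := by ring

end Energy

section Symmetry

variable {X : Type*} [PseudoMetricSpace X] [SecondCountableTopology X] [MeasurableSpace X]
  [OpensMeasurableSpace X]

lemma lintegral_withDensity_ball (ν ρ : Measure X) [SFinite ν] [SFinite ρ] {g : X → ℝ≥0∞}
    (hg : Measurable g) (r : ℝ) :
    ∫⁻ x, (ρ.withDensity g) (ball x r) ∂ν = ∫⁻ y, g y * ν (ball y r) ∂ρ := by
  have hS : MeasurableSet {w : X × X | dist w.2 w.1 < r} :=
    measurableSet_lt (by fun_prop) (by fun_prop)
  have hleft : ∀ x : X, Prod.mk x ⁻¹' {w : X × X | dist w.2 w.1 < r} = ball x r := fun _ => rfl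
  have hright : ∀ y : X, (fun x => (x, y)) ⁻¹' {w : X × X | dist w.2 w.1 < r} = ball y r :=
    fun y => by ext x; simp [dist_comm]
  simpa only [hleft, hright, Pi.one_apply, one_mul, setLIntegral_one,
    withDensity_apply _ measurableSet_ball] using
    lintegral_mul_setLIntegral_swap ν ρ hS (h := 1) measurable_one hg

lemma lintegral_mul_pot_one (γ : ℝ) (ν ρ : Measure X) [SFinite ν] [SFinite ρ] {g : X → ℝ≥0∞}
    (hg : Measurable g) :
    ∫⁻ y, g y * pot γ 1 ν y ∂ρ = ∫⁻ r in Ioi (0 : ℝ),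
      ((ENNReal.ofReal (r ^ γ))⁻¹ * (ENNReal.ofReal r)⁻¹) * ∫⁻ y, g y * ν (ball y r) ∂ρ := by
  have hmeas : Measurable fun z : X × ℝ => ((ENNReal.ofReal (z.2 ^ γ))⁻¹ *
      (ENNReal.ofReal z.2)⁻¹) * (g z.1 * ν (ball z.1 z.2)) :=
    Measurable.mul (by fun_prop) ((hg.comp measurable_fst).mul (measurable_measure_ball ν))
  have hpot : ∀ y, g y * pot γ 1 ν y = ∫⁻ r in Ioi (0 : ℝ),
      ((ENNReal.ofReal (r ^ γ))⁻¹ * (ENNReal.ofReal r)⁻¹) * (g y * ν (ball y r)) := fun y => by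
    have hball : Measurable fun r : ℝ => ν (ball y r) :=
      (measurable_measure_ball ν).comp measurable_prodMk_left
    have hterm : Measurable fun r : ℝ =>
        (ν (ball y r) / ENNReal.ofReal (r ^ γ)) ^ (1 : ℝ) / ENNReal.ofReal r :=
      ((hball.div (by fun_prop)).pow_const _).div (by fun_prop)
    rw [pot, ← lintegral_const_mul _ hterm]
    refine lintegral_congr fun r => ?_
    simp only [ENNReal.rpow_one, div_eq_mul_inv]
    ring
  simp_rw [hpot]
  rw [lintegral_lintegral_swap hmeas.aemeasurable]
  refine lintegral_congr fun r => lintegral_const_mul _ (hg.mul ?_)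
  exact (measurable_measure_ball ν).comp measurable_prodMk_right

lemma lintegral_pot_one_withDensity (γ : ℝ) (ν ρ : Measure X) [SFinite ν] [SFinite ρ]
    {g : X → ℝ≥0∞} (hg : Measurable g) :
    ∫⁻ x, pot γ 1 (ρ.withDensity g) x ∂ν = ∫⁻ y, g y * pot γ 1 ν y ∂ρ := by
  have hone := lintegral_mul_pot_one γ (ρ.withDensity g) ν measurable_one
  simp only [Pi.one_apply, one_mul, lintegral_withDensity_ball ν ρ hg] at hone
  rw [hone, lintegral_mul_pot_one γ ν ρ hg]

end Symmetry

section EnergyTesting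

variable {N : ℕ} {γ s s' : ℝ}

lemma le_rpow_mul_of_le_rpow_mul_rpow (hs : s.HolderConjugate s') {x K G : ℝ≥0∞} (hx : x ≠ ⊤)
    (h : x ≤ G ^ (1 / s') * (K * x) ^ (1 / s)) : x ≤ K ^ (s' / s) * G := by
  rcases eq_or_ne x 0 with rfl | hx₀
  · exact zero_le
  have hs₀ := hs.pos
  have hs₀' := hs.symm.pos
  have hexp : s' = 1 + s' / s := by
    have := hs.symm.mul_eq_add
    field_simp
    linarith
  have hsplit : x ^ s' = x * x ^ (s' / s) := by
    conv_lhs => rw [hexp, ENNReal.rpow_add_of_nonneg _ _ zero_le_one (by positivity),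
      ENNReal.rpow_one]
  have hpow : x * x ^ (s' / s) ≤ K ^ (s' / s) * G * x ^ (s' / s) := by
    calc x * x ^ (s' / s) ≤ (G ^ (1 / s') * (K * x) ^ (1 / s)) ^ s' :=
          hsplit ▸ ENNReal.rpow_le_rpow h hs₀'.le
      _ = G * (K * x) ^ (s' / s) := by
          rw [ENNReal.mul_rpow_of_nonneg _ _ hs₀'.le, ← ENNReal.rpow_mul, ← ENNReal.rpow_mul,
            one_div_mul_cancel hs₀'.ne', ENNReal.rpow_one, one_div_mul_eq_div]
      _ = _ := by rw [ENNReal.mul_rpow_of_nonneg _ _ (by positivity)]; ring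
  exact (ENNReal.mul_le_mul_iff_left (by simp [ENNReal.rpow_eq_zero_iff, hx₀, hx])
    (ENNReal.rpow_ne_top_of_nonneg (by positivity) hx)).1 hpow

lemma exists_measure_le_of_dyadicEnergy_le (h0γ : 0 ≤ γ) (hγ : γ < N) (hs : s.HolderConjugate s') :
    ∃ C : ℝ≥0∞, C ≠ ⊤ ∧ ∀ (ν : Measure (Euc N)) [IsFiniteMeasure ν] (B : ℝ≥0∞),
      (∀ I, dyadicEnergy γ s ν I ≤ B * ν univ) → ∀ g : Euc N → ℝ≥0∞, Measurable g →
      (∀ᵐ x ∂ν, 1 ≤ pot γ 1 (volume.withDensity g) x) →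
      ν univ ≤ (C * B) ^ (s' / s) * ∫⁻ x, g x ^ s' := by
  obtain ⟨C, hC, hpot⟩ := exists_lintegral_pot_rpow_le (σ := 1) (q := s) h0γ hγ one_pos hs.pos
    (by simpa using hs.lt.le)
  refine ⟨C, hC, fun ν _ B hB g hg hg₁ => ?_⟩
  refine le_rpow_mul_of_le_rpow_mul_rpow hs (measure_ne_top ν univ) ?_
  calc ν univ = ∫⁻ _, 1 ∂ν := lintegral_one.symm
    _ ≤ ∫⁻ x, pot γ 1 (volume.withDensity g) x ∂ν := lintegral_mono_ae hg₁
    _ = ∫⁻ y, g y * pot γ 1 ν y := lintegral_pot_one_withDensity γ ν volume hg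
    _ ≤ (∫⁻ x, g x ^ s') ^ (1 / s') * (∫⁻ x, pot γ 1 ν x ^ s) ^ (1 / s) :=
        ENNReal.lintegral_mul_le_Lp_mul_Lq _ hs.symm hg.aemeasurable
          (measurable_pot γ 1 ν).aemeasurable
    _ ≤ (∫⁻ x, g x ^ s') ^ (1 / s') * (C * B * ν univ) ^ (1 / s) := by
        have := hs.pos
        gcongr
        rw [mul_assoc]
        exact hpot ν (B * ν univ) (by simpa using hB)

end EnergyTesting

/-! ### Capacity estimates -/

section Capacity

variable {N : ℕ} {β t s s' : ℝ}

/-- The measure of compact sets is bounded by a multiple of their capacity `Cap_{I_β,t}`. -/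
def CapBounded (β t : ℝ) (ω : Measure (Euc N)) : Prop :=
  ∃ C : ℝ≥0∞, C ≠ ⊤ ∧ ∀ K, IsCompact K → ω K ≤ C * rieszCap N β t K

lemma rieszCap_mono {E F : Set (Euc N)} (h : E ⊆ F) : rieszCap N β t E ≤ rieszCap N β t F := by
  refine le_iInf fun g => le_iInf fun hg => le_iInf fun hF => ?_
  exact iInf_le_of_le g (iInf₂_le_of_le hg (fun x hx => hF x (h hx)) le_rfl)

lemma measure_le_mul_rieszCap {C : ℝ≥0∞} {ω : Measure (Euc N)} [IsLocallyFiniteMeasure ω]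
    (h : ∀ K, IsCompact K → ω K ≤ C * rieszCap N β t K) {E : Set (Euc N)} (hE : MeasurableSet E) :
    ω E ≤ C * rieszCap N β t E := by
  rw [hE.measure_eq_iSup_isCompact]
  exact iSup₂_le fun K hKE => iSup_le fun hK =>
    (h K hK).trans (mul_le_mul_right (rieszCap_mono hKE) C)

lemma pot_one_const_smul {X : Type*} [PseudoMetricSpace X] [MeasurableSpace X] (γ : ℝ)
    (ν : Measure X) {c : ℝ≥0∞} (hc : c ≠ ⊤) (x : X) : pot γ 1 (c • ν) x = c * pot γ 1 ν x := by
  rw [pot, pot, ← lintegral_const_mul' _ _ hc]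
  refine lintegral_congr fun r => ?_
  simp only [Measure.smul_apply, smul_eq_mul, ENNReal.rpow_one, div_eq_mul_inv]
  ring

lemma rieszCap_le_of_le_pot (ht : 0 ≤ t) {E : Set (Euc N)} {g : Euc N → ℝ≥0∞}
    (hg : Measurable g) {c : ℝ≥0∞} (hc₀ : c ≠ 0) (hc : c ≠ ⊤)
    (h : ∀ x ∈ E, c ≤ pot (N - β) 1 (volume.withDensity g) x) :
    rieszCap N β t E ≤ c⁻¹ ^ t * ∫⁻ x, g x ^ t := by
  have hcinv : c⁻¹ ≠ ⊤ := ENNReal.inv_ne_top.2 hc₀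
  refine iInf_le_of_le (c⁻¹ • g) (iInf₂_le_of_le (hg.const_smul _) (fun x hx => ?_) ?_)
  · rw [rieszPot_top_eq_pot, withDensity_smul _ hg, pot_one_const_smul _ _ hcinv,
      ← ENNReal.inv_mul_cancel hc₀ hc]
    gcongr
    exact h x hx
  · simp [ENNReal.mul_rpow_of_nonneg _ _ ht, lintegral_const_mul _ (hg.pow_const t)]

lemma sum_cellConst_le_pot {γ : ℝ} (hγ : 0 ≤ γ) (I : Finset ℤ) {h : ℤ → Euc N → ℝ≥0∞}
    (hh : ∀ k, CellConst k (h k)) {g : Euc N → ℝ≥0∞} (hg : ∀ k ∈ I, ∀ x, h k x ≤ g x) (x : Euc N) :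
    ∑ k ∈ I, h k x * twoPow (k * (γ - N)) ≤
      potConst N γ 1 * pot γ 1 (volume.withDensity g) x := by
  calc ∑ k ∈ I, h k x * twoPow (k * (γ - N))
      ≤ ∑ k ∈ I, cellDens γ 0 (volume.withDensity g) k x := by
        refine Finset.sum_le_sum fun k hk => ?_
        rw [cellDens, withDensity_apply _ (measurableSet_cellBlock _ _ _)]
        calc _ = h k x * volume (cellBlock 0 k x) * twoPow (k * γ) := by
              rw [volume_cellBlock_zero, mul_assoc, ← twoPow_add]; ring_nf
          _ ≤ _ := by
              gcongr
              rw [← setLIntegral_cellBlock_zero_of_cellConst (hh k)]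
              exact lintegral_mono fun y => hg k hk y
    _ ≤ ∑' k : ℤ, cellDens γ 0 (volume.withDensity g) k x := ENNReal.sum_le_tsum _
    _ ≤ _ := by simpa only [ENNReal.rpow_one] using tsum_cellDens_le_pot hγ zero_le_one _ x

lemma biSup_rpow_le_sum {ι : Type*} (I : Finset ι) (f : ι → ℝ≥0∞) (ht : 0 < t) :
    (⨆ k ∈ I, f k) ^ t ≤ ∑ k ∈ I, f k ^ t := by
  rw [← ENNReal.le_rpow_inv_iff ht]
  refine iSup₂_le fun k hk => ?_
  rw [ENNReal.le_rpow_inv_iff ht]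
  exact Finset.single_le_sum (f := fun k => f k ^ t) (fun _ _ => zero_le) hk

lemma rieszCap_le_of_sum_cellConst (hβ : β ≤ N) (ht : 0 < t) (I : Finset ℤ)
    {h : ℤ → Euc N → ℝ≥0∞} (hh : ∀ k, CellConst k (h k)) {c : ℝ≥0∞} (hc₀ : c ≠ 0) (hc : c ≠ ⊤)
    {E : Set (Euc N)} (hE : ∀ x ∈ E, c ≤ ∑ k ∈ I, h k x * twoPow (-(k * β))) :
    rieszCap N β t E ≤ (potConst N (N - β) 1 / c) ^ t * ∑ k ∈ I, ∫⁻ x, h k x ^ t := by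
  set P := potConst N (N - β) 1
  have hP₀ : P ≠ 0 := by simp [P, potConst, twoPow_ne_zero]
  have hP : P ≠ ⊤ := potConst_ne_top _ _ zero_le_one
  set g : Euc N → ℝ≥0∞ := fun x => ⨆ k ∈ I, h k x
  have hg : Measurable g := Measurable.biSup _ I.countable_toSet fun k _ => (hh k).measurable
  have hpot : ∀ x ∈ E, c / P ≤ pot (N - β) 1 (volume.withDensity g) x := fun x hx => by
    refine ENNReal.div_le_of_le_mul' ((hE x hx).trans ?_)
    simpa only [sub_sub_cancel_left, mul_neg] using sum_cellConst_le_pot (γ := N - β)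
      (by linarith) I hh (g := g) (fun k hk x => le_iSup₂_of_le k hk le_rfl) x
  have hcap := rieszCap_le_of_le_pot ht.le hg (ENNReal.div_ne_zero.2 ⟨hc₀, hP⟩)
    (ENNReal.div_ne_top hc hP₀) hpot
  rw [ENNReal.inv_div (Or.inl hP) (Or.inl hP₀)] at hcap
  refine hcap.trans ?_
  rw [← lintegral_finsetSum _ fun k _ => (hh k).measurable.pow_const t]
  gcongr with x
  exact biSup_rpow_le_sum I _ ht

lemma rieszCap_cellBlock_le (hβ : β ≤ N) (ht : 0 < t) (r : ℕ) (k : ℤ) (x : Euc N) :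
    rieszCap N β t (cellBlock r k x) ≤ potConst N (N - β) 1 ^ t * (2 * r + 1 : ℝ≥0∞) ^ N *
      twoPow (k * (β * t - N)) := by
  classical
  have hmeas := measurableSet_cellBlock r k x
  have hconst : ∀ j, CellConst j (if j = k then (cellBlock r k x).indicator fun _ => (1 : ℝ≥0∞)
      else fun _ => 0) := fun j => by
    split_ifs with hj
    · subst hj
      exact (CellConst.const j 1).indicator fun y z hyz => by
        simp only [cellBlock, mem_ofPred_eq, hyz]
    · exact CellConst.const j 0
  have hcap := rieszCap_le_of_sum_cellConst hβ ht {k} hconst (E := cellBlock r k x)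
    (twoPow_ne_zero (-(k * β))) (twoPow_ne_top _) fun y hy => by simp [hy]
  have hint : ∫⁻ y, (cellBlock r k x).indicator (fun _ => (1 : ℝ≥0∞)) y ^ t =
      volume (cellBlock r k x) := by
    rw [← lintegral_indicator_one hmeas]
    refine lintegral_congr fun y => ?_
    by_cases hy : y ∈ cellBlock r k x <;> simp [hy, ht]
  simp only [Finset.sum_singleton, if_true, hint, volume_cellBlock] at hcap
  have hexp : twoPow (k * (β * t - N)) = twoPow (k * β * t) * twoPow (-(k * N)) := by
    rw [← twoPow_add]; ring_nf
  refine hcap.trans_eq ?_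
  rw [hexp, div_eq_mul_inv, ← twoPow_neg, neg_neg, ENNReal.mul_rpow_of_nonneg _ _ ht.le,
    twoPow_rpow]
  ring

lemma rieszCap_le_of_sum_cellWeight (hβ : β ≤ N) (hs : s.HolderConjugate s') (ν : Measure (Euc N))
    (I : Finset ℤ) {G : ℤ → Set (Euc N)} (hG : ∀ k, CellConst k (· ∈ G k)) {c : ℝ≥0∞}
    (hc₀ : c ≠ 0) (hc : c ≠ ⊤) {E : Set (Euc N)}
    (hE : ∀ x ∈ E, c ≤ ∑ k ∈ I, (G k).indicator (cellWeight (N - β) s ν k) x) :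
    rieszCap N β s' E ≤ (potConst N (N - β) 1 / c) ^ s' *
      ∑ k ∈ I, ∫⁻ x, (G k).indicator (fun x => cellDens (N - β) 0 ν k x ^ s) x := by
  have hs₀' := hs.symm.pos
  have hexp : (s - 1) * s' = s := by linarith [hs.mul_eq_add]
  refine (rieszCap_le_of_sum_cellConst hβ hs₀' I
    (h := fun k => (G k).indicator fun x => cellDens (N - β) 0 ν k x ^ (s - 1))
    (fun k => ((cellConst_cellDens (N - β) 0 ν k).comp (· ^ (s - 1))).indicator (hG k))
    hc₀ hc (fun x hx => (hE x hx).trans_eq ?_)).trans_eq ?_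
  · refine Finset.sum_congr rfl fun k _ => ?_
    by_cases hk : x ∈ G k <;> simp [hk, cellWeight]
  · congr 1
    refine Finset.sum_congr rfl fun k _ => lintegral_congr fun x => ?_
    by_cases hk : x ∈ G k <;> simp [hk, ← ENNReal.rpow_mul, hexp, hs₀']

end Capacity

/-! ### The testing inequality -/

section Testing

lemma exists_two_pow_mul_le_lt {a τ : ℝ≥0∞} (ha : a ≠ ⊤) (hτ₀ : τ ≠ 0) (hτ : τ ≠ ⊤)
    (h : τ ≤ a) : ∃ i : ℕ, 2 ^ i * τ ≤ a ∧ a < 2 * (2 ^ i * τ) := by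
  have hne : a / τ ≠ ⊤ := ENNReal.div_ne_top ha hτ₀
  have hone : 1 ≤ a / τ := by
    rwa [ENNReal.le_div_iff_mul_le (Or.inl hτ₀) (Or.inl hτ), one_mul]
  obtain ⟨i, hlo, hhi⟩ : ∃ i : ℕ, 2 ^ i ≤ a / τ ∧ a / τ < 2 ^ (i + 1) := by
    lift a / τ to ℝ≥0 using hne with y
    exact_mod_cast exists_nat_pow_near (by exact_mod_cast hone) (one_lt_two (α := ℝ≥0))
  rw [ENNReal.le_div_iff_mul_le (Or.inl hτ₀) (Or.inl hτ)] at hlo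
  rw [ENNReal.div_lt_iff (Or.inl hτ₀) (Or.inl hτ), pow_succ', mul_assoc] at hhi
  exact ⟨i, hlo, hhi⟩

lemma lintegral_le_add_tsum_measure_le {Ω : Type*} [MeasurableSpace Ω] (P : Measure Ω)
    {V : Ω → ℝ≥0∞} (hV : Measurable V) (hV_top : ∀ x, V x ≠ ⊤) {τ : ℝ≥0∞} (hτ₀ : τ ≠ 0)
    (hτ : τ ≠ ⊤) :
    ∫⁻ x, V x ∂P ≤ τ * P univ + ∑' i : ℕ, 2 * (2 ^ i * τ) * P {x | 2 ^ i * τ ≤ V x} := by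
  have hlevel : ∀ i : ℕ, MeasurableSet {x | 2 ^ i * τ ≤ V x} := fun i =>
    measurableSet_le measurable_const hV
  calc ∫⁻ x, V x ∂P ≤ ∫⁻ x, (τ + ∑' i : ℕ,
        {x | 2 ^ i * τ ≤ V x}.indicator (fun _ => 2 * (2 ^ i * τ)) x) ∂P := by
        refine lintegral_mono fun x => ?_
        rcases le_or_gt (V x) τ with h | h
        · exact le_add_right h
        obtain ⟨i, hlo, hhi⟩ := exists_two_pow_mul_le_lt (hV_top x) hτ₀ hτ h.le
        refine le_add_left (le_trans ?_ (ENNReal.le_tsum i))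
        rw [indicator_of_mem (s := {x | 2 ^ i * τ ≤ V x}) hlo]
        exact hhi.le
    _ = _ := by
        rw [lintegral_add_left measurable_const, lintegral_const,
          lintegral_tsum fun i => (measurable_const.indicator (hlevel i)).aemeasurable]
        simp only [lintegral_indicator_const (hlevel _)]

variable {N : ℕ} {β s s' : ℝ}

lemma dyadicEnergy_eq_lintegral {γ : ℝ} (hs : 1 ≤ s) (ν : Measure (Euc N)) [SFinite ν]
    (I : Finset ℤ) : dyadicEnergy γ s ν I = ∫⁻ x, ∑ k ∈ I, cellWeight γ s ν k x ∂ν := by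
  rw [lintegral_finsetSum _ fun k _ => (cellConst_cellWeight γ s ν k).measurable]
  exact Finset.sum_congr rfl fun k _ => by
    simpa using lintegral_mul_cellDens_rpow ν (γ := γ) hs (CellConst.const k (1 : ℝ≥0∞))

lemma dyadicEnergy_ne_top {γ : ℝ} (hs : 1 ≤ s) (ν : Measure (Euc N)) [IsFiniteMeasure ν]
    (I : Finset ℤ) : dyadicEnergy γ s ν I ≠ ⊤ := by
  set A : ℝ≥0∞ := ∑ k ∈ I, (ν univ * twoPow (k * γ)) ^ (s - 1) * twoPow (k * (γ - N))
  have hA : A ≠ ⊤ := ENNReal.sum_ne_top.2 fun k _ => ENNReal.mul_ne_top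
    (ENNReal.rpow_ne_top_of_nonneg (by linarith)
      (ENNReal.mul_ne_top (measure_ne_top _ _) (twoPow_ne_top _))) (twoPow_ne_top _)
  refine ne_top_of_le_ne_top (ENNReal.mul_ne_top hA (measure_ne_top ν univ)) ?_
  rw [dyadicEnergy_eq_lintegral hs, ← lintegral_const]
  refine lintegral_mono fun x => Finset.sum_le_sum fun k _ => ?_
  unfold cellWeight cellDens
  gcongr
  exact subset_univ _

lemma twoPow_mul_measure_le_of_le_rieszCap (hβ : β ≤ N) (hs : s.HolderConjugate s') {C : ℝ≥0∞}
    {ν : Measure (Euc N)} (hν : ∀ E, MeasurableSet E → ν E ≤ C * rieszCap N β s' E)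
    (I : Finset ℤ) (a : ℝ) :
    twoPow a * ν {x | twoPow a ≤ ∑ k ∈ I, cellWeight (N - β) s ν k x} ≤
      C * potConst N (N - β) 1 ^ s' * twoPow (-(a * (s' - 1))) * dyadicEnergy (N - β) s ν I := by
  have hmeas : Measurable fun x => ∑ k ∈ I, cellWeight (N - β) s ν k x :=
    Finset.measurable_fun_sum _ fun k _ => (cellConst_cellWeight (N - β) s ν k).measurable
  have hcap := rieszCap_le_of_sum_cellWeight hβ hs ν I (G := fun _ => univ)
    (fun k => CellConst.const k _) (twoPow_ne_zero a) (twoPow_ne_top a)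
    (E := {x | twoPow a ≤ ∑ k ∈ I, cellWeight (N - β) s ν k x}) fun x hx => by simpa using hx
  simp only [indicator_univ] at hcap
  have hexp : twoPow (-(a * (s' - 1))) = twoPow a * twoPow (-a * s') := by
    rw [← twoPow_add]; ring_nf
  calc _ ≤ twoPow a * (C * ((potConst N (N - β) 1 / twoPow a) ^ s' *
        dyadicEnergy (N - β) s ν I)) :=
        mul_le_mul_right ((hν _ (measurableSet_le measurable_const hmeas)).trans
          (mul_le_mul_right hcap C)) _
    _ = _ := by
        rw [hexp, div_eq_mul_inv, ← twoPow_neg, ENNReal.mul_rpow_of_nonneg _ _ hs.symm.nonneg,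
          twoPow_rpow]
        ring

-- Dyadic decomposition of the level sets of the density `V` of the energy above the level `2 ^ T`.
lemma dyadicEnergy_le_add_of_le_rieszCap (hβ : β ≤ N) (hs : s.HolderConjugate s') {C : ℝ≥0∞}
    {ν : Measure (Euc N)} [IsFiniteMeasure ν]
    (hν : ∀ E, MeasurableSet E → ν E ≤ C * rieszCap N β s' E) (I : Finset ℤ) (T : ℝ) :
    dyadicEnergy (N - β) s ν I ≤ twoPow T * ν univ +
      2 * C * potConst N (N - β) 1 ^ s' * (∑' i : ℕ, twoPow (-(i * (s' - 1)))) *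
        twoPow (-(T * (s' - 1))) * dyadicEnergy (N - β) s ν I := by
  set P := potConst N (N - β) 1
  set X := dyadicEnergy (N - β) s ν I
  set V : Euc N → ℝ≥0∞ := fun x => ∑ k ∈ I, cellWeight (N - β) s ν k x
  have hV : Measurable V :=
    Finset.measurable_fun_sum _ fun k _ => (cellConst_cellWeight (N - β) s ν k).measurable
  have hV_top : ∀ x, V x ≠ ⊤ := fun x => ENNReal.sum_ne_top.2 fun k _ =>
    cellWeight_ne_top hs.lt.le k x
  have hlevel : ∀ i : ℕ, 2 * (2 ^ i * twoPow T) * ν {x | 2 ^ i * twoPow T ≤ V x} ≤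
      2 * C * P ^ s' * X * twoPow (-(T * (s' - 1))) * twoPow (-(i * (s' - 1))) := fun i => by
    have hpow : (2 : ℝ≥0∞) ^ i * twoPow T = twoPow (i + T) := by
      rw [twoPow_add]
      congr 1
      rw [twoPow, ENNReal.rpow_natCast]
    rw [hpow, mul_assoc]
    refine (mul_le_mul_right (twoPow_mul_measure_le_of_le_rieszCap hβ hs hν I _) 2).trans_eq ?_
    rw [add_mul, neg_add, twoPow_add]
    ring
  calc X = ∫⁻ x, V x ∂ν := dyadicEnergy_eq_lintegral hs.lt.le ν I
    _ ≤ twoPow T * ν univ + ∑' i : ℕ, 2 * C * P ^ s' * X * twoPow (-(T * (s' - 1))) *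
          twoPow (-(i * (s' - 1))) :=
        (lintegral_le_add_tsum_measure_le ν hV hV_top (twoPow_ne_zero T)
          (twoPow_ne_top T)).trans (add_le_add_right (ENNReal.tsum_le_tsum hlevel) _)
    _ = _ := by rw [ENNReal.tsum_mul_left]; ring

-- Above a high level `2 ^ T` the density contributes at most half of the energy, which is then
-- absorbed.
lemma exists_dyadicEnergy_le_of_le_rieszCap (hβ : β ≤ N) (hs : s.HolderConjugate s')
    {C₁ : ℝ≥0∞} (hC₁ : C₁ ≠ ⊤) : ∃ C : ℝ≥0∞, C ≠ ⊤ ∧ ∀ (ν : Measure (Euc N)) [IsFiniteMeasure ν],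
      (∀ E, MeasurableSet E → ν E ≤ C₁ * rieszCap N β s' E) →
      ∀ I, dyadicEnergy (N - β) s ν I ≤ C * ν univ := by
  have hs₁' := hs.symm.sub_one_pos
  have hP : potConst N (N - β) 1 ^ s' ≠ ⊤ :=
    ENNReal.rpow_ne_top_of_nonneg hs.symm.nonneg (potConst_ne_top _ _ zero_le_one)
  have hS : ∑' i : ℕ, twoPow (-(i * (s' - 1))) ≠ ⊤ := tsum_twoPow_ne_top hs₁'
  obtain ⟨T, hT⟩ := exists_mul_twoPow_neg_le_half
    (K := 2 * C₁ * potConst N (N - β) 1 ^ s' * ∑' i : ℕ, twoPow (-(i * (s' - 1))))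
    (by finiteness) hs₁'
  refine ⟨2 * twoPow T, ENNReal.mul_ne_top (by simp) (twoPow_ne_top _), fun ν _ hν I => ?_⟩
  set X := dyadicEnergy (N - β) s ν I
  have habsorb : X ≤ twoPow T * ν univ + X / 2 := by
    calc X ≤ _ := dyadicEnergy_le_add_of_le_rieszCap hβ hs hν I T
      _ ≤ twoPow T * ν univ + 1 / 2 * X := by gcongr
      _ = _ := by rw [one_div, mul_comm _ X, ← div_eq_mul_inv]
  rw [mul_assoc]
  exact le_two_mul_of_le_add_half (dyadicEnergy_ne_top hs.lt.le ν I) habsorb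

end Testing

/-! ### Capacity conditions and testing conditions -/

section CapBounded

variable {N : ℕ} {β σ q s t : ℝ}

/-- The testing condition on balls: the localized potential of every ball is bounded in `L^q` by
the measure of that ball. -/
def BallTesting (γ σ q : ℝ) (μ : Measure (Euc N)) : Prop :=
  ∃ C : ℝ≥0∞, C ≠ ⊤ ∧ ∀ x r, 0 < r →
    ∫⁻ y, pot γ σ (μ.restrict (ball x r)) y ^ q ≤ C * μ (ball x r)

lemma rieszCap_cellBlock_ne_top (hβ : β ≤ N) (ht : 0 < t) (r : ℕ) (k : ℤ) (x : Euc N) :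
    rieszCap N β t (cellBlock r k x) ≠ ⊤ := by
  have hP : potConst N (N - β) 1 ^ t ≠ ⊤ :=
    ENNReal.rpow_ne_top_of_nonneg ht.le (potConst_ne_top _ _ zero_le_one)
  exact ne_top_of_le_ne_top (ENNReal.mul_ne_top (by finiteness) (twoPow_ne_top _))
    (rieszCap_cellBlock_le hβ ht r k x)

lemma CapBounded.isLocallyFiniteMeasure {ω : Measure (Euc N)} (h : CapBounded β t ω) (hβ : β ≤ N)
    (ht : 0 < t) : IsLocallyFiniteMeasure ω := by
  obtain ⟨C, hC, hω⟩ := h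
  refine ⟨fun x => ⟨closedBall x 2⁻¹, closedBall_mem_nhds x (by positivity), ?_⟩⟩
  have hsub : closedBall x 2⁻¹ ⊆ cellBlock 1 0 x := by
    refine (closedBall_subset_ball ?_).trans (ball_subset_cellBlock_one 0 x)
    norm_num
  exact (hω _ (isCompact_closedBall _ _)).trans_lt (ENNReal.mul_lt_top hC.lt_top
    ((rieszCap_mono hsub).trans_lt (rieszCap_cellBlock_ne_top hβ ht 1 0 x).lt_top))

lemma CapBounded.exists_measure_le {ω : Measure (Euc N)} (h : CapBounded β t ω) (hβ : β ≤ N)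
    (ht : 0 < t) : ∃ C : ℝ≥0∞, C ≠ ⊤ ∧ ∀ E, MeasurableSet E → ω E ≤ C * rieszCap N β t E := by
  have := h.isLocallyFiniteMeasure hβ ht
  obtain ⟨C, hC, hω⟩ := h
  exact ⟨C, hC, fun E hE => measure_le_mul_rieszCap hω hE⟩

lemma CapBounded.ballTesting (hβ₀ : 0 < β) (hβ : β ≤ N) (hσ : 0 < σ) (hq : 0 < q)
    (hs : (σ * q).HolderConjugate t) {μ : Measure (Euc N)} (h : CapBounded β t μ) :
    BallTesting (N - β) σ q μ := by
  have := h.isLocallyFiniteMeasure hβ hs.symm.pos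
  obtain ⟨C₁, hC₁, hμ⟩ := h.exists_measure_le hβ hs.symm.pos
  obtain ⟨C, hC, henergy⟩ := exists_dyadicEnergy_le_of_le_rieszCap hβ hs hC₁
  obtain ⟨C', hC', hpot⟩ := exists_lintegral_pot_rpow_le (N := N) (γ := N - β) (by linarith)
    (by linarith) hσ hq hs.lt.le
  refine ⟨C' * C, ENNReal.mul_ne_top hC' hC, fun x r _ => ?_⟩
  have : IsFiniteMeasure (μ.restrict (ball x r)) :=
    isFiniteMeasure_restrict.2 measure_ball_lt_top.ne
  have hball := hpot _ _ (henergy (μ.restrict (ball x r)) fun E hE =>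
    (Measure.restrict_apply_le _ E).trans (hμ E hE))
  rwa [Measure.restrict_apply_univ, ← mul_assoc] at hball

lemma capBounded_of_dyadicEnergy_restrict_le (hβ₀ : 0 < β) (hβ : β ≤ N)
    (hs : s.HolderConjugate t) {ω : Measure (Euc N)} [IsFiniteMeasureOnCompacts ω] {B : ℝ≥0∞}
    (hB : B ≠ ⊤)
    (h : ∀ K, IsCompact K → ∀ I, dyadicEnergy (N - β) s (ω.restrict K) I ≤ B * ω K) :
    CapBounded β t ω := by
  obtain ⟨C, hC, hdual⟩ := exists_measure_le_of_dyadicEnergy_le (N := N) (γ := N - β)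
    (by linarith) (by linarith) hs
  set D := (C * B) ^ (t / s) + 1
  have hD₀ : D ≠ 0 := by simp [D]
  have hD : D ≠ ⊤ := ENNReal.add_ne_top.2 ⟨ENNReal.rpow_ne_top_of_nonneg
    (div_nonneg hs.symm.nonneg hs.nonneg) (ENNReal.mul_ne_top hC hB), ENNReal.one_ne_top⟩
  refine ⟨D, hD, fun K hK => ?_⟩
  have : IsFiniteMeasure (ω.restrict K) := isFiniteMeasure_restrict.2 hK.measure_lt_top.ne
  rw [← ENNReal.div_le_iff' hD₀ hD]
  refine le_iInf fun g => le_iInf fun hg => le_iInf fun hg₁ => ?_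
  rw [ENNReal.div_le_iff' hD₀ hD]
  rw [rieszPot_top_eq_pot] at hg₁
  have hK_le := hdual (ω.restrict K) B
    (by simpa only [Measure.restrict_apply_univ] using h K hK) g hg
    ((ae_restrict_iff' hK.measurableSet).2 (ae_of_all _ hg₁))
  rw [Measure.restrict_apply_univ] at hK_le
  exact hK_le.trans (mul_le_mul_left le_self_add _)

end CapBounded

/-! ### From the capacity condition for the potential to the measure -/

section PotentialCapacity

variable {N : ℕ} {β γ σ q s t : ℝ}

lemma cellDens_rpow_mul_le_pot_rpow (hγ : 0 ≤ γ) (hσ : 0 ≤ σ) (hq : 0 ≤ q) (μ : Measure (Euc N))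
    (k : ℤ) (x : Euc N) :
    cellDens γ 0 μ k x ^ (σ * q) ≤ potConst N γ σ ^ q * pot γ σ μ x ^ q := by
  rw [ENNReal.rpow_mul, ← ENNReal.mul_rpow_of_nonneg _ _ hq]
  gcongr
  exact cellDens_rpow_le_pot hγ hσ μ k x

lemma exists_cellWeight_le (hβ : β ≤ N) (hσ : 0 < σ) (hq : 0 < q)
    (hs : (σ * q).HolderConjugate t) {μ : Measure (Euc N)}
    (h : CapBounded β t (volume.withDensity fun y => pot (N - β) σ μ y ^ q)) :
    ∃ D : ℝ≥0∞, D ≠ ⊤ ∧ ∀ k x, cellWeight (N - β) (σ * q) μ k x ≤ D := by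
  have ht := hs.symm.pos
  obtain ⟨C, hC, hω⟩ := h.exists_measure_le hβ ht
  set P := potConst N (N - β) σ ^ q
  have hP : P ≠ ⊤ := ENNReal.rpow_ne_top_of_nonneg hq.le (potConst_ne_top _ _ hσ.le)
  set R := potConst N (N - β) 1 ^ t * (2 * (0 : ℕ) + 1 : ℝ≥0∞) ^ N
  have hR : R ≠ ⊤ := ENNReal.mul_ne_top (ENNReal.rpow_ne_top_of_nonneg ht.le
    (potConst_ne_top _ _ zero_le_one)) (by finiteness)
  refine ⟨(P * C * R) ^ t⁻¹, ENNReal.rpow_ne_top_of_nonneg (by positivity) (by finiteness),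
    fun k x => ?_⟩
  have hcell : cellDens (N - β) 0 μ k x ^ (σ * q) * twoPow (-(k * N)) ≤
      P * C * R * twoPow (k * (β * t - N)) := by
    rw [← volume_cellBlock_zero k x, ← setLIntegral_cellBlock_zero_of_cellConst
      ((cellConst_cellDens (N - β) 0 μ k).comp (· ^ (σ * q)))]
    calc ∫⁻ y in cellBlock 0 k x, cellDens (N - β) 0 μ k y ^ (σ * q)
        ≤ P * ∫⁻ y in cellBlock 0 k x, pot (N - β) σ μ y ^ q := by
          rw [← lintegral_const_mul' _ _ hP]
          exact lintegral_mono fun y =>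
            cellDens_rpow_mul_le_pot_rpow (by linarith) hσ.le hq.le μ k y
      _ ≤ P * (C * (R * twoPow (k * (β * t - N)))) := by
          rw [← withDensity_apply _ (measurableSet_cellBlock 0 k x)]
          gcongr
          exact (hω _ (measurableSet_cellBlock 0 k x)).trans
            (mul_le_mul_right (rieszCap_cellBlock_le hβ ht 0 k x) C)
      _ = _ := by ring
  have hexp : (σ * q - 1) * t = σ * q := by linarith [hs.mul_eq_add]
  have hsplit : twoPow (k * (N - β - N)) ^ t =
      twoPow (-(k * N)) * twoPow (-(k * (β * t - N))) := by
    rw [twoPow_rpow, ← twoPow_add]; ring_nf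
  rw [ENNReal.le_rpow_inv_iff ht, cellWeight, ENNReal.mul_rpow_of_nonneg _ _ ht.le,
    ← ENNReal.rpow_mul, hexp, hsplit, ← mul_assoc]
  refine (mul_le_mul_left hcell _).trans_eq ?_
  rw [mul_assoc, twoPow_mul_twoPow_neg, mul_one]

lemma sum_lintegral_indicator_cellDens_rpow (hs : 1 ≤ s) (ν : Measure (Euc N)) [SFinite ν]
    (I : Finset ℤ) {G : ℤ → Set (Euc N)} (hG : ∀ k, CellConst k (· ∈ G k)) :
    ∑ k ∈ I, ∫⁻ x, (G k).indicator (fun x => cellDens γ 0 ν k x ^ s) x =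
      ∫⁻ x, ∑ k ∈ I, (G k).indicator (cellWeight γ s ν k) x ∂ν := by
  rw [lintegral_finsetSum _ fun k _ => ((cellConst_cellWeight γ s ν k).indicator (hG k)).measurable]
  refine Finset.sum_congr rfl fun k _ => ?_
  have hweight := lintegral_mul_cellDens_rpow ν (γ := γ) hs
    ((CellConst.const k (1 : ℝ≥0∞)).indicator (hG k))
  have hone : ∀ (f : Euc N → ℝ≥0∞) x,
      (G k).indicator (fun _ => 1) x * f x = (G k).indicator f x := fun f x => by
    rw [← indicator_mul_left]; simp only [one_mul]
  simpa only [hone, hone fun x => cellDens γ 0 ν k x ^ s] using hweight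

lemma cellConst_sum_filter_cellWeight (γ s : ℝ) (ν : Measure (Euc N)) (I : Finset ℤ)
    {p : ℤ → Prop} [DecidablePred p] {k : ℤ} (hp : ∀ l, p l → l ≤ k) :
    CellConst k fun x => ∑ l ∈ I with p l, cellWeight γ s ν l x :=
  CellConst.sum fun l hl => (cellConst_cellWeight γ s ν l).mono (hp l (Finset.mem_filter.1 hl).2)

-- Stopping each sum of weights once it exceeds `1` keeps it above `1` on `E` and below `1 + D`
-- everywhere, so the stopped family is an efficient competitor for the capacity of `E`.
lemma rieszCap_one_lt_sum_cellWeight_le (hβ : β ≤ N) (hs : s.HolderConjugate t)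
    (ν : Measure (Euc N)) [SFinite ν] {D : ℝ≥0∞} (hD : ∀ k x, cellWeight (N - β) s ν k x ≤ D)
    (I : Finset ℤ) :
    rieszCap N β t {x | 1 < ∑ k ∈ I, cellWeight (N - β) s ν k x} ≤
      potConst N (N - β) 1 ^ t * ((1 + D) * ν univ) := by
  set w := cellWeight (N - β) s ν
  set F : ℤ → Set (Euc N) := fun k => {x | ∑ l ∈ I with l < k, w l x ≤ 1}
  have hF : ∀ k, CellConst k (· ∈ F k) := fun k =>
    (cellConst_sum_filter_cellWeight (N - β) s ν I fun _ => le_of_lt).comp (· ≤ 1)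
  have hstopped : ∀ x, ∑ k ∈ I, (F k).indicator (w k) x =
      ∑ k ∈ I with ∑ l ∈ I with l < k, w l x ≤ 1, w k x := fun x => by
    rw [Finset.sum_filter]
    exact Finset.sum_congr rfl fun k _ => indicator_apply _ _ _
  refine (rieszCap_le_of_sum_cellWeight hβ hs ν I hF one_ne_zero ENNReal.one_ne_top fun x hx => ?_
    ).trans ?_
  · exact (hstopped x).symm ▸ (lt_sum_filter_of_lt_sum hx).le
  · rw [div_one, sum_lintegral_indicator_cellDens_rpow hs.lt.le ν I hF, ← lintegral_const]
    gcongr with x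
    exact (hstopped x).trans_le (sum_filter_le_of_sum_strictPrefix_le fun k _ => hD k x)

lemma exists_sum_lintegral_indicator_cellDens_rpow_le_pot (hγ₀ : 0 ≤ γ) (hγ : γ < N) (hσ : 0 < σ)
    (hq : 0 < q) : ∃ C : ℝ≥0∞, C ≠ ⊤ ∧ ∀ (ν : Measure (Euc N)) [SFinite ν] (I : Finset ℤ)
      (G : ℤ → Set (Euc N)), (∀ k, CellConst k (· ∈ G k)) → ∀ E, MeasurableSet E →
      (∀ k ∈ I, G k ⊆ E) →
      ∑ k ∈ I, ∫⁻ x, (G k).indicator (fun x => cellDens γ 0 ν k x ^ (σ * q)) x ≤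
        C * ∫⁻ x in E, pot γ σ ν x ^ q := by
  obtain ⟨C, hC, hsup⟩ := exists_sum_lintegral_indicator_cellDens_rpow_le_sup (N := N) hγ
    (mul_pos hσ hq)
  set P := potConst N γ σ
  have hP : P ^ q ≠ ⊤ := ENNReal.rpow_ne_top_of_nonneg hq.le (potConst_ne_top _ _ hσ.le)
  refine ⟨C * P ^ q, ENNReal.mul_ne_top hC hP, fun ν _ I G hG E hE hGE => ?_⟩
  refine (hsup ν I G hG (E.indicator fun x => (P * pot γ σ ν x) ^ σ⁻¹) fun k hk x hx => ?_).trans ?_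
  · rw [indicator_of_mem (hGE k hk hx), ENNReal.le_rpow_inv_iff hσ]
    exact cellDens_rpow_le_pot hγ₀ hσ.le ν k x
  · rw [mul_assoc, ← lintegral_const_mul' _ _ hP, ← lintegral_indicator hE]
    gcongr with x
    by_cases hx : x ∈ E
    · simp only [indicator_of_mem hx, ← ENNReal.rpow_mul, inv_mul_cancel_left₀ hσ.ne',
        ENNReal.mul_rpow_of_nonneg _ _ hq.le, le_refl]
    · simp [hx, hσ, hq]

-- The weights up to generation `k` either sum to at most `1`, and contribute at most `ν univ` to
-- the energy, or live on `{1 < ∑ weights}`, where the potential is controlled by the capacity.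
lemma dyadicEnergy_le_measure_univ_add (hs : 1 ≤ s) (ν : Measure (Euc N)) [SFinite ν]
    (I : Finset ℤ) :
    dyadicEnergy γ s ν I ≤ ν univ + ∑ k ∈ I, ∫⁻ x,
      {x | 1 < ∑ l ∈ I with l ≤ k, cellWeight γ s ν l x}.indicator
        (fun x => cellDens γ 0 ν k x ^ s) x := by
  set w := cellWeight γ s ν
  set G : ℤ → Set (Euc N) := fun k => {x | 1 < ∑ l ∈ I with l ≤ k, w l x}
  have hG : ∀ k, CellConst k (· ∈ G k) := fun k =>
    (cellConst_sum_filter_cellWeight γ s ν I fun _ => id).comp (1 < ·)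
  have hlow : ∀ x, ∑ k ∈ I, (G k)ᶜ.indicator (w k) x ≤ 1 := fun x => by
    refine le_trans (le_of_eq ?_) (sum_filter_le_of_sum_prefix_le (s := I) (w := fun k => w k x))
    rw [Finset.sum_filter]
    refine Finset.sum_congr rfl fun k _ => (indicator_apply _ _ _).trans (if_congr ?_ rfl rfl)
    simp only [G, mem_compl_iff, mem_ofPred_eq, not_lt]
  rw [dyadicEnergy_eq_lintegral hs, sum_lintegral_indicator_cellDens_rpow hs ν I hG]
  calc ∫⁻ x, ∑ k ∈ I, w k x ∂ν
      ≤ ∫⁻ x, (1 + ∑ k ∈ I, (G k).indicator (w k) x) ∂ν := by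
        refine lintegral_mono fun x => ?_
        calc ∑ k ∈ I, w k x
            = ∑ k ∈ I, (G k)ᶜ.indicator (w k) x + ∑ k ∈ I, (G k).indicator (w k) x := by
              simp only [← Finset.sum_add_distrib, indicator_compl_add_self_apply]
          _ ≤ _ := add_le_add_left (hlow x) _
    _ = _ := by rw [lintegral_add_left measurable_const, lintegral_one]

lemma CapBounded.of_pot (hβ₀ : 0 < β) (hβ : β ≤ N) (hσ : 0 < σ) (hq : 0 < q)
    (hs : (σ * q).HolderConjugate t) {μ : Measure (Euc N)} [IsLocallyFiniteMeasure μ]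
    (h : CapBounded β t (volume.withDensity fun y => pot (N - β) σ μ y ^ q)) :
    CapBounded β t μ := by
  have ht := hs.symm.pos
  obtain ⟨D, hD, hweight⟩ := exists_cellWeight_le hβ hσ hq hs h
  obtain ⟨C, hC, hhigh⟩ := exists_sum_lintegral_indicator_cellDens_rpow_le_pot (N := N)
    (γ := N - β) (by linarith) (by linarith) hσ hq
  obtain ⟨C₂, hC₂, hω⟩ := h.exists_measure_le hβ ht
  set Q := potConst N (N - β) 1 ^ t
  have hQ : Q ≠ ⊤ := ENNReal.rpow_ne_top_of_nonneg ht.le (potConst_ne_top _ _ zero_le_one)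
  refine capBounded_of_dyadicEnergy_restrict_le hβ₀ hβ hs (B := 1 + C * (C₂ * (Q * (1 + D))))
    (by finiteness) fun K hK I => ?_
  set ν := μ.restrict K
  have : IsFiniteMeasure ν := isFiniteMeasure_restrict.2 hK.measure_lt_top.ne
  have hνw : ∀ k x, cellWeight (N - β) (σ * q) ν k x ≤ D := fun k x =>
    le_trans (cellWeight_mono_measure hs.lt.le Measure.restrict_le_self k x) (hweight k x)
  set E : Set (Euc N) := {x | 1 < ∑ k ∈ I, cellWeight (N - β) (σ * q) ν k x}
  have hE : MeasurableSet E := measurableSet_lt measurable_const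
    (Finset.measurable_fun_sum _ fun k _ => (cellConst_cellWeight _ _ ν k).measurable)
  have hpotE : ∫⁻ x in E, pot (N - β) σ ν x ^ q ≤ C₂ * (Q * ((1 + D) * ν univ)) := by
    calc ∫⁻ x in E, pot (N - β) σ ν x ^ q ≤ ∫⁻ x in E, pot (N - β) σ μ x ^ q := by
          gcongr with x
          exact pot_mono_measure hσ.le Measure.restrict_le_self x
      _ ≤ C₂ * rieszCap N β t E := by rw [← withDensity_apply _ hE]; exact hω E hE
      _ ≤ _ := by gcongr; exact rieszCap_one_lt_sum_cellWeight_le hβ hs ν hνw I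
  rw [← Measure.restrict_apply_univ K]
  refine (dyadicEnergy_le_measure_univ_add hs.lt.le ν I).trans ?_
  calc _ ≤ ν univ + C * (C₂ * (Q * ((1 + D) * ν univ))) :=
        add_le_add_right ((hhigh ν I _ (fun k => (cellConst_sum_filter_cellWeight _ _ ν I
          fun _ => id).comp (1 < ·)) E hE fun k _ => ofPred_subset_ofPred.2 fun x hx =>
            lt_of_lt_of_le hx (Finset.sum_le_sum_of_subset (Finset.filter_subset _ _))).trans
              (mul_le_mul_right hpotE C)) _
    _ = _ := by ring

end PotentialCapacity

/-! ### The dyadic maximal function -/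

section Maximal

lemma lintegral_Ioo_rpow_sub_two_ne_top {s : ℝ} (hs : 1 < s) :
    ∫⁻ t in Ioo (0 : ℝ) 1, ENNReal.ofReal (t ^ (s - 2)) ≠ ⊤ :=
  ((intervalIntegral.integrableOn_Ioo_rpow_iff one_pos).2 (by linarith)).lintegral_lt_top.ne

lemma lintegral_rpow_le_of_forall_mul_measure_le {Ω : Type*} [MeasurableSpace Ω] (P : Measure Ω)
    {M : Ω → ℝ≥0∞} (hM : Measurable M) (hM_le : ∀ x, M x ≤ 1) {A : ℝ≥0∞}
    (hweak : ∀ t : ℝ≥0∞, t * P {x | t < M x} ≤ A) {s : ℝ} (hs : 1 < s) :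
    ∫⁻ x, M x ^ s ∂P ≤
      ENNReal.ofReal s * (∫⁻ t in Ioo (0 : ℝ) 1, ENNReal.ofReal (t ^ (s - 2))) * A := by
  have hs₀ : 0 < s := by linarith
  have hM_top : ∀ x, M x ≠ ⊤ := fun x => ne_top_of_le_ne_top ENNReal.one_ne_top (hM_le x)
  have hlevel : ∀ t ∈ Ioi (0 : ℝ), P {x | t < (M x).toReal} * ENNReal.ofReal (t ^ (s - 1)) ≤
      (Ioo 0 1).indicator (fun t => ENNReal.ofReal (t ^ (s - 2)) * A) t := fun t ht => by
    rcases le_or_gt 1 t with h₁ | h₁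
    · have hempty : {x | t < (M x).toReal} = ∅ := eq_empty_of_forall_notMem fun x hx =>
        (lt_of_le_of_lt h₁ hx).not_ge (by simpa using ENNReal.toReal_mono (by simp) (hM_le x))
      simp [hempty]
    · have hsplit : ENNReal.ofReal (t ^ (s - 1)) =
          ENNReal.ofReal (t ^ (s - 2)) * ENNReal.ofReal t := by
        rw [← ENNReal.ofReal_mul (Real.rpow_nonneg (le_of_lt ht) _), ← Real.rpow_add_one ht.ne']
        ring_nf
      simp only [indicator_of_mem (s := Ioo (0 : ℝ) 1) ⟨ht, h₁⟩, hsplit,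
        ← ENNReal.ofReal_lt_iff_lt_toReal (le_of_lt ht) (hM_top _)]
      rw [mul_comm, mul_assoc]
      exact mul_le_mul_right (hweak _) _
  calc ∫⁻ x, M x ^ s ∂P = ∫⁻ x, ENNReal.ofReal ((M x).toReal ^ s) ∂P := by
        simp only [← ENNReal.ofReal_rpow_of_nonneg ENNReal.toReal_nonneg hs₀.le,
          ENNReal.ofReal_toReal (hM_top _)]
    _ = ENNReal.ofReal s * ∫⁻ t in Ioi 0,
          P {x | t < (M x).toReal} * ENNReal.ofReal (t ^ (s - 1)) :=
        lintegral_rpow_eq_lintegral_meas_lt_mul P (ae_of_all _ fun _ => ENNReal.toReal_nonneg)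
          hM.ennreal_toReal.aemeasurable hs₀
    _ ≤ ENNReal.ofReal s * ∫⁻ t in Ioo 0 1, ENNReal.ofReal (t ^ (s - 2)) * A := by
        gcongr ENNReal.ofReal s * ?_
        rw [← lintegral_indicator measurableSet_Ioo]
        exact (setLIntegral_mono' measurableSet_Ioi hlevel).trans (setLIntegral_le_lintegral _ _)
    _ = _ := by rw [lintegral_mul_const _ (by fun_prop), mul_assoc]

variable {N : ℕ}

/-- The dyadic maximal function of `ν` relative to `ω`, over the generations in `I`. Where `ω` does
not charge a cell, the quotient is `0` or `⊤`. -/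
def cellMax (ω ν : Measure (Euc N)) (I : Finset ℤ) (x : Euc N) : ℝ≥0∞ :=
  ⨆ k ∈ I, ν (cellBlock 0 k x) / ω (cellBlock 0 k x)

lemma cellConst_measure_div (ω ν : Measure (Euc N)) (k : ℤ) :
    CellConst k fun x => ν (cellBlock 0 k x) / ω (cellBlock 0 k x) :=
  (cellConst_cellBlock 0 k).comp fun Q => ν Q / ω Q

lemma measurable_cellMax (ω ν : Measure (Euc N)) (I : Finset ℤ) : Measurable (cellMax ω ν I) :=
  Measurable.biSup _ I.countable_toSet fun k _ => (cellConst_measure_div ω ν k).measurable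

lemma mul_measure_le_of_cellConst_of_le_div (ω ν : Measure (Euc N)) [SFinite ω] [SFinite ν] {k : ℤ}
    {A : Set (Euc N)} (hA : CellConst k (· ∈ A)) {t : ℝ≥0∞}
    (h : ∀ x ∈ A, t ≤ ν (cellBlock 0 k x) / ω (cellBlock 0 k x)) : t * ω A ≤ ν A := by
  have hinv : CellConst k (A.indicator fun x => (ω (cellBlock 0 k x))⁻¹) :=
    ((cellConst_cellBlock 0 k).comp fun Q => (ω Q)⁻¹).indicator hA
  calc t * ω A = ∫⁻ x, A.indicator (fun _ => t) x ∂ω :=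
        (lintegral_indicator_const hA.measurableSet t).symm
    _ ≤ ∫⁻ x, A.indicator (fun x => (ω (cellBlock 0 k x))⁻¹) x * ν (cellBlock 0 k x) ∂ω := by
        refine lintegral_mono fun x => ?_
        by_cases hx : x ∈ A
        · simpa [hx, div_eq_mul_inv, mul_comm] using h x hx
        · simp [hx]
    _ = ∫⁻ y, A.indicator (fun x => (ω (cellBlock 0 k x))⁻¹) y * ω (cellBlock 0 k y) ∂ν := by
        simpa [setLIntegral_cellBlock_zero_of_cellConst hinv] using
          lintegral_mul_setLIntegral_cellBlock_swap ω ν hinv.measurable measurable_one 0 k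
    _ ≤ ∫⁻ y, A.indicator 1 y ∂ν := by
        refine lintegral_mono fun y => ?_
        by_cases hy : y ∈ A
        · simp [hy, ENNReal.inv_mul_le_one]
        · simp [hy]
    _ = ν A := lintegral_indicator_one hA.measurableSet

-- The set is partitioned according to the coarsest generation at which the quotient exceeds `t`.
lemma mul_measure_lt_cellMax_le (ω ν : Measure (Euc N)) [SFinite ω] [SFinite ν] (I : Finset ℤ)
    (t : ℝ≥0∞) : t * ω {x | t < cellMax ω ν I x} ≤ ν univ := by
  set ρ : ℤ → Euc N → ℝ≥0∞ := fun k x => ν (cellBlock 0 k x) / ω (cellBlock 0 k x)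
  have hρ : ∀ k, CellConst k (ρ k) := cellConst_measure_div ω ν
  set A : ℤ → Set (Euc N) := fun k => {x | t < ρ k x ∧ ∀ i ∈ I, i < k → ρ i x ≤ t}
  have hA : ∀ k, CellConst k (· ∈ A k) := fun k x y hxy => by
    simp only [A, mem_ofPred_eq, hρ k hxy]
    refine propext (and_congr_right fun _ => forall₃_congr fun i _ hi => ?_)
    rw [(hρ i).mono hi.le hxy]
  have hdisj : (I : Set ℤ).PairwiseDisjoint A := fun i hi j hj hij =>
    Set.disjoint_left.2 fun x hxi hxj => hij.lt_or_gt.elim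
      (fun h => (hxj.2 i hi h).not_gt hxi.1) (fun h => (hxi.2 j hj h).not_gt hxj.1)
  have hcover : {x | t < cellMax ω ν I x} ⊆ ⋃ k ∈ I, A k := fun x hx => by
    have hne : (I.filter fun k => t < ρ k x).Nonempty := by
      obtain ⟨k, hk, hlt⟩ := by simpa only [mem_ofPred_eq, cellMax, lt_iSup_iff] using hx
      exact ⟨k, Finset.mem_filter.2 ⟨hk, hlt⟩⟩
    obtain ⟨hI, hlt⟩ := Finset.mem_filter.1 (Finset.min'_mem _ hne)
    exact mem_iUnion₂.2 ⟨_, hI, hlt, fun i hi hik => not_lt.1 fun h =>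
      hik.not_ge (Finset.min'_le _ i (Finset.mem_filter.2 ⟨hi, h⟩))⟩
  calc t * ω {x | t < cellMax ω ν I x} ≤ t * ∑ k ∈ I, ω (A k) :=
        mul_le_mul_right ((measure_mono hcover).trans (measure_biUnion_finset_le I A)) t
    _ = ∑ k ∈ I, t * ω (A k) := Finset.mul_sum _ _ _
    _ ≤ ∑ k ∈ I, ν (A k) := Finset.sum_le_sum fun k _ =>
        mul_measure_le_of_cellConst_of_le_div ω ν (hA k) fun x hx => hx.1.le
    _ = ν (⋃ k ∈ I, A k) :=
        (measure_biUnion_finset hdisj fun k _ => (hA k).measurableSet).symm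
    _ ≤ ν univ := measure_mono (subset_univ _)

lemma exists_lintegral_cellMax_rpow_le {s : ℝ} (hs : 1 < s) : ∃ C : ℝ≥0∞, C ≠ ⊤ ∧
    ∀ (ω ν : Measure (Euc N)) [SFinite ω] [SFinite ν], ν ≤ ω → ∀ I,
      ∫⁻ x, cellMax ω ν I x ^ s ∂ω ≤ C * ν univ :=
  ⟨_, ENNReal.mul_ne_top ENNReal.ofReal_ne_top (lintegral_Ioo_rpow_sub_two_ne_top hs),
    fun ω ν _ _ hνω I => lintegral_rpow_le_of_forall_mul_measure_le ω (measurable_cellMax ω ν I)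
      (fun _ => iSup₂_le fun _ _ => ENNReal.div_le_of_le_mul (by simpa using hνω _))
      (mul_measure_lt_cellMax_le ω ν I) hs⟩

end Maximal

/-! ### From the pointwise condition to the capacity condition for the potential -/

section PointwiseBound

/-- The pointwise condition: the potential is finite and reproduces itself under the nonlinear
operator `u ↦ pot (u ^ q dx)`, up to a constant, almost everywhere. -/
def PotPointwiseBound {N : ℕ} (γ σ q : ℝ) (μ : Measure (Euc N)) : Prop :=
  ∃ C : ℝ≥0∞, C ≠ ⊤ ∧ ∀ᵐ x, pot γ σ (volume.withDensity fun y => pot γ σ μ y ^ q) x ≤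
    C * pot γ σ μ x ∧ pot γ σ μ x < ⊤

lemma measure_ne_top_of_pot_ne_top {X : Type*} [PseudoMetricSpace X] [MeasurableSpace X] {γ σ : ℝ}
    (hγ : 0 ≤ γ) (hσ : 0 < σ) {ω : Measure X} {x : X} (hx : pot γ σ ω x ≠ ⊤) {E : Set X}
    (hE : IsBounded E) : ω E ≠ ⊤ := by
  obtain ⟨r, hr⟩ := hE.subset_ball x
  obtain ⟨m, hm⟩ := pow_unbounded_of_one_lt r (one_lt_two (α := ℝ))
  have hball : E ⊆ ball x ((2 : ℝ) ^ (-(-(m : ℤ)))) :=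
    hr.trans (ball_subset_ball (by rw [neg_neg, zpow_natCast]; exact hm.le))
  have hdens : ballDens γ ω (-(m : ℤ)) x ^ σ ≠ ⊤ :=
    ne_top_of_le_ne_top (ENNReal.mul_ne_top (ENNReal.mul_ne_top (by simp) (twoPow_ne_top _)) hx)
      (ballDens_rpow_le_pot hγ hσ.le ω _ x)
  refine ne_top_of_le_ne_top (fun htop => hdens ?_) (measure_mono hball)
  rw [ballDens, htop, ENNReal.top_mul (twoPow_ne_zero _), ENNReal.top_rpow_of_pos hσ]

variable {N : ℕ} {β γ σ q t : ℝ}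

lemma cellDens_le_cellMax_mul_pot (hγ : 0 ≤ γ) (hσ : 0 < σ) {ω ν : Measure (Euc N)} (hνω : ν ≤ ω)
    (hω : ∀ k x, ω (cellBlock 0 k x) ≠ ⊤) {I : Finset ℤ} {k : ℤ} (hk : k ∈ I) (x : Euc N) :
    cellDens γ 0 ν k x ≤ cellMax ω ν I x * (potConst N γ σ * pot γ σ ω x) ^ σ⁻¹ := by
  have hquot : cellDens γ 0 ν k x =
      ν (cellBlock 0 k x) / ω (cellBlock 0 k x) * cellDens γ 0 ω k x := by
    unfold cellDens
    rw [← mul_assoc, ENNReal.div_mul_cancel' (fun h => le_antisymm ((hνω _).trans_eq h) zero_le)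
      fun h => absurd h (hω k x)]
  rw [hquot]
  exact mul_le_mul' (le_iSup₂_of_le k hk le_rfl)
    ((ENNReal.le_rpow_inv_iff hσ).2 (cellDens_rpow_le_pot hγ hσ.le ω k x))

lemma exists_dyadicEnergy_le_of_pot_le (hγ₀ : 0 ≤ γ) (hγ : γ < N) (hσ : 0 < σ) (hq : 0 < q)
    (hs : 1 < σ * q) {C₄ : ℝ≥0∞} (hC₄ : C₄ ≠ ⊤) : ∃ B : ℝ≥0∞, B ≠ ⊤ ∧
    ∀ {f : Euc N → ℝ≥0∞}, Measurable f →
      (∀ᵐ x, pot γ σ (volume.withDensity fun y => f y ^ q) x ≤ C₄ * f x) →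
      (∀ k x, volume.withDensity (fun y => f y ^ q) (cellBlock 0 k x) ≠ ⊤) →
      ∀ ν [SFinite ν], ν ≤ volume.withDensity (fun y => f y ^ q) →
      ∀ I, dyadicEnergy γ (σ * q) ν I ≤ B * ν univ := by
  obtain ⟨C, hC, hsup⟩ := exists_sum_lintegral_indicator_cellDens_rpow_le_sup (N := N) hγ
    (mul_pos hσ hq)
  obtain ⟨A, hA, hmax⟩ := exists_lintegral_cellMax_rpow_le (N := N) hs
  set P := (potConst N γ σ * C₄) ^ q
  have hP : P ≠ ⊤ := ENNReal.rpow_ne_top_of_nonneg hq.le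
    (ENNReal.mul_ne_top (potConst_ne_top _ _ hσ.le) hC₄)
  refine ⟨C * P * A, by finiteness, fun {f} hf hpot hω ν _ hνω I => ?_⟩
  set ω := volume.withDensity fun y => f y ^ q
  set M := cellMax ω ν I
  have hdens := hsup ν I (fun _ => univ) (fun k => CellConst.const k _)
    (fun x => M x * (potConst N γ σ * pot γ σ ω x) ^ σ⁻¹)
    fun k hk x _ => cellDens_le_cellMax_mul_pot hγ₀ hσ hνω hω hk x
  simp only [indicator_univ] at hdens
  calc dyadicEnergy γ (σ * q) ν I
      ≤ C * ∫⁻ x, (M x * (potConst N γ σ * pot γ σ ω x) ^ σ⁻¹) ^ (σ * q) := hdens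
    _ ≤ C * ∫⁻ x, P * (f x ^ q * M x ^ (σ * q)) := by
        refine mul_le_mul_right (lintegral_mono_ae ?_) _
        filter_upwards [hpot] with x hx
        rw [ENNReal.mul_rpow_of_nonneg _ _ (by linarith), ← ENNReal.rpow_mul,
          inv_mul_cancel_left₀ hσ.ne', mul_comm, ← mul_assoc,
          ← ENNReal.mul_rpow_of_nonneg _ _ hq.le, mul_assoc (potConst N γ σ)]
        gcongr
    _ = C * (P * ∫⁻ x, M x ^ (σ * q) ∂ω) := by
        rw [lintegral_const_mul' _ _ hP, lintegral_withDensity_eq_lintegral_mul _ (hf.pow_const q)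
          ((measurable_cellMax ω ν I).pow_const _)]
        rfl
    _ ≤ C * (P * (A * ν univ)) := by gcongr; exact hmax ω ν hνω I
    _ = _ := by ring

lemma PotPointwiseBound.capBounded (hβ₀ : 0 < β) (hβ : β ≤ N) (hσ : 0 < σ) (hq : 0 < q)
    (hs : (σ * q).HolderConjugate t) {μ : Measure (Euc N)} [IsLocallyFiniteMeasure μ]
    (h : PotPointwiseBound (N - β) σ q μ) :
    CapBounded β t (volume.withDensity fun y => pot (N - β) σ μ y ^ q) := by
  obtain ⟨C₄, hC₄, hμ⟩ := h
  set ω := volume.withDensity fun y => pot (N - β) σ μ y ^ q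
  have hγ : (0 : ℝ) ≤ N - β := by linarith
  obtain ⟨x₀, hx₀⟩ := hμ.exists
  have hω : ∀ E, IsBounded E → ω E ≠ ⊤ := fun E => measure_ne_top_of_pot_ne_top hγ hσ
    (ne_top_of_le_ne_top (ENNReal.mul_ne_top hC₄ hx₀.2.ne) hx₀.1)
  have : IsFiniteMeasureOnCompacts ω := ⟨fun K hK => (hω K hK.isBounded).lt_top⟩
  obtain ⟨B, hB, henergy⟩ := exists_dyadicEnergy_le_of_pot_le (N := N) (γ := N - β) hγ
    (by linarith) hσ hq hs.lt hC₄
  refine capBounded_of_dyadicEnergy_restrict_le hβ₀ hβ hs hB fun K _ I => ?_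
  have hK_energy := henergy (measurable_pot _ _ μ) (hμ.mono fun _ hx => hx.1)
    (fun k x => hω _ (isBounded_ball.subset (cellBlock_zero_subset_ball k x)))
    (ω.restrict K) Measure.restrict_le_self I
  rwa [Measure.restrict_apply_univ] at hK_energy

end PointwiseBound

/-! ### From the testing condition to the pointwise condition -/

section Sequences

lemma tsum_ite_lt_int (k : ℤ) (f : ℤ → ℝ≥0∞) :
    ∑' i : ℤ, (if i < k then f i else 0) = ∑' j : ℕ, f (k - 1 - j) := by
  have hinj : Function.Injective fun j : ℕ => k - 1 - (j : ℤ) := fun i j h => by simpa using h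
  rw [← hinj.tsum_eq]
  · exact tsum_congr fun j => if_pos (by lia)
  · intro i hi
    have hik : i < k := by
      by_contra h
      simp [h] at hi
    exact ⟨(k - 1 - i).toNat, by dsimp only; lia⟩

lemma rpow_sub_one_le_of_rpow_le_mul {b K : ℝ≥0∞} {s : ℝ} (hb : b ≠ ⊤) (hs : 1 < s)
    (h : b ^ s ≤ K * b) : b ^ (s - 1) ≤ K := by
  rcases eq_or_ne b 0 with rfl | h₀
  · simp [ENNReal.zero_rpow_of_pos (sub_pos.2 hs)]
  · rw [← ENNReal.mul_le_mul_iff_left h₀ hb]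
    rwa [ENNReal.rpow_sub _ _ h₀ hb, ENNReal.rpow_one, ENNReal.div_mul_cancel h₀ hb]

-- Half of the geometric weight is spent on making the series converge, uniformly in `c`.
lemma rpow_tsum_twoPow_mul_le {s : ℝ} (hs : 0 < s) (δ : ℝ) (c : ℕ → ℝ≥0∞) :
    (∑' j : ℕ, twoPow (-(j * δ)) * c j) ^ s ≤
      (∑' j : ℕ, twoPow (-(j * (δ / 2)))) ^ s *
        ∑' j : ℕ, twoPow (-(j * (δ / 2 * s))) * c j ^ s := by
  set U := ∑' j : ℕ, twoPow (-(j * (δ / 2 * s))) * c j ^ s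
  have hterm : ∀ j : ℕ, twoPow (-(j * (δ / 2))) * c j ≤ U ^ s⁻¹ := fun j => by
    rw [ENNReal.le_rpow_inv_iff hs, ENNReal.mul_rpow_of_nonneg _ _ hs.le, twoPow_rpow, neg_mul,
      mul_assoc (j : ℝ)]
    exact ENNReal.le_tsum (f := fun j : ℕ => twoPow (-(j * (δ / 2 * s))) * c j ^ s) j
  calc (∑' j : ℕ, twoPow (-(j * δ)) * c j) ^ s
      ≤ (∑' j : ℕ, twoPow (-(j * (δ / 2))) * U ^ s⁻¹) ^ s := by
        refine ENNReal.rpow_le_rpow (ENNReal.tsum_le_tsum fun j => ?_) hs.le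
        have hsplit : twoPow (-(j * δ)) = twoPow (-(j * (δ / 2))) * twoPow (-(j * (δ / 2))) := by
          rw [← twoPow_add]; ring_nf
        rw [hsplit, mul_assoc]
        exact mul_le_mul_right (hterm j) _
    _ = _ := by
        rw [ENNReal.tsum_mul_right, ENNReal.mul_rpow_of_nonneg _ _ hs.le,
          ENNReal.rpow_inv_rpow hs.ne']

variable {a : ℤ → ℝ≥0∞} {A : ℝ≥0∞} {ε s : ℝ}

lemma tsum_ne_top_of_rpow_le (hε : 0 < ε) (hs : 1 < s) (hA : A ≠ ⊤)
    (ha : ∀ i : ℤ, a i ^ (s - 1) ≤ A * twoPow (i * ε)) (k : ℤ) : ∑' j : ℕ, a (k - j) ≠ ⊤ := by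
  have hs₁ : 0 < s - 1 := by linarith
  set δ := ε * (s - 1)⁻¹ with hδ
  have hA' := ENNReal.rpow_ne_top_of_nonneg (inv_nonneg.2 hs₁.le) hA
  have hterm : ∀ j : ℕ, a (k - j) ≤ A ^ (s - 1)⁻¹ * twoPow (k * δ) * twoPow (-(j * δ)) := by
    intro j
    have hexp : twoPow ((k - j : ℤ) * ε * (s - 1)⁻¹) = twoPow (k * δ) * twoPow (-(j * δ)) := by
      rw [← twoPow_add, hδ]; push_cast; ring_nf
    rw [mul_assoc, ← hexp, ← twoPow_rpow, ← ENNReal.mul_rpow_of_nonneg _ _ (inv_nonneg.2 hs₁.le),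
      ENNReal.le_rpow_inv_iff hs₁]
    exact ha _
  refine ne_top_of_le_ne_top ?_ (ENNReal.tsum_le_tsum hterm)
  rw [ENNReal.tsum_mul_left]
  exact ENNReal.mul_ne_top (ENNReal.mul_ne_top hA' (twoPow_ne_top _))
    (tsum_twoPow_ne_top (by positivity))

lemma le_mul_rpow_inv_of_rpow_le (hs : 1 < s)
    (ha : ∀ i : ℤ, a i ^ (s - 1) ≤ A * twoPow (i * ε)) (i : ℤ) :
    a i ≤ A ^ s⁻¹ * (twoPow (i * (ε / s)) * a i ^ s⁻¹) := by
  have hs₀ : 0 < s := by linarith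
  have hs₁ : 0 ≤ s - 1 := by linarith
  calc a i = (a i ^ (s - 1)) ^ s⁻¹ * a i ^ s⁻¹ := by
        rw [← ENNReal.mul_rpow_of_nonneg _ _ (inv_nonneg.2 hs₀.le)]
        nth_rewrite 3 [← ENNReal.rpow_one (a i)]
        rw [← ENNReal.rpow_add_of_nonneg _ _ hs₁ zero_le_one, sub_add_cancel,
          ENNReal.rpow_rpow_inv hs₀.ne']
    _ ≤ (A * twoPow (i * ε)) ^ s⁻¹ * a i ^ s⁻¹ := by gcongr; exact ha i
    _ = _ := by
        rw [ENNReal.mul_rpow_of_nonneg _ _ (inv_nonneg.2 hs₀.le), twoPow_rpow, mul_assoc,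
          div_eq_mul_inv, mul_assoc (i : ℝ)]

lemma twoPow_mul_rpow_tsum_le (hs : 1 < s)
    (ha : ∀ i : ℤ, a i ^ (s - 1) ≤ A * twoPow (i * ε)) (k : ℤ) :
    twoPow (-(k * ε)) * (∑' j : ℕ, a (k - j)) ^ s ≤
      A * (∑' j : ℕ, twoPow (-(j * (ε / s / 2)))) ^ s *
        ∑' j : ℕ, twoPow (-(j * (ε / s / 2 * s))) * a (k - j) := by
  have hs₀ : 0 < s := by linarith
  have hweight : twoPow (-(k * ε)) = twoPow (-(k * (ε / s))) ^ s := by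
    rw [twoPow_rpow]; congr 1; field_simp
  have hsum : twoPow (-(k * (ε / s))) * ∑' j : ℕ, a (k - j) ≤
      A ^ s⁻¹ * ∑' j : ℕ, twoPow (-(j * (ε / s))) * a (k - j) ^ s⁻¹ := by
    rw [← ENNReal.tsum_mul_left, ← ENNReal.tsum_mul_left]
    refine ENNReal.tsum_le_tsum fun j => ?_
    have hexp : twoPow (-(j * (ε / s))) =
        twoPow (-(k * (ε / s))) * twoPow ((k - j : ℤ) * (ε / s)) := by
      rw [← twoPow_add]; push_cast; ring_nf
    calc twoPow (-(k * (ε / s))) * a (k - j) ≤ twoPow (-(k * (ε / s))) *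
          (A ^ s⁻¹ * (twoPow ((k - j : ℤ) * (ε / s)) * a (k - j) ^ s⁻¹)) := by
          gcongr; exact le_mul_rpow_inv_of_rpow_le hs ha (k - j)
      _ = _ := by rw [hexp]; ring
  calc twoPow (-(k * ε)) * (∑' j : ℕ, a (k - j)) ^ s
      = (twoPow (-(k * (ε / s))) * ∑' j : ℕ, a (k - j)) ^ s := by
        rw [hweight, ENNReal.mul_rpow_of_nonneg _ _ hs₀.le]
    _ ≤ (A ^ s⁻¹ * ∑' j : ℕ, twoPow (-(j * (ε / s))) * a (k - j) ^ s⁻¹) ^ s := by gcongr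
    _ = A * (∑' j : ℕ, twoPow (-(j * (ε / s))) * a (k - j) ^ s⁻¹) ^ s := by
        rw [ENNReal.mul_rpow_of_nonneg _ _ hs₀.le, ENNReal.rpow_inv_rpow hs₀.ne']
    _ ≤ _ := by
        rw [mul_assoc]
        refine mul_le_mul_right ((rpow_tsum_twoPow_mul_le hs₀ _ _).trans_eq ?_) A
        simp only [ENNReal.rpow_inv_rpow hs₀.ne']

lemma exists_tsum_twoPow_mul_rpow_tsum_le (hε : 0 < ε) (hs : 1 < s) (hA : A ≠ ⊤) :
    ∃ D : ℝ≥0∞, D ≠ ⊤ ∧ ∀ a : ℤ → ℝ≥0∞, (∀ i : ℤ, a i ^ (s - 1) ≤ A * twoPow (i * ε)) →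
      ∑' k : ℤ, twoPow (-(k * ε)) * (∑' j : ℕ, a (k - j)) ^ s ≤ D * ∑' i, a i := by
  set S := (∑' j : ℕ, twoPow (-(j * (ε / s / 2)))) ^ s
  set w : ℕ → ℝ≥0∞ := fun j => twoPow (-(j * (ε / s / 2 * s)))
  have hS : S ≠ ⊤ := ENNReal.rpow_ne_top_of_nonneg (by linarith)
    (tsum_twoPow_ne_top (by positivity))
  have hw : ∑' j, w j ≠ ⊤ := tsum_twoPow_ne_top (by positivity)
  refine ⟨A * S * ∑' j, w j, by finiteness, fun a ha => ?_⟩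
  calc ∑' k : ℤ, twoPow (-(k * ε)) * (∑' j : ℕ, a (k - j)) ^ s
      ≤ ∑' k : ℤ, A * S * ∑' j : ℕ, w j * a (k - j) :=
        ENNReal.tsum_le_tsum (twoPow_mul_rpow_tsum_le hs ha)
    _ = A * S * ∑' j : ℕ, w j * ∑' k : ℤ, a (k - j) := by
        rw [ENNReal.tsum_mul_left, ENNReal.tsum_comm]
        simp only [ENNReal.tsum_mul_left]
    _ = A * S * ∑' j : ℕ, w j * ∑' i, a i := by
        congr 2 with j
        exact congrArg (w j * ·) ((Equiv.subRight (j : ℤ)).tsum_eq a)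
    _ = _ := by rw [ENNReal.tsum_mul_right, ← mul_assoc]

end Sequences

section BallDens

variable {X : Type*} [PseudoMetricSpace X] {x y : X}

lemma ball_subset_ball_zpow_sub_one {i j k : ℤ} (hi : k ≤ i) (hj : k ≤ j)
    (hy : y ∈ ball x ((2 : ℝ) ^ (-j))) :
    ball y ((2 : ℝ) ^ (-i)) ⊆ ball x ((2 : ℝ) ^ (-(k - 1))) := by
  have hmono : ∀ {l : ℤ}, k ≤ l → (2 : ℝ) ^ (-l) ≤ 2 ^ (-k) := fun h =>
    zpow_le_zpow_right₀ one_le_two (by lia)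
  have hdouble : (2 : ℝ) ^ (-(k - 1)) = 2 ^ (-k) + 2 ^ (-k) := by
    rw [← two_mul, ← zpow_one_add₀ two_ne_zero]; congr 1; ring
  rw [hdouble]
  exact ball_subset_ball' (add_le_add (hmono hi) ((mem_ball.1 hy).le.trans (hmono hj)))

variable [MeasurableSpace X] {γ σ : ℝ}

lemma ballDens_ne_top [ProperSpace X] {μ : Measure X} [IsLocallyFiniteMeasure μ] (k : ℤ) (x : X) :
    ballDens γ μ k x ≠ ⊤ :=
  ENNReal.mul_ne_top measure_ball_lt_top.ne (twoPow_ne_top _)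

lemma ballDens_restrict_of_subset [OpensMeasurableSpace X] (μ : Measure X) {k : ℤ} {s : Set X}
    (h : ball x ((2 : ℝ) ^ (-k)) ⊆ s) : ballDens γ (μ.restrict s) k x = ballDens γ μ k x := by
  rw [ballDens, ballDens, Measure.restrict_apply measurableSet_ball, inter_eq_left.2 h]

lemma ballDens_rpow_le_of_mem_ball (hσ : 0 ≤ σ) (μ : Measure X) {i k : ℤ} (hik : i ≤ k)
    (hy : y ∈ ball x ((2 : ℝ) ^ (-k))) :
    ballDens γ μ i y ^ σ ≤ twoPow (γ * σ) * ballDens γ μ (i - 1) x ^ σ := by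
  have hexp : twoPow (i * γ) = twoPow γ * twoPow (((i - 1 : ℤ) : ℝ) * γ) := by
    rw [← twoPow_add]; push_cast; ring_nf
  have hdens : ballDens γ μ i y ≤ twoPow γ * ballDens γ μ (i - 1) x := by
    rw [ballDens, ballDens, hexp, mul_left_comm]
    gcongr
    exact ball_subset_ball_zpow_sub_one le_rfl hik hy
  calc ballDens γ μ i y ^ σ ≤ (twoPow γ * ballDens γ μ (i - 1) x) ^ σ := by gcongr
    _ = _ := by rw [ENNReal.mul_rpow_of_nonneg _ _ hσ, twoPow_rpow]

lemma ballDens_rpow_le_pot_restrict [OpensMeasurableSpace X] (hγ : 0 ≤ γ) (hσ : 0 ≤ σ)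
    (μ : Measure X) {k : ℤ} (hy : y ∈ ball x ((2 : ℝ) ^ (-k))) :
    ballDens γ μ k x ^ σ ≤ twoPow (γ * σ) * (2 * twoPow (γ * σ) *
      pot γ σ (μ.restrict (ball x ((2 : ℝ) ^ (-k)))) y) := by
  rw [← ballDens_restrict_of_subset μ Subset.rfl]
  exact (ballDens_rpow_le_of_mem_ball hσ _ le_rfl (mem_ball_comm.1 hy)).trans
    (mul_le_mul_right (ballDens_rpow_le_pot hγ hσ _ _ y) _)

lemma ballDens_rpow_le_restrict_add [OpensMeasurableSpace X] (hσ : 0 ≤ σ) (μ : Measure X) {k : ℤ}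
    (hy : y ∈ ball x ((2 : ℝ) ^ (-k))) (i : ℤ) :
    ballDens γ μ i y ^ σ ≤ ballDens γ (μ.restrict (ball x ((2 : ℝ) ^ (-(k - 1))))) i y ^ σ +
      if i < k then twoPow (γ * σ) * ballDens γ μ (i - 1) x ^ σ else 0 := by
  split_ifs with h
  · exact le_add_left (ballDens_rpow_le_of_mem_ball hσ μ h.le hy)
  · rw [ballDens_restrict_of_subset μ (ball_subset_ball_zpow_sub_one (not_lt.1 h) le_rfl hy),
      add_zero]

lemma pot_le_pot_restrict_add_tsum [OpensMeasurableSpace X] (hγ : 0 ≤ γ) (hσ : 0 ≤ σ)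
    (μ : Measure X) {k : ℤ} (hy : y ∈ ball x ((2 : ℝ) ^ (-k))) :
    pot γ σ μ y ≤ 2 * twoPow (γ * σ) * twoPow (γ * σ) *
      (pot γ σ (μ.restrict (ball x ((2 : ℝ) ^ (-(k - 1))))) y +
        ∑' j : ℕ, ballDens γ μ (k - j) x ^ σ) := by
  set ν := μ.restrict (ball x ((2 : ℝ) ^ (-(k - 1))))
  set V := twoPow (γ * σ)
  set a : ℤ → ℝ≥0∞ := fun i => ballDens γ μ i x ^ σ
  have htail : ∑' i : ℤ, (if i < k then V * a (i - 1) else 0) ≤ V * ∑' j : ℕ, a (k - j) := by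
    rw [tsum_ite_lt_int, ENNReal.tsum_mul_left]
    refine mul_le_mul_right ?_ V
    calc ∑' j : ℕ, a (k - 1 - j - 1) = ∑' j : ℕ, a (k - (j + 2 : ℕ)) :=
          tsum_congr fun j => congrArg a (by push_cast; ring)
      _ ≤ ∑' j : ℕ, a (k - j) := ENNReal.tsum_comp_le_tsum_of_injective
          (add_left_injective 2) fun j : ℕ => a (k - j)
  calc pot γ σ μ y ≤ V * ∑' i : ℤ, ballDens γ μ i y ^ σ := pot_le_tsum_ballDens hγ hσ μ y
    _ ≤ V * ((∑' i : ℤ, ballDens γ ν i y ^ σ) +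
          ∑' i : ℤ, if i < k then V * a (i - 1) else 0) := by
        rw [← ENNReal.tsum_add]
        gcongr with i
        exact ballDens_rpow_le_restrict_add hσ μ hy i
    _ ≤ V * (2 * V * pot γ σ ν y + 2 * (V * ∑' j : ℕ, a (k - j))) := by
        gcongr
        · exact tsum_ballDens_le_pot hγ hσ ν y
        · exact htail.trans (le_mul_of_one_le_left' one_le_two)
    _ = _ := by ring

end BallDens

section Testing

variable {N : ℕ} {γ σ q : ℝ} {μ : Measure (Euc N)}

lemma volume_ball_zpow_le (k : ℤ) (x : Euc N) :
    volume (ball x ((2 : ℝ) ^ (-k))) ≤ (3 : ℝ≥0∞) ^ N * twoPow (-(k * N)) := by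
  refine (measure_mono (ball_subset_cellBlock_one k x)).trans_eq ?_
  rw [volume_cellBlock]; norm_num

lemma le_volume_ball_zpow (k : ℤ) (x : Euc N) :
    twoPow (-(N * N)) * twoPow (-(k * N)) ≤ volume (ball x ((2 : ℝ) ^ (-k))) := by
  have hsub := measure_mono (μ := volume) (cellBlock_zero_subset_ball (k + N) x)
  rw [volume_cellBlock_zero, add_sub_cancel_right] at hsub
  refine le_trans (le_of_eq ?_) hsub
  rw [← twoPow_add]; push_cast; ring_nf

-- On a ball `B` of radius `2 ^ (-k)` the potential of `μ` restricted to `B` is at least of order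
-- `ballDens ^ σ`, so the testing inequality reads `ballDens ^ (σ q) |B| ≲ μ B`.
lemma BallTesting.exists_ballDens_rpow_le [IsLocallyFiniteMeasure μ] (hγ : 0 ≤ γ) (hσ : 0 < σ)
    (hq : 0 < q) (hs : 1 < σ * q) (h : BallTesting γ σ q μ) : ∃ A : ℝ≥0∞, A ≠ ⊤ ∧
      ∀ k x, ballDens γ μ k x ^ (σ * q - 1) ≤ A * twoPow (k * (N - γ)) := by
  obtain ⟨C, hC, hμ⟩ := h
  set P := (twoPow (γ * σ) * (2 * twoPow (γ * σ))) ^ q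
  have hV := twoPow_ne_top (γ * σ)
  have hP : P ≠ ⊤ := ENNReal.rpow_ne_top_of_nonneg hq.le (by finiteness)
  have hM := twoPow_ne_top (N * N)
  refine ⟨P * C * twoPow (N * N), by finiteness, fun k x =>
    rpow_sub_one_le_of_rpow_le_mul (ballDens_ne_top k x) hs ?_⟩
  set B := ball x ((2 : ℝ) ^ (-k))
  set b := ballDens γ μ k x with hb
  have hpt : ∀ y ∈ B, b ^ (σ * q) ≤ P * pot γ σ (μ.restrict B) y ^ q := fun y hy => by
    rw [ENNReal.rpow_mul, ← ENNReal.mul_rpow_of_nonneg _ _ hq.le, mul_assoc]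
    exact ENNReal.rpow_le_rpow (ballDens_rpow_le_pot_restrict hγ hσ.le μ hy) hq.le
  have hint : b ^ (σ * q) * volume B ≤ P * (C * μ B) := by
    calc b ^ (σ * q) * volume B = ∫⁻ _ in B, b ^ (σ * q) := (setLIntegral_const _ _).symm
      _ ≤ ∫⁻ y in B, P * pot γ σ (μ.restrict B) y ^ q := setLIntegral_mono' measurableSet_ball hpt
      _ ≤ ∫⁻ y, P * pot γ σ (μ.restrict B) y ^ q := setLIntegral_le_lintegral _ _
      _ = P * ∫⁻ y, pot γ σ (μ.restrict B) y ^ q := lintegral_const_mul' _ _ hP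
      _ ≤ _ := mul_le_mul_right (hμ x _ (by positivity)) _
  have hone : twoPow (-(N * N)) * twoPow (-(k * N)) * (twoPow (N * N) * twoPow (k * N)) = 1 := by
    simp only [← twoPow_add]; ring_nf; exact twoPow_zero
  have hexp : twoPow (k * N) = twoPow (k * (N - γ)) * twoPow (k * γ) := by
    rw [← twoPow_add]; ring_nf
  calc b ^ (σ * q) = b ^ (σ * q) * (twoPow (-(N * N)) * twoPow (-(k * N))) *
        (twoPow (N * N) * twoPow (k * N)) := by rw [mul_assoc, hone, mul_one]
    _ ≤ P * (C * μ B) * (twoPow (N * N) * twoPow (k * N)) := by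
        gcongr ?_ * _
        exact (mul_le_mul_right (le_volume_ball_zpow k x) _).trans hint
    _ = P * C * twoPow (N * N) * twoPow (k * (N - γ)) * b := by rw [hexp, hb, ballDens]; ring

lemma BallTesting.exists_ballDens_rpow_rpow_le [IsLocallyFiniteMeasure μ] (hγ : 0 ≤ γ) (hσ : 0 < σ)
    (hq : 0 < q) (hs : 1 < σ * q) (h : BallTesting γ σ q μ) : ∃ A : ℝ≥0∞, A ≠ ⊤ ∧
      ∀ x k, (ballDens γ μ k x ^ σ) ^ (σ * q - 1) ≤ A * twoPow (k * ((N - γ) * σ)) := by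
  obtain ⟨A, hA, hμ⟩ := h.exists_ballDens_rpow_le hγ hσ hq hs
  refine ⟨A ^ σ, ENNReal.rpow_ne_top_of_nonneg hσ.le hA, fun x k => ?_⟩
  rw [← mul_assoc, ← twoPow_rpow, ← ENNReal.mul_rpow_of_nonneg _ _ hσ.le, ← ENNReal.rpow_mul,
    mul_comm σ, ENNReal.rpow_mul]
  exact ENNReal.rpow_le_rpow (hμ k x) hσ.le

lemma BallTesting.exists_setLIntegral_ball_pot_le [SFinite μ] (hγ : 0 ≤ γ) (hσ : 0 ≤ σ) (hq : 0 < q)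
    (h : BallTesting γ σ q μ) : ∃ A : ℝ≥0∞, A ≠ ⊤ ∧ ∀ (k : ℤ) (x : Euc N),
      ∫⁻ y in ball x ((2 : ℝ) ^ (-k)), pot γ σ μ y ^ q ≤
        A * (μ (ball x ((2 : ℝ) ^ (-(k - 1)))) +
          twoPow (-(k * N)) * (∑' j : ℕ, ballDens γ μ (k - j) x ^ σ) ^ q) := by
  obtain ⟨C, hC, hμ⟩ := h
  set P := (2 * twoPow (γ * σ) * twoPow (γ * σ)) ^ q * twoPow q
  have hP : P ≠ ⊤ := by
    have hV := twoPow_ne_top (γ * σ)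
    exact ENNReal.mul_ne_top (ENNReal.rpow_ne_top_of_nonneg hq.le (by finiteness)) (twoPow_ne_top q)
  refine ⟨P * (C + 3 ^ N), by finiteness, fun k x => ?_⟩
  set B := ball x ((2 : ℝ) ^ (-k))
  set B' := ball x ((2 : ℝ) ^ (-(k - 1)))
  set T := ∑' j : ℕ, ballDens γ μ (k - j) x ^ σ
  have hpt : ∀ y ∈ B, pot γ σ μ y ^ q ≤ P * (pot γ σ (μ.restrict B') y ^ q + T ^ q) :=
    fun y hy => by
      refine (ENNReal.rpow_le_rpow (pot_le_pot_restrict_add_tsum hγ hσ μ hy) hq.le).trans ?_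
      rw [ENNReal.mul_rpow_of_nonneg _ _ hq.le, mul_assoc (_ ^ _)]
      exact mul_le_mul_right (add_rpow_le_twoPow_mul _ _ hq.le) _
  calc ∫⁻ y in B, pot γ σ μ y ^ q
      ≤ ∫⁻ y in B, P * (pot γ σ (μ.restrict B') y ^ q + T ^ q) :=
        setLIntegral_mono' measurableSet_ball hpt
    _ = P * ((∫⁻ y in B, pot γ σ (μ.restrict B') y ^ q) + T ^ q * volume B) := by
        rw [lintegral_const_mul' _ _ hP, lintegral_add_left ((measurable_pot γ σ _).pow_const q),
          setLIntegral_const]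
    _ ≤ P * (C * μ B' + T ^ q * (3 ^ N * twoPow (-(k * N)))) := by
        gcongr
        · exact (setLIntegral_le_lintegral _ _).trans (hμ x _ (by positivity))
        · exact volume_ball_zpow_le k x
    _ ≤ P * ((C + 3 ^ N) * μ B' + T ^ q * ((C + 3 ^ N) * twoPow (-(k * N)))) := by
        gcongr
        · exact le_self_add
        · exact le_add_self
    _ = _ := by ring

lemma BallTesting.exists_ballDens_withDensity_rpow_le [SFinite μ] (hγ : 0 ≤ γ) (hσ : 0 ≤ σ)
    (hq : 0 < q) (h : BallTesting γ σ q μ) : ∃ A : ℝ≥0∞, A ≠ ⊤ ∧ ∀ (k : ℤ) (x : Euc N),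
      ballDens γ (volume.withDensity fun y => pot γ σ μ y ^ q) k x ^ σ ≤
        A * (twoPow (γ * σ) * ballDens γ μ (k - 1) x ^ σ + twoPow (-(k * ((N - γ) * σ))) *
          (∑' j : ℕ, ballDens γ μ (k - j) x ^ σ) ^ (σ * q)) := by
  obtain ⟨A, hA, hint⟩ := h.exists_setLIntegral_ball_pot_le hγ hσ hq
  refine ⟨A ^ σ * twoPow σ, ENNReal.mul_ne_top (ENNReal.rpow_ne_top_of_nonneg hσ hA)
    (twoPow_ne_top σ), fun k x => ?_⟩
  set T := ∑' j : ℕ, ballDens γ μ (k - j) x ^ σ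
  have hμ_exp : twoPow (k * γ) = twoPow γ * twoPow (((k - 1 : ℤ) : ℝ) * γ) := by
    rw [← twoPow_add]; push_cast; ring_nf
  have hT_exp : twoPow (-(k * (N - γ))) = twoPow (-(k * N)) * twoPow (k * γ) := by
    rw [← twoPow_add]; ring_nf
  have hdens : ballDens γ (volume.withDensity fun y => pot γ σ μ y ^ q) k x ≤
      A * (twoPow γ * ballDens γ μ (k - 1) x + twoPow (-(k * (N - γ))) * T ^ q) := by
    rw [ballDens, withDensity_apply _ measurableSet_ball, hT_exp, ballDens]
    refine (mul_le_mul_left (hint k x) _).trans_eq ?_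
    rw [mul_assoc, add_mul, mul_left_comm (twoPow γ), ← hμ_exp]
    ring
  have hT : (T ^ q) ^ σ = T ^ (σ * q) := by rw [← ENNReal.rpow_mul, mul_comm]
  calc _ ≤ (A * (twoPow γ * ballDens γ μ (k - 1) x + twoPow (-(k * (N - γ))) * T ^ q)) ^ σ := by
        gcongr
    _ ≤ A ^ σ * (twoPow σ * ((twoPow γ * ballDens γ μ (k - 1) x) ^ σ +
          (twoPow (-(k * (N - γ))) * T ^ q) ^ σ)) := by
        rw [ENNReal.mul_rpow_of_nonneg _ _ hσ]
        gcongr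
        exact add_rpow_le_twoPow_mul _ _ hσ
    _ = _ := by
        rw [ENNReal.mul_rpow_of_nonneg _ _ hσ, ENNReal.mul_rpow_of_nonneg _ _ hσ, twoPow_rpow,
          twoPow_rpow, hT, neg_mul, mul_assoc (k : ℝ), mul_assoc (A ^ σ)]

lemma BallTesting.exists_pot_withDensity_le [IsLocallyFiniteMeasure μ] (hγ : 0 ≤ γ) (hγN : γ < N)
    (hσ : 0 < σ) (hq : 0 < q) (hs : 1 < σ * q) (h : BallTesting γ σ q μ) :
    ∃ C : ℝ≥0∞, C ≠ ⊤ ∧ ∀ x : Euc N,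
      pot γ σ (volume.withDensity fun y => pot γ σ μ y ^ q) x ≤ C * pot γ σ μ x := by
  obtain ⟨A, hA, hgrowth⟩ := h.exists_ballDens_rpow_rpow_le hγ hσ hq hs
  obtain ⟨A', hA', hdens⟩ := h.exists_ballDens_withDensity_rpow_le hγ hσ.le hq
  obtain ⟨D, hD, hconv⟩ := exists_tsum_twoPow_mul_rpow_tsum_le
    (show 0 < (N - γ) * σ from mul_pos (by linarith) hσ) hs hA
  set V := twoPow (γ * σ)
  have hV : V ≠ ⊤ := twoPow_ne_top _
  refine ⟨V * (A' * (V + D)) * (2 * V), by finiteness, fun x => ?_⟩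
  set ω := volume.withDensity fun y => pot γ σ μ y ^ q
  set a : ℤ → ℝ≥0∞ := fun i => ballDens γ μ i x ^ σ
  have hshift : ∑' k : ℤ, a (k - 1) = ∑' k, a k := (Equiv.subRight (1 : ℤ)).tsum_eq a
  calc pot γ σ ω x ≤ V * ∑' k : ℤ, ballDens γ ω k x ^ σ := pot_le_tsum_ballDens hγ hσ.le ω x
    _ ≤ V * ∑' k : ℤ, A' * (V * a (k - 1) +
          twoPow (-(k * ((N - γ) * σ))) * (∑' j : ℕ, a (k - j)) ^ (σ * q)) := by
        gcongr with k; exact hdens k x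
    _ ≤ V * (A' * (V * ∑' k, a k + D * ∑' k, a k)) := by
        rw [ENNReal.tsum_mul_left, ENNReal.tsum_add, ENNReal.tsum_mul_left, hshift]
        gcongr
        exact hconv a (hgrowth x)
    _ = V * (A' * (V + D)) * ∑' k, a k := by ring
    _ ≤ V * (A' * (V + D)) * (2 * V * pot γ σ μ x) := by
        gcongr; exact tsum_ballDens_le_pot hγ hσ.le μ x
    _ = _ := by ring

lemma BallTesting.ae_pot_lt_top [IsLocallyFiniteMeasure μ] (hγ : 0 ≤ γ) (hγN : γ < N)
    (hσ : 0 < σ) (hq : 0 < q) (hs : 1 < σ * q) (h : BallTesting γ σ q μ) :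
    ∀ᵐ x : Euc N, pot γ σ μ x < ⊤ := by
  obtain ⟨A, hA, hgrowth⟩ := h.exists_ballDens_rpow_rpow_le hγ hσ hq hs
  obtain ⟨A', hA', hint⟩ := h.exists_setLIntegral_ball_pot_le hγ hσ.le hq
  have hball : ∀ m : ℕ, ∀ᵐ y, y ∈ ball (0 : Euc N) ((2 : ℝ) ^ (-(-(m : ℤ)))) →
      pot γ σ μ y < ⊤ := by
    intro m
    rw [← ae_restrict_iff' measurableSet_ball]
    have htail : ∑' j : ℕ, ballDens γ μ (-(m : ℤ) - j) 0 ^ σ ≠ ⊤ :=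
      tsum_ne_top_of_rpow_le (a := fun i => ballDens γ μ i 0 ^ σ)
        (mul_pos (sub_pos.2 hγN) hσ) hs hA (hgrowth 0) _
    have hfin : ∫⁻ y in ball (0 : Euc N) ((2 : ℝ) ^ (-(-(m : ℤ)))), pot γ σ μ y ^ q ≠ ⊤ :=
      ne_top_of_le_ne_top (ENNReal.mul_ne_top hA' (ENNReal.add_ne_top.2 ⟨measure_ball_lt_top.ne,
        ENNReal.mul_ne_top (twoPow_ne_top _) (ENNReal.rpow_ne_top_of_nonneg hq.le htail)⟩))
        (hint _ 0)
    filter_upwards [ae_lt_top ((measurable_pot γ σ μ).pow_const q) hfin] with y hy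
    exact (ENNReal.rpow_lt_top_iff_of_pos hq).1 hy
  filter_upwards [ae_all_iff.2 hball] with y hy
  obtain ⟨m, hm⟩ := pow_unbounded_of_one_lt (dist y 0) (one_lt_two (α := ℝ))
  exact hy m (by rw [mem_ball, neg_neg, zpow_natCast]; exact hm)

lemma BallTesting.potPointwiseBound [IsLocallyFiniteMeasure μ] (hγ : 0 ≤ γ) (hγN : γ < N)
    (hσ : 0 < σ) (hq : 0 < q) (hs : 1 < σ * q) (h : BallTesting γ σ q μ) :
    PotPointwiseBound γ σ q μ := by
  obtain ⟨C, hC, hμ⟩ := h.exists_pot_withDensity_le hγ hγN hσ hq hs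
  exact ⟨C, hC, (h.ae_pot_lt_top hγ hγN hσ hq hs).mono fun x hx => ⟨hμ x, hx⟩⟩

end Testing

/-! ### Exponents and constants of the theorem -/

section Constants

lemma exists_pos_ofReal_iff {p : ℝ≥0∞ → Prop} (hp : Monotone p) :
    (∃ C > 0, p (ENNReal.ofReal C)) ↔ ∃ C, C ≠ ⊤ ∧ p C := by
  refine ⟨fun ⟨C, _, hC⟩ => ⟨_, ENNReal.ofReal_ne_top, hC⟩, fun ⟨C, hC, hpC⟩ =>
    ⟨C.toReal + 1, by positivity, hp ?_ hpC⟩⟩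
  rw [ENNReal.le_ofReal_iff_toReal_le hC (by positivity)]
  linarith

variable {N : ℕ} {β γ σ q t : ℝ} {μ : Measure (Euc N)}

lemma capBounded_iff : CapBounded β t μ ↔ ∃ C > 0, ∀ K : Set (Euc N), IsCompact K →
    μ K ≤ ENNReal.ofReal C * rieszCap N β t K := by
  refine (exists_pos_ofReal_iff ?_).symm
  exact fun _ _ h H K hK => (H K hK).trans (mul_le_mul_left h _)

lemma capBounded_withDensity_iff {f : Euc N → ℝ≥0∞} :
    CapBounded β t (volume.withDensity f) ↔ ∃ C > 0, ∀ K : Set (Euc N), IsCompact K →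
      ∫⁻ y in K, f y ≤ ENNReal.ofReal C * rieszCap N β t K := by
  rw [capBounded_iff]
  refine exists_congr fun C => and_congr_right fun _ => forall₂_congr fun K hK => ?_
  rw [withDensity_apply _ hK.measurableSet]

lemma ballTesting_iff : BallTesting γ σ q μ ↔ ∃ C > 0, ∀ (x : Euc N) (r : ℝ), 0 < r →
    ∫⁻ y, pot γ σ (μ.restrict (ball x r)) y ^ q ≤ ENNReal.ofReal C * μ (ball x r) := by
  refine (exists_pos_ofReal_iff ?_).symm
  exact fun _ _ h H x r hr => (H x r hr).trans (mul_le_mul_left h _)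

lemma potPointwiseBound_iff : PotPointwiseBound γ σ q μ ↔
    ∃ C > 0, ∀ᵐ x ∂(volume : Measure (Euc N)),
      pot γ σ (volume.withDensity fun y => pot γ σ μ y ^ q) x ≤ ENNReal.ofReal C * pot γ σ μ x ∧
        pot γ σ μ x < ⊤ := by
  refine (exists_pos_ofReal_iff ?_).symm
  exact fun _ _ h H => H.mono fun _ hx => ⟨hx.1.trans (mul_le_mul_left h _), hx.2⟩

end Constants

lemma holderConjugate_div_sub_one {p q : ℝ} (hp : 1 < p) (hq : p - 1 < q) :
    (1 / (p - 1) * q).HolderConjugate (q / (q - p + 1)) := by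
  have hp₁ : 0 < p - 1 := by linarith
  have hq₀ : 0 < q := by linarith
  have : q - p + 1 ≠ 0 := by linarith
  rw [one_div_mul_eq_div, Real.holderConjugate_iff]
  refine ⟨by rwa [one_lt_div hp₁], ?_⟩
  field_simp
  ring

/-- (Theorem on Wolff potential / Riesz capacity equivalences in `ℝ^N`.) -/
theorem stmt3 (N : ℕ) (α p q : ℝ) (hα : 0 < α) (hp : 1 < p) (hpN : p < (N : ℝ) / α)
    (hq : p - 1 < q) (μ : Measure (Euc N)) [IsLocallyFiniteMeasure μ] :
    List.TFAE [
      -- (a)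
      (∃ C1 > 0, ∀ K : Set (Euc N), IsCompact K →
        μ K ≤ ENNReal.ofReal C1 * rieszCap N (α * p) (q / (q - p + 1)) K),
      -- (b)
      (∃ C2 > 0, ∀ K : Set (Euc N), IsCompact K →
        (∫⁻ y in K, (wolff α p ⊤ μ y) ^ q) ≤
          ENNReal.ofReal C2 * rieszCap N (α * p) (q / (q - p + 1)) K),
      -- (c)
      (∃ C3 > 0, ∀ (x : Euc N) (t : ℝ), 0 < t →
        (∫⁻ y, (wolff α p ⊤ (μ.restrict (ball x t)) y) ^ q) ≤
          ENNReal.ofReal C3 * μ (ball x t)),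
      -- (d)
      (∃ C4 > 0, ∀ᵐ x ∂(volume : Measure (Euc N)),
        wolff α p ⊤ (volume.withDensity fun y => (wolff α p ⊤ μ y) ^ q) x ≤
          ENNReal.ofReal C4 * wolff α p ⊤ μ x ∧ wolff α p ⊤ μ x < ⊤) ] := by
  have hβ : α * p < N := by rwa [lt_div_iff₀ hα, mul_comm] at hpN
  have hβ₀ : 0 < α * p := by positivity
  have hq₀ : 0 < q := by linarith
  have hσ : 0 < 1 / (p - 1) := by
    have : 0 < p - 1 := by linarith
    positivity
  have hs := holderConjugate_div_sub_one hp hq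
  simp only [wolff_top_eq_pot]
  rw [← capBounded_iff, ← capBounded_withDensity_iff, ← ballTesting_iff, ← potPointwiseBound_iff]
  tfae_have 1 → 3 := CapBounded.ballTesting hβ₀ hβ.le hσ hq₀ hs
  tfae_have 3 → 4 := BallTesting.potPointwiseBound (by linarith) (by linarith) hσ hq₀ hs.lt
  tfae_have 4 → 2 := PotPointwiseBound.capBounded hβ₀ hβ.le hσ hq₀ hs
  tfae_have 2 → 1 := CapBounded.of_pot hβ₀ hβ.le hσ hq₀ hs
  tfae_finish
end
end

section
/- Let 0<α, 1<p<N/α and q>(p−1)N/(N−αp). Let μ be a nonnegative Radon measure on ℝ^N and let μ_n be the measure with density φ_n*μ, where {φ_n} is a sequence of mollifiers. If there is C1>0 such that μ(K) ≤ C1·Cap_{I_{αp}, q/(q−p+1)}(K) for every compact K⊂ℝ^N, then there is a constant C=C(N,α,p,q)>0 such that μ_n(K) ≤ C·C1·Cap_{I_{αp}, q/(q−p+1)}(K) for every compact K⊂ℝ^N and every n∈ℕ. -/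
open MeasureTheory Metric Set Filter Bornology
open scoped ENNReal NNReal Topology RealInnerProductSpace

noncomputable section

/-! A mollified measure is the convolution of a probability measure with `μ`, that is, an average of
translates of `μ`. Since the Riesz capacity is invariant under translations, every translate of `μ`
satisfies the capacity estimate with the constant of `μ`, and hence so does their average. -/

section Convolution

variable {G : Type*} [MeasurableSpace G]

theorem conv_apply_le_of_forall_preimage_le [AddMonoid G] [MeasurableAdd₂ G] {κ μ : Measure G}
    [SFinite μ] {s : Set G} (hs : MeasurableSet s) {c : ℝ≥0∞}
    (h : ∀ z, μ ((z + ·) ⁻¹' s) ≤ c) : (κ ∗ μ) s ≤ c * κ univ :=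
  calc (κ ∗ μ) s = ∫⁻ z, μ ((z + ·) ⁻¹' s) ∂κ := by
        rw [Measure.conv, Measure.map_apply measurable_add hs,
          Measure.prod_apply (measurable_add hs)]
        rfl
    _ ≤ ∫⁻ _, c ∂κ := lintegral_mono h
    _ = c * κ univ := lintegral_const c

theorem withDensity_conv [AddGroup G] [MeasurableAdd₂ G] [MeasurableNeg G] {ν μ : Measure G}
    [SFinite ν] [SFinite μ] [ν.IsAddRightInvariant] {k : G → ℝ≥0∞} (hk : Measurable k) :
    ν.withDensity k ∗ μ = ν.withDensity fun x ↦ ∫⁻ y, k (x - y) ∂μ := by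
  have hsub : Measurable fun p : G × G ↦ k (p.1 - p.2) := by fun_prop
  refine Measure.ext_of_lintegral _ fun f hf ↦ ?_
  calc ∫⁻ x, f x ∂(ν.withDensity k ∗ μ)
      = ∫⁻ x, k x * ∫⁻ y, f (x + y) ∂μ ∂ν := by
        rw [Measure.lintegral_conv hf, lintegral_withDensity_eq_lintegral_mul _ hk
          (Measurable.lintegral_prod_right' (f := fun p : G × G ↦ f (p.1 + p.2)) (by fun_prop))]
        rfl
    _ = ∫⁻ x, ∫⁻ y, k x * f (x + y) ∂μ ∂ν :=
        lintegral_congr fun x ↦ (lintegral_const_mul _ (by fun_prop)).symm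
    _ = ∫⁻ y, ∫⁻ x, k x * f (x + y) ∂ν ∂μ := lintegral_lintegral_swap (by fun_prop)
    _ = ∫⁻ y, ∫⁻ x, k (x - y) * f x ∂ν ∂μ := by
        refine lintegral_congr fun y ↦ ?_
        rw [← lintegral_add_right_eq_self (fun x ↦ k (x - y) * f x) y]
        simp only [add_sub_cancel_right]
    _ = ∫⁻ x, ∫⁻ y, k (x - y) * f x ∂μ ∂ν := lintegral_lintegral_swap (by fun_prop)
    _ = ∫⁻ x, (∫⁻ y, k (x - y) ∂μ) * f x ∂ν :=
        lintegral_congr fun x ↦ lintegral_mul_const _ (by fun_prop)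
    _ = ∫⁻ x, f x ∂ν.withDensity fun x ↦ ∫⁻ y, k (x - y) ∂μ :=
        (lintegral_withDensity_eq_lintegral_mul _ hsub.lintegral_prod_right' hf).symm

end Convolution

section IsometryInvariance

theorem map_withDensity_comp {X Y : Type*} [MeasurableSpace X] [MeasurableSpace Y]
    {μ : Measure X} {ν : Measure Y} {f : X → Y} (hf : MeasurePreserving f μ ν)
    {g : Y → ℝ≥0∞} (hg : Measurable g) :
    (μ.withDensity (g ∘ f)).map f = ν.withDensity g := by
  ext s hs
  rw [Measure.map_apply hf.measurable hs, withDensity_apply _ (hf.measurable hs),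
    withDensity_apply _ hs]
  exact hf.setLIntegral_comp_preimage hs hg

theorem measurePreserving_isometryEquiv {E : Type*} [NormedAddCommGroup E] [NormedSpace ℝ E]
    [FiniteDimensional ℝ E] [MeasurableSpace E] [BorelSpace E] (ν : Measure E)
    [ν.IsAddHaarMeasure] (e : E ≃ᵢ E) : MeasurePreserving e ν ν := by
  rw [Measure.isAddLeftInvariant_eq_smul ν (μH[Module.finrank ℝ E])]
  exact (e.measurePreserving_hausdorffMeasure _).smul_measure _

variable {N : ℕ}

theorem rieszPot_map_isometryEquiv (β : ℝ) (R : ℝ≥0∞) (μ : Measure (Euc N))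
    (e : Euc N ≃ᵢ Euc N) (x : Euc N) : rieszPot β R (μ.map e) (e x) = rieszPot β R μ x := by
  simp only [rieszPot, Measure.map_apply e.continuous.measurable measurableSet_ball,
    e.isometry.preimage_ball]

theorem rieszCap_preimage_isometryEquiv_le (β s : ℝ) (e : Euc N ≃ᵢ Euc N) (O : Set (Euc N)) :
    rieszCap N β s (e ⁻¹' O) ≤ rieszCap N β s O := by
  have he : MeasurePreserving e := measurePreserving_isometryEquiv volume e
  refine le_iInf₂ fun g hg ↦ le_iInf fun hO ↦ ?_
  have hpot : ∀ x ∈ e ⁻¹' O, 1 ≤ rieszPot β ⊤ (volume.withDensity (g ∘ e)) x := fun x hx ↦ by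
    rw [← rieszPot_map_isometryEquiv, map_withDensity_comp he hg]
    exact hO (e x) hx
  calc rieszCap N β s (e ⁻¹' O)
      ≤ ∫⁻ x, (g ∘ e) x ^ s := iInf₂_le_of_le _ (hg.comp he.measurable) (iInf_le _ hpot)
    _ = ∫⁻ x, g x ^ s := he.lintegral_comp (hg.pow_const s)

theorem rieszCap_preimage_isometryEquiv (β s : ℝ) (e : Euc N ≃ᵢ Euc N) (O : Set (Euc N)) :
    rieszCap N β s (e ⁻¹' O) = rieszCap N β s O := by
  refine (rieszCap_preimage_isometryEquiv_le β s e O).antisymm ?_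
  simpa only [← preimage_comp, e.self_comp_symm, preimage_id] using
    rieszCap_preimage_isometryEquiv_le β s e.symm (e ⁻¹' O)

end IsometryInvariance

section Mollifier

variable {N : ℕ} {φ : Euc N → ℝ}

/-- The rescaling `φ_t(x) = t^N φ(t x)`, whose values at `t = n ∈ ℕ` form the sequence of mollifiers
attached to `φ`. -/
def rescale (φ : Euc N → ℝ) (t : ℝ) (x : Euc N) : ℝ :=
  t ^ N * φ (t • x)

theorem integral_rescale (φ : Euc N → ℝ) {t : ℝ} (ht : 0 < t) :
    ∫ x, rescale φ t x = ∫ x, φ x := by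
  simp only [rescale, integral_const_mul, Measure.integral_comp_smul, finrank_euclideanSpace_fin,
    smul_eq_mul, abs_of_pos (inv_pos.2 (pow_pos ht N))]
  exact mul_inv_cancel_left₀ (pow_pos ht N).ne' _

namespace IsMollifier

theorem hasCompactSupport (hφ : IsMollifier φ) : HasCompactSupport φ :=
  .of_support_subset_isCompact (isCompact_closedBall 0 1)
    ((subset_tsupport φ).trans (hφ.2.2.1.trans ball_subset_closedBall))

theorem rescale (hφ : IsMollifier φ) {t : ℝ} (ht : 1 ≤ t) : IsMollifier (rescale φ t) := by
  obtain ⟨hsmooth, hnonneg, hsupp, hint⟩ := hφ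
  have ht0 : 0 < t := one_pos.trans_le ht
  refine ⟨?_, fun x ↦ mul_nonneg (pow_nonneg ht0.le N) (hnonneg _), fun x hx ↦ ?_,
    (integral_rescale φ ht0).trans hint⟩
  · exact contDiff_const.mul (hsmooth.comp (contDiff_const_smul t))
  · have htx : t • x ∈ tsupport φ :=
      tsupport_comp_subset_preimage φ (continuous_const_smul t)
        (closure_mono (Function.support_mul_subset_right _ _) hx)
    have hnorm : t * ‖x‖ < 1 := by
      simpa only [mem_ball_zero_iff, norm_smul, Real.norm_of_nonneg ht0.le] using hsupp htx
    exact mem_ball_zero_iff.2 ((le_mul_of_one_le_left (norm_nonneg x) ht).trans_lt hnorm)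

theorem isProbabilityMeasure_withDensity (hφ : IsMollifier φ) :
    IsProbabilityMeasure (volume.withDensity fun x ↦ ENNReal.ofReal (φ x)) where
  measure_univ := by
    have hint : Integrable φ :=
      hφ.1.continuous.integrable_of_hasCompactSupport hφ.hasCompactSupport
    rw [withDensity_apply _ .univ, setLIntegral_univ,
      ← ofReal_integral_eq_lintegral_ofReal hint (ae_of_all _ hφ.2.1), hφ.2.2.2, ENNReal.ofReal_one]

theorem withDensity_ofReal_conv (hφ : IsMollifier φ) (μ : Measure (Euc N))
    [IsLocallyFiniteMeasure μ] :
    (volume.withDensity fun x ↦ ENNReal.ofReal (φ x)) ∗ μ =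
      volume.withDensity fun x ↦ ENNReal.ofReal (∫ y, φ (x - y) ∂μ) := by
  have hcont : Continuous φ := hφ.1.continuous
  rw [withDensity_conv (by fun_prop)]
  congr 1 with x
  have hint : Integrable (fun y ↦ φ (x - y)) μ :=
    Continuous.integrable_of_hasCompactSupport (by fun_prop)
      (hφ.hasCompactSupport.comp_homeomorph (Homeomorph.subLeft x))
  exact (ofReal_integral_eq_lintegral_ofReal hint (ae_of_all _ fun y ↦ hφ.2.1 _)).symm

end IsMollifier

theorem mollified_eq_conv (hφ : IsMollifier φ) {n : ℕ} (hn : 0 < n) (μ : Measure (Euc N))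
    [IsLocallyFiniteMeasure μ] :
    mollified φ n μ = (volume.withDensity fun x ↦ ENNReal.ofReal (rescale φ n x)) ∗ μ :=
  ((hφ.rescale (Nat.one_le_cast.2 hn)).withDensity_ofReal_conv μ).symm

end Mollifier

theorem stmt5_general {N : ℕ} {β s : ℝ} {μ : Measure (Euc N)} [IsLocallyFiniteMeasure μ]
    {φ : Euc N → ℝ} (hφ : IsMollifier φ) {C : ℝ≥0∞}
    (hμ : ∀ K : Set (Euc N), IsCompact K → μ K ≤ C * rieszCap N β s K) {n : ℕ} (hn : 0 < n)
    {K : Set (Euc N)} (hK : IsCompact K) : mollified φ n μ K ≤ C * rieszCap N β s K := by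
  have := (hφ.rescale (Nat.one_le_cast.2 hn)).isProbabilityMeasure_withDensity
  have htranslate (z : Euc N) : μ ((z + ·) ⁻¹' K) ≤ C * rieszCap N β s K :=
    calc μ ((z + ·) ⁻¹' K) ≤ C * rieszCap N β s ((z + ·) ⁻¹' K) :=
          hμ _ ((Homeomorph.addLeft z).isCompact_preimage.2 hK)
      _ = C * rieszCap N β s K :=
          congrArg (C * ·) (rieszCap_preimage_isometryEquiv β s (IsometryEquiv.addLeft z) K)
  rw [mollified_eq_conv hφ hn]
  exact (conv_apply_le_of_forall_preimage_le hK.measurableSet htranslate).trans_eq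
    (by rw [measure_univ, mul_one])

/-- Stability of the Riesz-capacity Lipschitz estimate under
mollification. -/
theorem stmt5 (N : ℕ) (α p q : ℝ) (hα : 0 < α) (hp : 1 < p) (hpN : p < (N : ℝ) / α)
    (hq : (p - 1) * (N : ℝ) / ((N : ℝ) - α * p) < q) :
    ∃ C > 0, ∀ μ : Measure (Euc N), IsLocallyFiniteMeasure μ →
      ∀ φ : Euc N → ℝ, IsMollifier φ →
      ∀ C1 : ℝ, 0 < C1 →
      (∀ K : Set (Euc N), IsCompact K →
        μ K ≤ ENNReal.ofReal C1 * rieszCap N (α * p) (q / (q - p + 1)) K) →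
      ∀ n : ℕ, 0 < n → ∀ K : Set (Euc N), IsCompact K →
        mollified φ n μ K ≤ ENNReal.ofReal (C * C1) * rieszCap N (α * p) (q / (q - p + 1)) K := by
  refine ⟨1, one_pos, fun μ _ φ hφ C1 _ hμ n hn K hK ↦ ?_⟩
  simpa only [one_mul] using stmt5_general hφ hμ hn hK
end
end
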